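/- Let n ∈ ℕ, n ≥ 2, and c ∈ ℝ. The operator ((−Δ)³ + c|x|⁻⁶) with domain C₀^∞(ℝⁿ∖{0}) is essentially self-adjoint in L²(ℝⁿ; dⁿx) if and only if c ≥ (64/27)·(7112 + 504n − 126n² + (236 + 12n − 3n²)·√(964 + 60n − 15n²)) when 2 ≤ n ≤ 9, and c ≥ −(n+8)(n+4)n(n−4)(n−8)(n−12)/64 when n ≥ 10. -/

import Mathlib

open MeasureTheory

noncomputable section

/-- A densely defined operator `T` in a complex Hilbert space is *essentially self-adjoint*
if its adjoint `T*` is self-adjoint (equivalently, its closure is self-adjoint). -/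
def EssentiallySelfAdjoint {H : Type*} [NormedAddCommGroup H] [InnerProductSpace ℂ H]
    [CompleteSpace H] (T : H →ₗ.[ℂ] H) : Prop :=
  Dense (T.domain : Set H) ∧ IsSelfAdjoint T.adjoint

/-- The Laplacian of `f : ℝⁿ → ℂ`. -/
def laplacian {n : ℕ} (f : EuclideanSpace ℝ (Fin n) → ℂ) (x : EuclideanSpace ℝ (Fin n)) : ℂ :=
  ∑ i : Fin n, fderiv ℝ (fun y => fderiv ℝ f y (EuclideanSpace.single i (1:ℝ))) x
    (EuclideanSpace.single i (1:ℝ))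

/-- The graph of the operator given by the formal differential expression `L` with domain
`C₀^∞(ℝⁿ \ {0})`, as a subspace of `L²(ℝⁿ) × L²(ℝⁿ)`. -/
def graphOf (n : ℕ) (L : (EuclideanSpace ℝ (Fin n) → ℂ) → (EuclideanSpace ℝ (Fin n) → ℂ)) :
    Submodule ℂ (Lp ℂ 2 (volume : Measure (EuclideanSpace ℝ (Fin n))) ×
      Lp ℂ 2 (volume : Measure (EuclideanSpace ℝ (Fin n)))) :=
  Submodule.span ℂ {p | ∃ φ : EuclideanSpace ℝ (Fin n) → ℂ,
    ContDiff ℝ (⊤ : ℕ∞) φ ∧ HasCompactSupport φ ∧ (0 : EuclideanSpace ℝ (Fin n)) ∉ tsupport φ ∧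
    (p.1 : EuclideanSpace ℝ (Fin n) → ℂ) =ᵐ[volume] φ ∧
    (p.2 : EuclideanSpace ℝ (Fin n) → ℂ) =ᵐ[volume] L φ}

/-- The operator in `L²(ℝⁿ)` given by the formal differential expression `L` with domain
`C₀^∞(ℝⁿ \ {0})`. -/
def opOn (n : ℕ) (L : (EuclideanSpace ℝ (Fin n) → ℂ) → (EuclideanSpace ℝ (Fin n) → ℂ)) :
    Lp ℂ 2 (volume : Measure (EuclideanSpace ℝ (Fin n))) →ₗ.[ℂ]
      Lp ℂ 2 (volume : Measure (EuclideanSpace ℝ (Fin n))) :=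
  (graphOf n L).toLinearPMap

/-- The negative Laplacian `-Δ`. -/
def negLap {n : ℕ} (f : EuclideanSpace ℝ (Fin n) → ℂ) : EuclideanSpace ℝ (Fin n) → ℂ :=
  fun x => -laplacian f x

/-- The operator `(-Δ)³ + c|x|⁻⁶` with domain `C₀^∞(ℝⁿ \ {0})` in `L²(ℝⁿ)`. -/
def T3op (n : ℕ) (c : ℝ) :
    Lp ℂ 2 (volume : Measure (EuclideanSpace ℝ (Fin n))) →ₗ.[ℂ]
      Lp ℂ 2 (volume : Measure (EuclideanSpace ℝ (Fin n))) :=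
  opOn n (fun φ x => negLap^[3] φ x + ((c * (‖x‖ ^ 6)⁻¹ : ℝ) : ℂ) * φ x)

/-!
The operator commutes with rotations, so it splits over the solid harmonics of each degree `ℓ`. In
the logarithmic coordinate `t = log ‖x‖`, after rescaling by powers of `‖x‖`, its restriction to
degree `ℓ` becomes `e^{-kt} P(d/dt) e^{-kt}` on `L²(ℝ)`, where `2k` is the order of the operator
and `P` is an even polynomial with real coefficients, depending on `ℓ`, `n` and `c`.

If no root of any of these polynomials lies in the strip `|Re z| < k`, a deficiency vector yields a
square integrable weak solution `w` of `P(d/dt) (e^{-kt} w) = ν e^{kt} w`. The bound on the roots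
forces the mollifications of `e^{-kt} w` to decay exponentially at `±∞`, so that they can be paired
with each other; since `P(d/dt)` is formally symmetric while `ν` is not real, the pairing shows
`w = 0`. Conversely, roots `±z` in the strip for `ℓ = 0` give exponential solutions; cut off away
from the origin `t = -∞`, they lie in the domain of the adjoint, and their boundary form at the
origin does not vanish.

For `k = 3` the substitution `u = z²` turns `P` into a real cubic. As `c` increases, its last root
leaves the image of the strip through a pair of nonreal boundary points when `n ≤ 9`, and through
the real boundary point `u = 9` when `n ≥ 10`: these are the two critical constants.
-/

section EssentialSelfAdjointness

open scoped InnerProductSpace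
open LinearPMap

variable {H : Type*} [NormedAddCommGroup H] [InnerProductSpace ℂ H] [CompleteSpace H]
  {T : H →ₗ.[ℂ] H}

theorem eq_zero_of_mem_orthogonal_graph_of_mem_graph_adjoint (hd : Dense (T.domain : Set H))
    (hI : ∀ u : H, (∀ x : T.domain, ⟪u, T x⟫_ℂ = Complex.I * ⟪u, x⟫_ℂ) → u = 0)
    (hnegI : ∀ u : H, (∀ x : T.domain, ⟪u, T x⟫_ℂ = -Complex.I * ⟪u, x⟫_ℂ) → u = 0)
    {d e : H} (horth : ∀ x : T.domain, ⟪d, x⟫_ℂ + ⟪e, T x⟫_ℂ = 0)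
    (hde : (d, e) ∈ T.adjoint.graph) : d = 0 ∧ e = 0 := by
  obtain ⟨d', rfl, rfl⟩ := (mem_graph_iff _).1 hde
  have hadj (x : T.domain) : ⟪T.adjoint d', (x : H)⟫_ℂ = ⟪(d' : H), T x⟫_ℂ :=
    adjoint_isFormalAdjoint hd d' x
  have hsum : T.adjoint d' + Complex.I • (d' : H) = 0 := hnegI _ fun x => by
    simp only [inner_add_left, inner_smul_left, Complex.conj_I, ← hadj]
    linear_combination horth x - ⟪(d' : H), x⟫_ℂ * Complex.I_mul_I
  have hd' : (d' : H) = 0 := hI _ fun x => by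
    rw [← hadj, eq_neg_of_add_eq_zero_left hsum, inner_neg_left, inner_smul_left, Complex.conj_I,
      neg_mul, neg_neg]
  exact ⟨hd', by simpa [hd'] using hsum⟩

theorem graph_adjoint_subset_closure_graph (hd : Dense (T.domain : Set H))
    (hs : T.IsFormalAdjoint T)
    (hI : ∀ u : H, (∀ x : T.domain, ⟪u, T x⟫_ℂ = Complex.I * ⟪u, x⟫_ℂ) → u = 0)
    (hnegI : ∀ u : H, (∀ x : T.domain, ⟪u, T x⟫_ℂ = -Complex.I * ⟪u, x⟫_ℂ) → u = 0) :
    (T.adjoint.graph : Set (H × H)) ⊆ closure T.graph := by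
  let e := WithLp.prodContinuousLinearEquiv 2 ℂ H H
  let K := (T.graph.comap e.toLinearEquiv.toLinearMap).topologicalClosure
  let L := T.adjoint.graph.comap e.toLinearEquiv.toLinearMap
  have hKL : K ≤ L := Submodule.topologicalClosure_minimal _
    (Submodule.comap_mono (le_graph_of_le (hs.le_adjoint hd)))
    ((adjoint_isClosed hd).preimage e.continuous)
  have hbot : Kᗮ ⊓ L = ⊥ := by
    refine (Submodule.eq_bot_iff _).2 fun w ⟨hw, hwL⟩ => ?_
    have horth (x : T.domain) : ⟪w.fst, x⟫_ℂ + ⟪w.snd, T x⟫_ℂ = 0 := by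
      have hx : WithLp.toLp 2 ((x : H), T x) ∈ K :=
        Submodule.le_topologicalClosure _ (T.mem_graph x)
      simpa using (Submodule.mem_orthogonal' _ _).1 hw _ hx
    obtain ⟨h₁, h₂⟩ :=
      eq_zero_of_mem_orthogonal_graph_of_mem_graph_adjoint hd hI hnegI horth hwL
    exact e.injective (Prod.ext h₁ h₂)
  have : CompleteSpace K := (Submodule.isClosed_topologicalClosure _).completeSpace_coe
  have hLK : L ≤ K := by
    rw [← Submodule.sup_orthogonal_inf_of_hasOrthogonalProjection hKL, hbot, sup_bot_eq]
  intro p hp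
  have hpK : e.symm p ∈ closure (e ⁻¹' T.graph) := hLK (by simpa [L] using hp)
  rw [← e.preimage_closure] at hpK
  simpa using hpK

theorem isFormalAdjoint_adjoint_of_graph_subset_closure (hd : Dense (T.domain : Set H))
    (h : (T.adjoint.graph : Set (H × H)) ⊆ closure T.graph) :
    T.adjoint.IsFormalAdjoint T.adjoint := by
  intro u v
  have hclosed : IsClosed {p : H × H | ⟪p.2, (v : H)⟫_ℂ = ⟪p.1, T.adjoint v⟫_ℂ} :=
    isClosed_eq (by fun_prop) (by fun_prop)
  refine closure_minimal (fun p hp => ?_) hclosed (h (T.adjoint.mem_graph u))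
  obtain ⟨x, hx₁, hx₂⟩ := (mem_graph_iff _).1 hp
  simpa [← hx₁, ← hx₂] using (adjoint_isFormalAdjoint hd).symm x v

theorem essentiallySelfAdjoint_of_isFormalAdjoint (hd : Dense (T.domain : Set H))
    (hs : T.IsFormalAdjoint T)
    (hI : ∀ u : H, (∀ x : T.domain, ⟪u, T x⟫_ℂ = Complex.I * ⟪u, x⟫_ℂ) → u = 0)
    (hnegI : ∀ u : H, (∀ x : T.domain, ⟪u, T x⟫_ℂ = -Complex.I * ⟪u, x⟫_ℂ) → u = 0) :
    EssentiallySelfAdjoint T := by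
  have hle : T ≤ T.adjoint := hs.le_adjoint hd
  have hd' : Dense (T.adjoint.domain : Set H) := hd.mono hle.1
  have hsymm := isFormalAdjoint_adjoint_of_graph_subset_closure hd
    (graph_adjoint_subset_closure_graph hd hs hI hnegI)
  refine ⟨hd, isSelfAdjoint_def.2 (le_antisymm ?_ (hsymm.le_adjoint hd'))⟩
  refine IsFormalAdjoint.le_adjoint hd (IsFormalAdjoint.symm fun x y => ?_)
  rw [adjoint_isFormalAdjoint hd' x ⟨y, hle.1 y.2⟩, hle.2 (y := ⟨y, hle.1 y.2⟩) rfl]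

theorem isFormalAdjoint_self_of_isSelfAdjoint (h : IsSelfAdjoint T) : T.IsFormalAdjoint T := by
  have := adjoint_isFormalAdjoint h.dense_domain
  rwa [isSelfAdjoint_def.1 h] at this

end EssentialSelfAdjointness

section SmoothFunctions

open Polynomial
open scoped ContDiff Topology

/-- The algebra `C^∞(ℝ, ℂ)`. It is bundled as a subalgebra of `ℝ → ℂ` so that differential
operators with constant coefficients become endomorphisms, to which polynomial calculus applies. -/
def smoothAlgebra : Subalgebra ℂ (ℝ → ℂ) where
  carrier := {f | ContDiff ℝ ∞ f}
  mul_mem' {f g} (hf : ContDiff ℝ ∞ f) (hg : ContDiff ℝ ∞ g) := hf.mul hg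
  add_mem' {f g} (hf : ContDiff ℝ ∞ f) (hg : ContDiff ℝ ∞ g) := hf.add hg
  algebraMap_mem' c := show ContDiff ℝ ∞ fun _ => c from contDiff_const

theorem mem_smoothAlgebra {f : ℝ → ℂ} : f ∈ smoothAlgebra ↔ ContDiff ℝ ∞ f := Iff.rfl

/-- The type of smooth complex-valued functions on the line. -/
abbrev SmoothFn : Type := smoothAlgebra

instance : CoeFun SmoothFn fun _ => ℝ → ℂ := ⟨Subtype.val⟩

namespace SmoothFn

theorem contDiff (f : SmoothFn) : ContDiff ℝ ∞ f := mem_smoothAlgebra.1 f.2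

theorem differentiable (f : SmoothFn) : Differentiable ℝ f := f.contDiff.differentiable (by simp)

theorem continuous (f : SmoothFn) : Continuous f := f.contDiff.continuous

theorem ext {f g : SmoothFn} (h : ∀ t, f t = g t) : f = g := Subtype.ext (funext h)

@[simp] theorem coe_add (f g : SmoothFn) (t : ℝ) : (f + g) t = f t + g t := rfl

@[simp] theorem coe_neg (f : SmoothFn) (t : ℝ) : (-f) t = -f t := rfl

@[simp] theorem coe_mul (f g : SmoothFn) (t : ℝ) : (f * g) t = f t * g t := rfl

@[simp] theorem coe_smul (c : ℂ) (f : SmoothFn) (t : ℝ) : (c • f) t = c * f t := rfl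

end SmoothFn

/-- Differentiation as an endomorphism of the space of smooth functions. -/
def smoothDeriv : Module.End ℂ SmoothFn where
  toFun f := ⟨deriv f, mem_smoothAlgebra.2 (contDiff_infty_iff_deriv.1 f.contDiff).2⟩
  map_add' f g := SmoothFn.ext fun t => deriv_add (f.differentiable t) (g.differentiable t)
  map_smul' c f := SmoothFn.ext fun t => by simpa using deriv_const_smul c (f.differentiable t)

theorem SmoothFn.hasDerivAt (f : SmoothFn) (t : ℝ) : HasDerivAt f (smoothDeriv f t) t :=
  (f.differentiable t).hasDerivAt

theorem smoothDeriv_eq {f g : SmoothFn} (h : ∀ t, HasDerivAt f (g t) t) : smoothDeriv f = g :=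
  SmoothFn.ext fun t => (h t).deriv

theorem smoothDeriv_mul (f g : SmoothFn) :
    smoothDeriv (f * g) = smoothDeriv f * g + f * smoothDeriv g :=
  smoothDeriv_eq fun t => (f.hasDerivAt t).mul (g.hasDerivAt t)

/-- The differential operator `P(d/dt)` with constant coefficients. -/
def diffOp (P : ℂ[X]) : Module.End ℂ SmoothFn := aeval smoothDeriv P

theorem diffOp_mul (P Q : ℂ[X]) (f : SmoothFn) : diffOp (P * Q) f = diffOp P (diffOp Q f) := by
  simp only [diffOp, map_mul, Module.End.mul_apply]

theorem diffOp_add (P Q : ℂ[X]) (f : SmoothFn) : diffOp (P + Q) f = diffOp P f + diffOp Q f := by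
  simp only [diffOp, map_add, LinearMap.add_apply]

theorem diffOp_neg (P : ℂ[X]) (f : SmoothFn) : diffOp (-P) f = -diffOp P f := by
  simp only [diffOp, map_neg, LinearMap.neg_apply]

theorem diffOp_sub (P Q : ℂ[X]) (f : SmoothFn) : diffOp (P - Q) f = diffOp P f - diffOp Q f := by
  simp only [diffOp, map_sub, LinearMap.sub_apply]

@[simp] theorem diffOp_C (c : ℂ) (f : SmoothFn) : diffOp (C c) f = c • f := by
  simp only [diffOp, aeval_C, Module.algebraMap_end_apply]

@[simp] theorem diffOp_X (f : SmoothFn) : diffOp X f = smoothDeriv f := by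
  simp only [diffOp, aeval_X]

@[simp] theorem diffOp_one (f : SmoothFn) : diffOp 1 f = f := by
  simp only [diffOp, map_one, Module.End.one_apply]

theorem diffOp_mul_X (P : ℂ[X]) (f : SmoothFn) : diffOp (P * X) f = diffOp P (smoothDeriv f) := by
  rw [diffOp_mul, diffOp_X]

theorem polynomial_induction_mul_X {p : ℂ[X] → Prop} (C : ∀ c, p (C c))
    (add : ∀ P Q, p P → p Q → p (P + Q)) (mul_X : ∀ P, p P → p (P * X)) (P : ℂ[X]) : p P := by
  induction P using Polynomial.induction_on with
  | C c => exact C c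
  | add P Q hP hQ => exact add P Q hP hQ
  | monomial k c h => rw [pow_succ, ← mul_assoc]; exact mul_X _ h

theorem diffOp_congr_nhds (P : ℂ[X]) {f g : SmoothFn} {t : ℝ} (h : f =ᶠ[𝓝 t] g) :
    diffOp P f =ᶠ[𝓝 t] diffOp P g := by
  induction P using polynomial_induction_mul_X generalizing f g with
  | C c => simpa using h.const_smul c
  | add P Q hP hQ => simpa [diffOp_add] using (hP h).add (hQ h)
  | mul_X P hP => simpa only [diffOp_mul_X] using hP h.deriv

theorem tsupport_diffOp_subset (P : ℂ[X]) (f : SmoothFn) :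
    tsupport (diffOp P f) ⊆ tsupport f := by
  intro t ht
  contrapose! ht
  rw [notMem_tsupport_iff_eventuallyEq] at ht ⊢
  simpa using diffOp_congr_nhds P (g := 0) ht

theorem hasCompactSupport_diffOp (P : ℂ[X]) {f : SmoothFn} (h : HasCompactSupport f) :
    HasCompactSupport (diffOp P f) :=
  IsCompact.of_isClosed_subset h (isClosed_tsupport _) (tsupport_diffOp_subset P f)

/-- The exponential `t ↦ exp (z t)` as a smooth function. -/
def expFn (z : ℂ) : SmoothFn :=
  ⟨fun t => Complex.exp (z * t),
    mem_smoothAlgebra.2 (contDiff_const.mul Complex.ofRealCLM.contDiff).cexp⟩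

theorem expFn_apply (z : ℂ) (t : ℝ) : expFn z t = Complex.exp (z * t) := rfl

theorem expFn_mul (z w : ℂ) : expFn z * expFn w = expFn (z + w) :=
  SmoothFn.ext fun t => by simp [expFn_apply, ← Complex.exp_add, add_mul]

@[simp] theorem expFn_zero : expFn 0 = 1 := SmoothFn.ext fun t => by simp [expFn_apply]

theorem norm_expFn (z : ℂ) (t : ℝ) : ‖expFn z t‖ = Real.exp (z.re * t) := by
  simp [expFn_apply, Complex.norm_exp]

theorem smoothDeriv_expFn (z : ℂ) : smoothDeriv (expFn z) = z • expFn z :=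
  smoothDeriv_eq fun t => by
    have h := ((Complex.ofRealCLM.hasDerivAt (x := t)).const_mul z).cexp
    exact h.congr_deriv (by simp [expFn_apply, mul_comm])

theorem diffOp_expFn_mul (P : ℂ[X]) (z : ℂ) (f : SmoothFn) :
    diffOp P (expFn z * f) = expFn z * diffOp (P.comp (X + C z)) f := by
  induction P using polynomial_induction_mul_X generalizing f with
  | C c => simp
  | add P Q hP hQ => simp [diffOp_add, hP, hQ, mul_add]
  | mul_X P hP =>
    have hshift : smoothDeriv (expFn z * f) = expFn z * diffOp (X + C z) f := by
      rw [smoothDeriv_mul, smoothDeriv_expFn, diffOp_add, diffOp_X, diffOp_C, mul_add, add_comm,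
        smul_mul_assoc, mul_smul_comm]
    rw [diffOp_mul_X, hshift, hP, mul_comp, X_comp, diffOp_mul]

theorem diffOp_comp_neg_X_mul_X (P : ℂ[X]) (f : SmoothFn) :
    diffOp ((P * X).comp (-X)) f = -smoothDeriv (diffOp (P.comp (-X)) f) := by
  rw [mul_comp, X_comp, mul_neg, diffOp_neg, mul_comm, diffOp_mul, diffOp_X]

theorem integral_diffOp_mul_of_integrable (P : ℂ[X]) {f g : SmoothFn}
    (hfg : ∀ Q R, Integrable fun t => diffOp Q f t * diffOp R g t) :
    ∫ t, diffOp P f t * g t = ∫ t, f t * diffOp (P.comp (-X)) g t := by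
  have hl Q : Integrable fun t => diffOp Q f t * g t := by simpa using hfg Q 1
  have hr R : Integrable fun t => f t * diffOp R g t := by simpa using hfg 1 R
  induction P using polynomial_induction_mul_X generalizing f with
  | C c => simp [mul_assoc, mul_left_comm]
  | add P Q hP hQ =>
    simp only [diffOp_add, add_comp, SmoothFn.coe_add, add_mul, mul_add]
    rw [integral_add (hl P) (hl Q), integral_add (hr _) (hr _), hP hfg hl hr, hQ hfg hl hr]
  | mul_X P hP =>
    have hfg' Q R : Integrable fun t => diffOp Q (smoothDeriv f) t * diffOp R g t := by
      rw [← diffOp_mul_X]; exact hfg (Q * X) R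
    have hparts : ∫ t, f t * smoothDeriv (diffOp (P.comp (-X)) g) t =
        -∫ t, smoothDeriv f t * diffOp (P.comp (-X)) g t := by
      refine integral_mul_deriv_eq_deriv_mul_of_integrable (u := f) (v := diffOp (P.comp (-X)) g)
        (fun t _ => f.hasDerivAt t) (fun t _ => SmoothFn.hasDerivAt _ t) ?_ ?_ (hr _)
      · have h := hr (X * P.comp (-X))
        rw [diffOp_mul, diffOp_X] at h
        exact h
      · have h := hfg' 1 (P.comp (-X))
        rw [diffOp_one] at h
        exact h
    calc ∫ t, diffOp (P * X) f t * g t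
        = ∫ t, smoothDeriv f t * diffOp (P.comp (-X)) g t := by
          simp only [diffOp_mul_X]
          exact hP hfg' (fun Q => by simpa using hfg' Q 1) (fun R => by simpa using hfg' 1 R)
      _ = -∫ t, f t * smoothDeriv (diffOp (P.comp (-X)) g) t := by rw [hparts, neg_neg]
      _ = _ := by
          rw [← integral_neg]
          simp only [diffOp_comp_neg_X_mul_X, SmoothFn.coe_neg, mul_neg]

theorem integral_diffOp_mul (P : ℂ[X]) {f : SmoothFn} (hf : HasCompactSupport f) (g : SmoothFn) :
    ∫ t, diffOp P f t * g t = ∫ t, f t * diffOp (P.comp (-X)) g t :=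
  integral_diffOp_mul_of_integrable P fun Q R =>
    ((diffOp Q f).continuous.mul (diffOp R g).continuous).integrable_of_hasCompactSupport
      (hasCompactSupport_diffOp Q hf).mul_right

/-- The complex conjugate of a smooth function, as a smooth function. -/
def conjFn (f : SmoothFn) : SmoothFn :=
  ⟨fun t => star (f t), mem_smoothAlgebra.2 (Complex.conjCLE.contDiff.comp f.contDiff)⟩

theorem conjFn_apply (f : SmoothFn) (t : ℝ) : conjFn f t = star (f t) := rfl

theorem smoothDeriv_conjFn (f : SmoothFn) : smoothDeriv (conjFn f) = conjFn (smoothDeriv f) :=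
  smoothDeriv_eq fun t => (f.hasDerivAt t).star

theorem diffOp_conjFn (P : ℂ[X]) (f : SmoothFn) :
    diffOp P (conjFn f) = conjFn (diffOp (P.map (starRingEnd ℂ)) f) := by
  induction P using polynomial_induction_mul_X generalizing f with
  | C c => exact SmoothFn.ext fun t => by simp [conjFn_apply]
  | add P Q hP hQ => exact SmoothFn.ext fun t => by simp [diffOp_add, hP, hQ, conjFn_apply]
  | mul_X P hP => simp [diffOp_mul, smoothDeriv_conjFn, hP]

end SmoothFunctions

section Decay

open Polynomial Filter Topology Asymptotics

variable {y q : ℝ → ℂ} {z : ℂ} {δ κ C T : ℝ}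

theorem norm_expFn_mul (z w : ℂ) (t : ℝ) : ‖expFn z t * w‖ = Real.exp (z.re * t) * ‖w‖ := by
  rw [norm_mul, norm_expFn]

theorem hasDerivAt_expFn_neg_mul (hy : ∀ t, HasDerivAt y (z * y t + q t) t) (t : ℝ) :
    HasDerivAt (fun t => expFn (-z) t * y t) (expFn (-z) t * q t) t := by
  have h := ((expFn (-z)).hasDerivAt t).mul (hy t)
  rw [smoothDeriv_expFn] at h
  exact h.congr_deriv (by simp only [SmoothFn.coe_smul]; ring)

theorem norm_expFn_neg_mul_sub_le (hz : z.re ≠ δ) (hy : ∀ t, HasDerivAt y (z * y t + q t) t)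
    (hq : ∀ t ≤ T, ‖q t‖ ≤ C * Real.exp (δ * t)) {s t : ℝ} (hst : s ≤ t) (htT : t ≤ T) :
    ‖expFn (-z) t * y t - expFn (-z) s * y s‖ ≤
      C / (δ - z.re) * (Real.exp ((δ - z.re) * t) - Real.exp ((δ - z.re) * s)) := by
  have hδ : δ - z.re ≠ 0 := sub_ne_zero.2 hz.symm
  have hg x := (hasDerivAt_expFn_neg_mul hy x).sub_const (expFn (-z) s * y s)
  have hB (x : ℝ) : HasDerivAt
      (fun x => C / (δ - z.re) * (Real.exp ((δ - z.re) * x) - Real.exp ((δ - z.re) * s)))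
      (C * Real.exp ((δ - z.re) * x)) x := by
    have h := ((hasDerivAt_id x).const_mul (δ - z.re)).exp.sub_const (Real.exp ((δ - z.re) * s))
    exact (h.const_mul (C / (δ - z.re))).congr_deriv (by simp only [id]; field_simp)
  refine image_norm_le_of_norm_deriv_right_le_deriv_boundary'
    (fun x _ => (hg x).continuousAt.continuousWithinAt) (fun x _ => (hg x).hasDerivWithinAt)
    (by simp) (fun x _ => (hB x).continuousAt.continuousWithinAt)
    (fun x _ => (hB x).hasDerivWithinAt) (fun x hx => ?_) (Set.right_mem_Icc.2 hst)
  calc ‖expFn (-z) x * q x‖ ≤ Real.exp (-z.re * x) * (C * Real.exp (δ * x)) := by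
        rw [norm_expFn_mul, Complex.neg_re]
        gcongr
        exact hq x (hx.2.le.trans htT)
    _ = C * Real.exp ((δ - z.re) * x) := by
        rw [mul_left_comm, ← Real.exp_add]; ring_nf

theorem norm_eq_exp_mul_norm_expFn_neg_mul (z w : ℂ) (t : ℝ) :
    ‖w‖ = Real.exp (z.re * t) * ‖expFn (-z) t * w‖ := by
  rw [norm_expFn_mul, ← mul_assoc, ← Real.exp_add]; simp

theorem isBigO_exp_of_hasDerivAt_of_re_lt (hz : z.re < δ)
    (hy : ∀ t, HasDerivAt y (z * y t + q t) t)
    (hq : q =O[atBot] fun t => Real.exp (δ * t))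
    (hlim : Tendsto (fun t => Real.exp (-z.re * t) * ‖y t‖) atBot (𝓝 0)) :
    y =O[atBot] fun t => Real.exp (δ * t) := by
  obtain ⟨C, hC0, hC⟩ := hq.exists_nonneg
  obtain ⟨T, hT⟩ := eventually_atBot.1 hC.bound
  simp only [Real.norm_eq_abs, Real.abs_exp] at hT
  refine IsBigO.of_bound (C / (δ - z.re)) (eventually_atBot.2 ⟨T, fun t ht => ?_⟩)
  have hC' : 0 ≤ C / (δ - z.re) := div_nonneg hC0 (sub_pos.2 hz).le
  have hbound : ‖expFn (-z) t * y t‖ ≤ C / (δ - z.re) * Real.exp ((δ - z.re) * t) + 0 := by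
    refine ge_of_tendsto (tendsto_const_nhds.add hlim) ?_
    filter_upwards [eventually_le_atBot t] with s hs
    have hdiff := norm_expFn_neg_mul_sub_le hz.ne hy hT hs ht
    have htri := norm_le_norm_sub_add (expFn (-z) t * y t) (expFn (-z) s * y s)
    rw [norm_expFn_mul _ (y s), Complex.neg_re] at htri
    have hpos := mul_nonneg hC' (Real.exp_pos ((δ - z.re) * s)).le
    linarith
  calc ‖y t‖ = Real.exp (z.re * t) * ‖expFn (-z) t * y t‖ :=
        norm_eq_exp_mul_norm_expFn_neg_mul z _ t
    _ ≤ Real.exp (z.re * t) * (C / (δ - z.re) * Real.exp ((δ - z.re) * t) + 0) := by gcongr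
    _ = C / (δ - z.re) * ‖Real.exp (δ * t)‖ := by
        rw [Real.norm_eq_abs, Real.abs_exp, add_zero, mul_left_comm, ← Real.exp_add]; ring_nf

theorem isBigO_exp_of_hasDerivAt_of_lt_re (hz : δ < z.re)
    (hy : ∀ t, HasDerivAt y (z * y t + q t) t)
    (hq : q =O[atBot] fun t => Real.exp (δ * t)) :
    y =O[atBot] fun t => Real.exp (δ * t) := by
  obtain ⟨C, hC0, hC⟩ := hq.exists_nonneg
  obtain ⟨T, hT⟩ := eventually_atBot.1 (hC.bound.and (eventually_le_atBot (0 : ℝ)))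
  have hq' t (ht : t ≤ T) : ‖q t‖ ≤ C * Real.exp (δ * t) := by
    simpa only [Real.norm_eq_abs, Real.abs_exp] using (hT t ht).1
  set M := ‖expFn (-z) T * y T‖
  refine IsBigO.of_bound (M + C / (z.re - δ)) (eventually_atBot.2 ⟨T, fun t ht => ?_⟩)
  have hC' : 0 ≤ C / (z.re - δ) := div_nonneg hC0 (sub_pos.2 hz).le
  have hbound : ‖expFn (-z) t * y t‖ ≤ M + C / (z.re - δ) * Real.exp ((δ - z.re) * t) := by
    have hdiff := norm_expFn_neg_mul_sub_le hz.ne' hy hq' ht le_rfl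
    have htri := norm_le_norm_sub_add (expFn (-z) t * y t) (expFn (-z) T * y T)
    rw [norm_sub_rev] at htri
    have hpos := mul_nonneg hC' (Real.exp_pos ((δ - z.re) * T)).le
    rw [← neg_sub z.re δ, div_neg, neg_sub] at hdiff
    linarith
  have hexp : Real.exp (z.re * t) ≤ Real.exp (δ * t) :=
    Real.exp_le_exp.2 (mul_le_mul_of_nonpos_right hz.le (hT t ht).2)
  calc ‖y t‖ = Real.exp (z.re * t) * ‖expFn (-z) t * y t‖ :=
        norm_eq_exp_mul_norm_expFn_neg_mul z _ t
    _ ≤ Real.exp (z.re * t) * (M + C / (z.re - δ) * Real.exp ((δ - z.re) * t)) := by gcongr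
    _ = Real.exp (z.re * t) * M + C / (z.re - δ) * Real.exp (δ * t) := by
        rw [mul_add, mul_left_comm _ (C / _), ← Real.exp_add]; ring_nf
    _ ≤ Real.exp (δ * t) * M + C / (z.re - δ) * Real.exp (δ * t) := by gcongr
    _ = (M + C / (z.re - δ)) * ‖Real.exp (δ * t)‖ := by
        rw [Real.norm_eq_abs, Real.abs_exp]; ring

theorem isBigO_exp_of_hasDerivAt (hz : κ ≤ |z.re|) (hδ : |δ| < κ)
    (hy : ∀ t, HasDerivAt y (z * y t + q t) t)
    (hq : q =O[atBot] fun t => Real.exp (δ * t))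
    (hlim : Tendsto (fun t => Real.exp (κ * t) * ‖y t‖) atBot (𝓝 0)) :
    y =O[atBot] fun t => Real.exp (δ * t) := by
  rcases le_abs'.1 hz with hneg | hpos
  · refine isBigO_exp_of_hasDerivAt_of_re_lt (hneg.trans_lt (neg_lt_of_abs_lt hδ)) hy hq ?_
    refine squeeze_zero' (Eventually.of_forall fun _ => by positivity) ?_ hlim
    filter_upwards [eventually_le_atBot (0 : ℝ)] with t ht
    exact mul_le_mul_of_nonneg_right
      (Real.exp_le_exp.2 (mul_le_mul_of_nonpos_right (by linarith) ht)) (norm_nonneg _)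
  · exact isBigO_exp_of_hasDerivAt_of_lt_re ((lt_of_abs_lt hδ).trans_le hpos) hy hq

theorem isBigO_exp_of_diffOp {P : ℂ[X]} (hP0 : P ≠ 0) (hroot : ∀ z, P.IsRoot z → κ ≤ |z.re|)
    (hδ : |δ| < κ) {f : SmoothFn}
    (hlim : ∀ Q, Tendsto (fun t => Real.exp (κ * t) * ‖diffOp Q f t‖) atBot (𝓝 0))
    (hPf : diffOp P f =O[atBot] fun t => Real.exp (δ * t)) :
    f =O[atBot] fun t => Real.exp (δ * t) := by
  have hfactors (s : Multiset ℂ) (hs : ∀ z ∈ s, κ ≤ |z.re|)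
      (h : diffOp (s.map fun z => X - C z).prod f =O[atBot] fun t => Real.exp (δ * t)) :
      f =O[atBot] fun t => Real.exp (δ * t) := by
    induction s using Multiset.induction_on with
    | empty => simpa using h
    | cons z s ih =>
      refine ih (fun w hw => hs w (Multiset.mem_cons_of_mem hw)) ?_
      rw [Multiset.map_cons, Multiset.prod_cons, diffOp_mul] at h
      refine isBigO_exp_of_hasDerivAt (hs z (Multiset.mem_cons_self _ _)) hδ (fun t => ?_) h
        (hlim _)
      exact (SmoothFn.hasDerivAt _ t).congr_deriv (by simp [diffOp_sub])
  refine hfactors P.roots (fun z hz => hroot z (isRoot_of_mem_roots hz)) ?_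
  have hlead : P.leadingCoeff ≠ 0 := leadingCoeff_ne_zero.2 hP0
  rw [(IsAlgClosed.splits P).eq_prod_roots, diffOp_mul, diffOp_C] at hPf
  refine (hPf.const_mul_left P.leadingCoeff⁻¹).congr_left fun t => ?_
  rw [SmoothFn.coe_smul, inv_mul_cancel_left₀ hlead]

end Decay

section LineTestFunctions

open Polynomial

/-- The ideal `C_c^∞(ℝ, ℂ)` of test functions in the algebra of smooth functions. -/
def testIdeal : Ideal SmoothFn where
  carrier := {f | HasCompactSupport f}
  add_mem' {f g} (hf : HasCompactSupport f) (hg : HasCompactSupport g) := hf.add hg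
  zero_mem' := show HasCompactSupport fun _ : ℝ => (0 : ℂ) from HasCompactSupport.zero
  smul_mem' f {g} (hg : HasCompactSupport g) :=
    show HasCompactSupport fun t => f t * g t from hg.mul_left

theorem mem_testIdeal {f : SmoothFn} : f ∈ testIdeal ↔ HasCompactSupport f := Iff.rfl

/-- The type of test functions on the line. -/
abbrev TestFn : Type := testIdeal

instance : CoeFun TestFn fun _ => ℝ → ℂ := ⟨fun ρ => ρ.1.1⟩

instance : AddCommGroup TestFn := Submodule.addCommGroup testIdeal

instance : SMul SmoothFn TestFn := ⟨fun f ρ => ⟨f * ρ, testIdeal.mul_mem_left f ρ.2⟩⟩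

instance : Module ℂ TestFn := Submodule.module' testIdeal

namespace TestFn

theorem hasCompactSupport (ρ : TestFn) : HasCompactSupport ρ := mem_testIdeal.1 ρ.2

theorem ext {ρ σ : TestFn} (h : ∀ t, ρ t = σ t) : ρ = σ := Subtype.ext (SmoothFn.ext h)

@[simp] theorem coe_smoothFn_smul (f : SmoothFn) (ρ : TestFn) (t : ℝ) : (f • ρ) t = f t * ρ t := rfl

end TestFn

/-- The differential operator `P(d/dt)` on test functions. -/
def testOp (P : ℂ[X]) (ρ : TestFn) : TestFn :=
  ⟨diffOp P ρ, mem_testIdeal.2 (hasCompactSupport_diffOp P ρ.hasCompactSupport)⟩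

theorem coe_testOp (P : ℂ[X]) (ρ : TestFn) : (testOp P ρ : SmoothFn) = diffOp P ρ := rfl

/-- The reflection `s ↦ ρ (t - s)` of a test function, as it occurs in a convolution at `t`. -/
def reflectFn (t : ℝ) (ρ : TestFn) : TestFn :=
  ⟨⟨fun s => ρ (t - s), mem_smoothAlgebra.2 (ρ.1.contDiff.comp (contDiff_const.sub contDiff_id))⟩,
    mem_testIdeal.2 (ρ.hasCompactSupport.comp_homeomorph (Homeomorph.subLeft t))⟩

theorem reflectFn_apply (t s : ℝ) (ρ : TestFn) : reflectFn t ρ s = ρ (t - s) := rfl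

theorem smoothDeriv_reflectFn (t : ℝ) (ρ : TestFn) :
    smoothDeriv (reflectFn t ρ) = -reflectFn t (testOp X ρ) :=
  smoothDeriv_eq fun s => by
    have h := (ρ.1.hasDerivAt (t - s)).scomp s ((hasDerivAt_id s).const_sub t)
    exact h.congr_deriv (by simp [reflectFn_apply, coe_testOp])

theorem diffOp_reflectFn (P : ℂ[X]) (t : ℝ) (ρ : TestFn) :
    diffOp P (reflectFn t ρ) = reflectFn t (testOp (P.comp (-X)) ρ) := by
  induction P using polynomial_induction_mul_X generalizing ρ with
  | C c => exact SmoothFn.ext fun s => by simp [reflectFn_apply, coe_testOp]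
  | add P Q hP hQ =>
    exact SmoothFn.ext fun s => by simp [diffOp_add, hP, hQ, reflectFn_apply, coe_testOp]
  | mul_X P hP =>
    rw [diffOp_mul_X, smoothDeriv_reflectFn, map_neg, hP]
    refine SmoothFn.ext fun s => ?_
    simp [reflectFn_apply, coe_testOp, diffOp_neg, diffOp_mul]

end LineTestFunctions

section Mollification

open Polynomial Filter Topology
open scoped ENNReal

theorem eLpNorm_two_sq {α E : Type*} [MeasurableSpace α] [NormedAddCommGroup E]
    (f : α → E) (μ : Measure α) : eLpNorm f 2 μ ^ 2 = ∫⁻ t, ‖f t‖ₑ ^ 2 ∂μ := by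
  simpa using eLpNorm_nnreal_pow_eq_lintegral (f := f) (μ := μ) (p := 2) two_ne_zero

section Young

variable {G : Type*} [AddCommGroup G] [MeasurableSpace G] [MeasurableAdd₂ G] [MeasurableNeg G]
  {μ : Measure G} [μ.IsAddLeftInvariant] [μ.IsNegInvariant] {f k : G → ℝ≥0∞}

theorem lconvolution_sq_le (hf : AEMeasurable f μ) (hk : Measurable k) (t : G) :
    lconvolution f k μ t ^ 2 ≤ (∫⁻ s, k s ∂μ) * lconvolution (fun s => f s ^ 2) k μ t := by
  have hsq (x : ℝ≥0∞) : (x ^ (1 / 2 : ℝ)) ^ 2 = x := by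
    rw [← ENNReal.rpow_natCast, ← ENNReal.rpow_mul]; norm_num
  have hm : AEMeasurable (fun s => k (-s + t)) μ := by fun_prop
  have hsplit s : ((fun s => k (-s + t) ^ (1 / 2 : ℝ)) * fun s => f s * k (-s + t) ^ (1 / 2 : ℝ)) s
      = f s * k (-s + t) := by
    rw [Pi.mul_apply, mul_left_comm, ← sq, hsq]
  have hholder := ENNReal.lintegral_mul_le_Lp_mul_Lq μ Real.HolderConjugate.two_two
    (f := fun s => k (-s + t) ^ (1 / 2 : ℝ)) (g := fun s => f s * k (-s + t) ^ (1 / 2 : ℝ))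
    (hm.pow_const (1 / 2)) (hf.mul (hm.pow_const (1 / 2)))
  simp only [hsplit] at hholder
  refine (pow_le_pow_left₀ zero_le hholder 2).trans_eq ?_
  rw [mul_pow, hsq, hsq]
  simp only [ENNReal.rpow_ofNat, mul_pow, hsq, lconvolution_def]
  congr 1
  simpa only [neg_add_eq_sub] using lintegral_sub_left_eq_self k t

theorem lintegral_lconvolution_sq_le [SFinite μ] (hf : AEMeasurable f μ) (hk : Measurable k) :
    ∫⁻ t, lconvolution f k μ t ^ 2 ∂μ ≤ (∫⁻ s, k s ∂μ) ^ 2 * ∫⁻ s, f s ^ 2 ∂μ := by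
  have hkernel : AEMeasurable (fun p : G × G => f p.2 ^ 2 * k (-p.2 + p.1)) (μ.prod μ) :=
    (hf.comp_snd.pow_const 2).mul (by fun_prop)
  calc ∫⁻ t, lconvolution f k μ t ^ 2 ∂μ
      ≤ ∫⁻ t, (∫⁻ s, k s ∂μ) * lconvolution (fun s => f s ^ 2) k μ t ∂μ :=
        lintegral_mono fun t => lconvolution_sq_le hf hk t
    _ = (∫⁻ s, k s ∂μ) * ∫⁻ t, ∫⁻ s, f s ^ 2 * k (-s + t) ∂μ ∂μ :=
        lintegral_const_mul'' _ hkernel.lintegral_prod_right'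
    _ = (∫⁻ s, k s ∂μ) * ∫⁻ s, f s ^ 2 * ∫⁻ t, k t ∂μ ∂μ := by
        rw [lintegral_lintegral_swap hkernel]
        congr 1
        refine lintegral_congr fun s => ?_
        rw [lintegral_const_mul _ (by fun_prop), lintegral_add_left_eq_self]
    _ = (∫⁻ s, k s ∂μ) ^ 2 * ∫⁻ s, f s ^ 2 ∂μ := by
        rw [lintegral_mul_const'' _ (hf.pow_const 2)]; ring

end Young

variable {w : ℝ → ℂ}

/-- The convolution `w * ρ` of a locally integrable function with a test function. -/
def convFn (hw : LocallyIntegrable w volume) : TestFn →ₗ[ℂ] SmoothFn where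
  toFun ρ := ⟨convolution w ρ (ContinuousLinearMap.mul ℝ ℂ) volume,
    mem_smoothAlgebra.2 (ρ.hasCompactSupport.contDiff_convolution_right _ hw ρ.1.contDiff)⟩
  map_add' ρ σ := SmoothFn.ext fun t =>
    (ρ.hasCompactSupport.convolutionExists_right _ hw ρ.1.continuous t).distrib_add
      (σ.hasCompactSupport.convolutionExists_right _ hw σ.1.continuous t)
  map_smul' c ρ := SmoothFn.ext fun t => by
    simp [convolution_def, mul_left_comm, integral_const_mul]

theorem convFn_apply (hw : LocallyIntegrable w volume) (ρ : TestFn) (t : ℝ) :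
    convFn hw ρ t = ∫ s, w s * ρ (t - s) := rfl

theorem smoothDeriv_convFn (hw : LocallyIntegrable w volume) (ρ : TestFn) :
    smoothDeriv (convFn hw ρ) = convFn hw (testOp X ρ) := by
  refine smoothDeriv_eq fun t => ?_
  have h := ρ.hasCompactSupport.hasDerivAt_convolution_right (ContinuousLinearMap.mul ℝ ℂ) hw
    (ρ.1.contDiff.of_le (by simp)) t
  exact h.congr_deriv (by simp only [convFn_apply, coe_testOp, diffOp_X]; rfl)

theorem diffOp_convFn (hw : LocallyIntegrable w volume) (P : ℂ[X]) (ρ : TestFn) :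
    diffOp P (convFn hw ρ) = convFn hw (testOp P ρ) := by
  induction P using polynomial_induction_mul_X generalizing ρ with
  | C c =>
    rw [diffOp_C, ← map_smul]
    congr 1
    exact TestFn.ext fun t => by simp [coe_testOp]
  | add P Q hP hQ =>
    rw [diffOp_add, hP, hQ, ← map_add]
    congr 1
    exact Subtype.ext (diffOp_add P Q ρ).symm
  | mul_X P hP =>
    rw [diffOp_mul_X, smoothDeriv_convFn, hP]
    congr 1
    exact Subtype.ext (by simp only [coe_testOp, diffOp_mul_X, diffOp_X])

theorem eLpNorm_convFn_le (hw : LocallyIntegrable w volume) (ρ : TestFn) :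
    eLpNorm (convFn hw ρ) 2 ≤ (∫⁻ s, ‖ρ s‖ₑ) * eLpNorm w 2 := by
  have hpointwise t :
      ‖convFn hw ρ t‖ₑ ≤ lconvolution (fun s => ‖w s‖ₑ) (fun s => ‖ρ s‖ₑ) volume t :=
    (enorm_integral_le_lintegral_enorm _).trans_eq <| by
      simp only [ContinuousLinearMap.mul_apply', enorm_mul, lconvolution_def, neg_add_eq_sub]
  refine (ENNReal.pow_le_pow_left_iff two_ne_zero).1 ?_
  rw [mul_pow, eLpNorm_two_sq, eLpNorm_two_sq]
  exact (lintegral_mono fun t => pow_le_pow_left₀ zero_le (hpointwise t) 2).trans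
    (lintegral_lconvolution_sq_le hw.aestronglyMeasurable.enorm ρ.1.continuous.enorm.measurable)

theorem memLp_convFn (hw : LocallyIntegrable w volume) (hw2 : MemLp w 2) (ρ : TestFn) :
    MemLp (convFn hw ρ) 2 := by
  refine ⟨(convFn hw ρ).continuous.aestronglyMeasurable,
    (eLpNorm_convFn_le hw ρ).trans_lt (ENNReal.mul_lt_top ?_ hw2.2)⟩
  exact (ρ.1.continuous.integrable_of_hasCompactSupport ρ.hasCompactSupport).hasFiniteIntegral

theorem SmoothFn.tendsto_zero_of_mul_star {g : SmoothFn} {l : Filter ℝ}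
    (h : Tendsto (fun t => g t * star (g t)) l (𝓝 0)) : Tendsto g l (𝓝 0) := by
  rw [tendsto_zero_iff_norm_tendsto_zero] at h ⊢
  simpa [Real.sqrt_mul_self] using h.sqrt

theorem SmoothFn.tendsto_zero_of_memLp {g : SmoothFn} (hg : MemLp g 2)
    (hg' : MemLp (smoothDeriv g) 2) : Tendsto g atBot (𝓝 0) ∧ Tendsto g atTop (𝓝 0) := by
  have hint : Integrable fun t => g t * star (g t) := hg.integrable_mul hg.star
  have hint' : Integrable fun t => smoothDeriv g t * star (g t) + g t * star (smoothDeriv g t) :=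
    (hg'.integrable_mul hg.star).add (hg.integrable_mul hg'.star)
  have hderiv t : HasDerivAt (fun t => g t * star (g t))
      (smoothDeriv g t * star (g t) + g t * star (smoothDeriv g t)) t :=
    (g.hasDerivAt t).mul (g.hasDerivAt t).star
  exact ⟨tendsto_zero_of_mul_star (tendsto_zero_of_hasDerivAt_of_integrableOn_Iic (a := 0)
      (fun t _ => hderiv t) hint'.integrableOn hint.integrableOn),
    tendsto_zero_of_mul_star (tendsto_zero_of_hasDerivAt_of_integrableOn_Ioi (a := 0)
      (fun t _ => hderiv t) hint'.integrableOn hint.integrableOn)⟩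

theorem tendsto_convFn (hw : LocallyIntegrable w volume) (hw2 : MemLp w 2) (ρ : TestFn) :
    Tendsto (convFn hw ρ) atBot (𝓝 0) ∧ Tendsto (convFn hw ρ) atTop (𝓝 0) :=
  SmoothFn.tendsto_zero_of_memLp (memLp_convFn hw hw2 ρ)
    (by rw [smoothDeriv_convFn]; exact memLp_convFn hw hw2 _)

end Mollification

section Uniqueness

open Polynomial Filter Topology Asymptotics

/-- Smooth functions all of whose derivatives are `O(exp (-δ |t|))` at `±∞`; they can be integrated
by parts without boundary terms. -/
def ExpDecay (δ : ℝ) (f : SmoothFn) : Prop :=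
  ∀ Q, diffOp Q f =O[atBot] (fun t => Real.exp (δ * t)) ∧
    diffOp Q f =O[atTop] (fun t => Real.exp (-δ * t))

namespace ExpDecay

variable {δ : ℝ} {f g : SmoothFn}

theorem diffOp (hf : ExpDecay δ f) (P : ℂ[X]) : ExpDecay δ (diffOp P f) :=
  fun Q => by simpa only [diffOp_mul] using hf (Q * P)

theorem conjFn (hf : ExpDecay δ f) : ExpDecay δ (conjFn f) := fun Q => by
  rw [diffOp_conjFn]
  have hnorm t := norm_star (_root_.diffOp (Q.map (starRingEnd ℂ)) f t)
  have h := hf (Q.map (starRingEnd ℂ))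
  exact ⟨(h.1.norm_left.congr_left fun t => (hnorm t).symm).of_norm_left,
    (h.2.norm_left.congr_left fun t => (hnorm t).symm).of_norm_left⟩

theorem integrable_mul (hδ : 0 < δ) (hf : ExpDecay δ f) (hg : ExpDecay δ g) :
    Integrable fun t => f t * g t := by
  have hf1 := hf 1
  have hg1 := hg 1
  simp only [diffOp_one] at hf1 hg1
  refine (f.continuous.mul g.continuous).locallyIntegrable.integrable_of_isBigO_atBot_atTop
    (hf1.1.mul hg1.1) ?_ (hf1.2.mul hg1.2) ?_
  · simp only [← Real.exp_add, ← add_mul]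
    exact ⟨Set.Iic 0, Iic_mem_atBot 0, integrableOn_exp_mul_Iic (by linarith) 0⟩
  · simp only [← Real.exp_add, ← add_mul]
    exact ⟨Set.Ioi 0, Ioi_mem_atTop 0, integrableOn_exp_mul_Ioi (by linarith) 0⟩

theorem integral_diffOp_mul (hδ : 0 < δ) (hf : ExpDecay δ f) (hg : ExpDecay δ g) (P : ℂ[X]) :
    ∫ t, _root_.diffOp P f t * g t = ∫ t, f t * _root_.diffOp (P.comp (-X)) g t :=
  integral_diffOp_mul_of_integrable P fun Q R => integrable_mul hδ (hf.diffOp Q) (hg.diffOp R)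

end ExpDecay

variable {w : ℝ → ℂ}

/-- The weighted mollification `exp (-z t) (w * (exp (z s) ρ)) = (exp (-z s) w) * ρ`, which commutes
with differential operators. -/
def mollify (z : ℂ) (hw : LocallyIntegrable w volume) (ρ : TestFn) : SmoothFn :=
  expFn (-z) * convFn hw (expFn z • ρ)

theorem mollify_apply (z : ℂ) (hw : LocallyIntegrable w volume) (ρ : TestFn) (t : ℝ) :
    mollify z hw ρ t = ∫ s, w s * (expFn (-z) s * ρ (t - s)) := by
  rw [mollify, SmoothFn.coe_mul, convFn_apply, ← integral_const_mul]
  congr 1 with s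
  have hexp : expFn (-z) t * expFn z (t - s) = expFn (-z) s := by
    simp only [expFn_apply, ← Complex.exp_add]
    congr 1
    push_cast
    ring
  rw [← hexp, TestFn.coe_smoothFn_smul]
  ring

theorem diffOp_mollify (z : ℂ) (hw : LocallyIntegrable w volume) (ρ : TestFn) (P : ℂ[X]) :
    diffOp P (mollify z hw ρ) = mollify z hw (testOp P ρ) := by
  have hcomm : testOp (P.comp (X + C (-z))) (expFn z • ρ) = expFn z • testOp P ρ :=
    Subtype.ext <| by
      change diffOp _ (expFn z * ρ) = expFn z * diffOp P ρ
      rw [diffOp_expFn_mul, comp_assoc]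
      simp
  rw [mollify, diffOp_expFn_mul, diffOp_convFn, hcomm, mollify]

theorem exp_mul_norm_mollify (a : ℝ) (hw : LocallyIntegrable w volume) (ρ : TestFn) (t : ℝ) :
    Real.exp (a * t) * ‖mollify a hw ρ t‖ = ‖convFn hw (expFn a • ρ) t‖ := by
  rw [mollify, SmoothFn.coe_mul, norm_expFn_mul, ← mul_assoc, ← Real.exp_add]
  simp

theorem tendsto_exp_mul_mollify (a : ℝ) (hw : LocallyIntegrable w volume) (hw2 : MemLp w 2)
    (ρ : TestFn) :
    Tendsto (fun t => Real.exp (a * t) * ‖mollify a hw ρ t‖) atBot (𝓝 0) ∧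
      Tendsto (fun t => Real.exp (a * t) * ‖mollify a hw ρ t‖) atTop (𝓝 0) := by
  have h := tendsto_convFn hw hw2 (expFn a • ρ)
  simp only [exp_mul_norm_mollify]
  exact ⟨tendsto_zero_iff_norm_tendsto_zero.1 h.1, tendsto_zero_iff_norm_tendsto_zero.1 h.2⟩

theorem mollify_isBigO (a : ℝ) (hw : LocallyIntegrable w volume) (hw2 : MemLp w 2) (ρ : TestFn) :
    mollify a hw ρ =O[atBot] (fun t => Real.exp (-a * t)) ∧
      mollify a hw ρ =O[atTop] (fun t => Real.exp (-a * t)) := by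
  have hle t (ht : Real.exp (a * t) * ‖mollify a hw ρ t‖ < 1) :
      ‖mollify a hw ρ t‖ ≤ 1 * ‖Real.exp (-a * t)‖ := by
    rw [one_mul, Real.norm_eq_abs, Real.abs_exp, neg_mul, Real.exp_neg]
    exact (le_inv_mul_iff₀ (Real.exp_pos _)).2 ht.le |>.trans_eq (mul_one _)
  have h := tendsto_exp_mul_mollify a hw hw2 ρ
  exact ⟨.of_bound 1 ((h.1.eventually_lt_const one_pos).mono hle),
    .of_bound 1 ((h.2.eventually_lt_const one_pos).mono hle)⟩

theorem isBigO_exp_mul_atTop {a b : ℝ} (h : a ≤ b) :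
    (fun t => Real.exp (a * t)) =O[atTop] fun t => Real.exp (b * t) := by
  refine IsBigO.of_bound 1 ((eventually_ge_atTop (0 : ℝ)).mono fun t ht => ?_)
  simpa using mul_le_mul_of_nonneg_right h ht

theorem isBigO_exp_mul_atBot {a b : ℝ} (h : b ≤ a) :
    (fun t => Real.exp (a * t)) =O[atBot] fun t => Real.exp (b * t) := by
  refine IsBigO.of_bound 1 ((eventually_le_atBot (0 : ℝ)).mono fun t ht => ?_)
  simpa using mul_le_mul_of_nonpos_right h ht

/-- The weak equation `P(∂)(exp (-κ t) w) = ν exp (κ t) w` on the line, for an even polynomial `P`.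
It is the radial form of `((-Δ)^k + c|x|^{-2k}) u = ν u` with `κ = k`. -/
def WeakSolution (P : ℂ[X]) (κ : ℝ) (ν : ℂ) (w : ℝ → ℂ) : Prop :=
  ∀ φ : TestFn, ∫ t, w t * (expFn (-κ) t * diffOp P φ t) = ν * ∫ t, w t * (expFn κ t * φ t)

variable {P : ℂ[X]} {κ : ℝ} {ν : ℂ}

theorem WeakSolution.diffOp_mollify (h : WeakSolution P κ ν w) (heven : P.comp (-X) = P)
    (hw : LocallyIntegrable w volume) (ρ : TestFn) :
    diffOp P (mollify κ hw ρ) = ν • mollify (-κ) hw ρ := by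
  refine SmoothFn.ext fun t => ?_
  have htest := h (reflectFn t ρ)
  rw [diffOp_reflectFn, heven] at htest
  simp only [reflectFn_apply] at htest
  rw [_root_.diffOp_mollify, SmoothFn.coe_smul, mollify_apply, mollify_apply, htest, neg_neg]

theorem WeakSolution.expDecay_mollify (h : WeakSolution P κ ν w) (hP0 : P ≠ 0)
    (heven : P.comp (-X) = P) (hroot : ∀ z, P.IsRoot z → κ ≤ |z.re|) (hκ : 0 < κ)
    (hw : LocallyIntegrable w volume) (hw2 : MemLp w 2) (ρ : TestFn) :
    ExpDecay (κ / 2) (mollify κ hw ρ) := by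
  intro Q
  rw [_root_.diffOp_mollify]
  refine ⟨isBigO_exp_of_diffOp hP0 hroot (abs_lt.2 ⟨by linarith, by linarith⟩) (fun R => ?_) ?_,
    (mollify_isBigO κ hw hw2 _).2.trans (isBigO_exp_mul_atTop (by linarith))⟩
  · rw [_root_.diffOp_mollify]
    exact (tendsto_exp_mul_mollify κ hw hw2 _).1
  · have hdecay := (mollify_isBigO (-κ) hw hw2 (testOp Q ρ)).1
    rw [h.diffOp_mollify heven]
    push_cast at hdecay
    exact (hdecay.trans (isBigO_exp_mul_atBot (by linarith))).const_mul_left ν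

theorem expFn_mul_star_expFn_neg (a : ℝ) (t : ℝ) : expFn a t * star (expFn (-a) t) = 1 := by
  simp [expFn_apply, ← Complex.exp_conj, ← Complex.exp_add]

theorem mollify_neg_mul_star_mollify (a : ℝ) (hw : LocallyIntegrable w volume) (ρ : TestFn)
    (t : ℝ) :
    mollify (-a) hw ρ t * star (mollify a hw ρ t) =
      convFn hw (expFn (-a) • ρ) t * star (convFn hw (expFn a • ρ) t) := by
  rw [mollify, mollify, SmoothFn.coe_mul, SmoothFn.coe_mul, star_mul', neg_neg,
    mul_mul_mul_comm, expFn_mul_star_expFn_neg, one_mul]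

/- Pairing the equation for `f = mollify κ w ρ` with `f` and moving the real even operator `P(∂)` to
the other factor gives `ν ∫ A star B = -ν ∫ B star A`. -/
theorem WeakSolution.re_integral_convFn_eq_zero (h : WeakSolution P κ ν w) (hP0 : P ≠ 0)
    (heven : P.comp (-X) = P) (hreal : P.map (starRingEnd ℂ) = P)
    (hroot : ∀ z, P.IsRoot z → κ ≤ |z.re|) (hκ : 0 < κ) (hν : star ν = -ν) (hν0 : ν ≠ 0)
    (hw : LocallyIntegrable w volume) (hw2 : MemLp w 2) (ρ : TestFn) :
    (∫ t, convFn hw (expFn (-κ) • ρ) t * star (convFn hw (expFn κ • ρ) t)).re = 0 := by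
  set I := ∫ t, convFn hw (expFn (-κ) • ρ) t * star (convFn hw (expFn κ • ρ) t)
  have hI : I = ∫ t, mollify (-κ) hw ρ t * star (mollify κ hw ρ t) := by
    simp only [mollify_neg_mul_star_mollify, I]
  have hdecay := h.expDecay_mollify hP0 heven hroot hκ hw hw2 ρ
  have hparts := hdecay.integral_diffOp_mul (half_pos hκ) hdecay.conjFn P
  rw [heven, diffOp_conjFn, hreal, h.diffOp_mollify heven] at hparts
  have hleft : ∫ t, (ν • mollify (-κ) hw ρ) t * conjFn (mollify κ hw ρ) t = ν * I := by
    simp only [hI, conjFn_apply, SmoothFn.coe_smul, mul_assoc, integral_const_mul]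
  have hright : ∫ t, mollify κ hw ρ t * conjFn (ν • mollify (-κ) hw ρ) t = -ν * star I := by
    rw [hI, RCLike.star_def, ← integral_conj, ← integral_const_mul]
    congr 1 with t
    simp only [conjFn_apply, SmoothFn.coe_smul, star_mul', hν, ← RCLike.star_def, star_star]
    ring
  rw [hleft, hright, neg_mul, ← mul_neg, mul_right_inj' hν0] at hparts
  have hre := congrArg Complex.re hparts
  simp only [RCLike.star_def, Complex.neg_re, Complex.conj_re] at hre
  linarith

end Uniqueness

section MollificationLimit

open Polynomial Filter Topology
open scoped ENNReal

theorem eLpNorm_add_eq_eLpNorm_sub {α : Type*} [MeasurableSpace α] {μ : Measure α} {f g : α → ℂ}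
    (hf : MemLp f 2 μ) (hg : MemLp g 2 μ) (h : (∫ a, f a * star (g a) ∂μ).re = 0) :
    eLpNorm (f + g) 2 μ = eLpNorm (f - g) 2 μ := by
  have hinner : (inner ℂ (hg.toLp g) (hf.toLp f)).re = 0 := by
    rw [L2.inner_def, ← h]
    congr 1
    refine integral_congr_ae ?_
    filter_upwards [hf.coeFn_toLp, hg.coeFn_toLp] with a hfa hga
    rw [hfa, hga]
    rfl
  rw [← Lp.enorm_toLp (hf.add hg), ← Lp.enorm_toLp (hf.sub hg), hf.toLp_add hg, hf.toLp_sub hg,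
    enorm_eq_iff_norm_eq, ← sq_eq_sq₀ (norm_nonneg _) (norm_nonneg _), norm_add_sq (𝕜 := ℂ),
    norm_sub_sq (𝕜 := ℂ), inner_re_symm]
  simp [hinner]

/-- A normalised bump function at the origin as a test function; as its support shrinks it becomes
an approximate identity for `convFn`. -/
def bumpFn (φ : ContDiffBump (0 : ℝ)) : TestFn :=
  ⟨⟨fun t => (φ.normed volume t : ℂ),
    mem_smoothAlgebra.2 (Complex.ofRealCLM.contDiff.comp φ.contDiff_normed)⟩,
    mem_testIdeal.2 ((φ.hasCompactSupport_normed (μ := volume)).comp_left Complex.ofReal_zero)⟩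

theorem bumpFn_apply (φ : ContDiffBump (0 : ℝ)) (t : ℝ) :
    bumpFn φ t = (φ.normed volume t : ℂ) := rfl

theorem lintegral_enorm_bumpFn (φ : ContDiffBump (0 : ℝ)) : ∫⁻ t, ‖bumpFn φ t‖ₑ = 1 := by
  have hreal t : ‖bumpFn φ t‖ₑ = ENNReal.ofReal (φ.normed volume t) := by
    rw [bumpFn_apply, ← ofReal_norm, Complex.norm_real, Real.norm_of_nonneg (φ.nonneg_normed t)]
  simp only [hreal]
  rw [← ofReal_integral_eq_lintegral_ofReal φ.integrable_normed (.of_forall φ.nonneg_normed),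
    φ.integral_normed, ENNReal.ofReal_one]

variable {w : ℝ → ℂ}

theorem eLpNorm_convFn_smul_bumpFn_le (hw : LocallyIntegrable w volume) {g : SmoothFn}
    {φ : ContDiffBump (0 : ℝ)} {ε : ℝ≥0∞} (hg : ∀ s ∈ Metric.ball 0 φ.rOut, ‖g s‖ₑ ≤ ε) :
    eLpNorm (convFn hw (g • bumpFn φ)) 2 ≤ ε * eLpNorm w 2 := by
  refine (eLpNorm_convFn_le hw _).trans (mul_le_mul_left ?_ _)
  have hle s : ‖(g • bumpFn φ) s‖ₑ ≤ ε * ‖bumpFn φ s‖ₑ := by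
    rw [TestFn.coe_smoothFn_smul, enorm_mul]
    by_cases hs : s ∈ Metric.ball 0 φ.rOut
    · gcongr
      exact hg s hs
    · rw [← φ.support_normed_eq (μ := volume), Function.notMem_support] at hs
      simp [bumpFn_apply, hs]
  calc ∫⁻ s, ‖(g • bumpFn φ) s‖ₑ ≤ ∫⁻ s, ε * ‖bumpFn φ s‖ₑ := lintegral_mono hle
    _ = ε := by
      rw [lintegral_const_mul _ (bumpFn φ).1.continuous.enorm.measurable,
        lintegral_enorm_bumpFn, mul_one]

theorem tendsto_eLpNorm_convFn_smul_bumpFn (hw : LocallyIntegrable w volume) (hw2 : MemLp w 2)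
    {g : SmoothFn} (hg : g 0 = 0) {ι : Type*} {l : Filter ι} {φ : ι → ContDiffBump (0 : ℝ)}
    (hφ : Tendsto (fun i => (φ i).rOut) l (𝓝 0)) :
    Tendsto (fun i => eLpNorm (convFn hw (g • bumpFn (φ i))) 2) l (𝓝 0) := by
  refine ENNReal.tendsto_nhds_zero.2 fun ε hε => ?_
  obtain ⟨η, hη, hηε⟩ := ENNReal.exists_nnreal_pos_mul_lt hw2.2.ne hε.ne'
  have hsmall : ∀ᶠ s in 𝓝 (0 : ℝ), ‖g s‖ < η :=
    g.continuous.norm.continuousAt.eventually_lt_const (by simpa [hg] using hη)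
  obtain ⟨r, hr, hball⟩ := Metric.eventually_nhds_iff_ball.1 hsmall
  filter_upwards [hφ.eventually_lt_const hr] with i hi
  refine (eLpNorm_convFn_smul_bumpFn_le hw fun s hs => ?_).trans hηε.le
  exact enorm_le_coe.2 (hball s (Metric.ball_subset_ball hi.le hs)).le

theorem ae_tendsto_convFn_bumpFn (hw : LocallyIntegrable w volume) {ι : Type*} {l : Filter ι}
    {φ : ι → ContDiffBump (0 : ℝ)} {K : ℝ} (hφ : Tendsto (fun i => (φ i).rOut) l (𝓝 0))
    (hK : ∀ᶠ i in l, (φ i).rOut ≤ K * (φ i).rIn) :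
    ∀ᵐ t, Tendsto (fun i => convFn hw (bumpFn (φ i)) t) l (𝓝 (w t)) := by
  filter_upwards [ContDiffBump.ae_convolution_tendsto_right_of_locallyIntegrable hφ hK hw]
    with t ht
  refine ht.congr fun i => ?_
  rw [convolution_lsmul_swap, convFn_apply]
  congr 1 with s
  rw [bumpFn_apply, mul_comm, Complex.real_smul]

theorem WeakSolution.eLpNorm_convFn_le {P : ℂ[X]} {κ : ℝ} {ν : ℂ} (h : WeakSolution P κ ν w)
    (hP0 : P ≠ 0) (heven : P.comp (-X) = P) (hreal : P.map (starRingEnd ℂ) = P)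
    (hroot : ∀ z, P.IsRoot z → κ ≤ |z.re|) (hκ : 0 < κ) (hν : star ν = -ν) (hν0 : ν ≠ 0)
    (hw : LocallyIntegrable w volume) (hw2 : MemLp w 2) (ρ : TestFn) :
    eLpNorm (convFn hw ρ) 2 ≤
      ‖(1 / 2 : ℂ)‖ₑ * eLpNorm (convFn hw ((expFn (-κ) - expFn κ) • ρ)) 2 +
        eLpNorm (convFn hw ((1 - (1 / 2 : ℂ) • (expFn (-κ) + expFn κ)) • ρ)) 2 := by
  set A := convFn hw (expFn (-κ) • ρ)
  set B := convFn hw (expFn κ • ρ)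
  set R := convFn hw ((1 - (1 / 2 : ℂ) • (expFn (-κ) + expFn κ)) • ρ)
  have hdiff : convFn hw ((expFn (-κ) - expFn κ) • ρ) = A - B := by
    rw [← map_sub]
    congr 1
    exact TestFn.ext fun t => sub_mul _ _ _
  have hsplit : convFn hw ρ = (1 / 2 : ℂ) • (A + B) + R := by
    rw [← map_add, ← map_smul, ← map_add]
    congr 1
    refine TestFn.ext fun t => ?_
    change ρ t = 1 / 2 * (expFn (-κ) t * ρ t + expFn κ t * ρ t)
      + (1 - 1 / 2 * (expFn (-κ) t + expFn κ t)) * ρ t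
    ring
  have hnorm : eLpNorm (A + B : SmoothFn) 2 = eLpNorm (A - B : SmoothFn) 2 :=
    eLpNorm_add_eq_eLpNorm_sub (memLp_convFn hw hw2 _) (memLp_convFn hw hw2 _)
      (h.re_integral_convFn_eq_zero hP0 heven hreal hroot hκ hν hν0 hw hw2 ρ)
  rw [hsplit, hdiff, ← hnorm, ← eLpNorm_const_smul]
  exact eLpNorm_add_le ((1 / 2 : ℂ) • (A + B)).continuous.aestronglyMeasurable
    R.continuous.aestronglyMeasurable one_le_two

theorem WeakSolution.ae_eq_zero {P : ℂ[X]} {κ : ℝ} {ν : ℂ} (h : WeakSolution P κ ν w)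
    (hP0 : P ≠ 0) (heven : P.comp (-X) = P) (hreal : P.map (starRingEnd ℂ) = P)
    (hroot : ∀ z, P.IsRoot z → κ ≤ |z.re|) (hκ : 0 < κ) (hν : star ν = -ν) (hν0 : ν ≠ 0)
    (hw2 : MemLp w 2) : w =ᵐ[volume] 0 := by
  have hw : LocallyIntegrable w volume := hw2.locallyIntegrable one_le_two
  let φ (j : ℕ) : ContDiffBump (0 : ℝ) :=
    ⟨1 / (j + 1), 2 * (1 / (j + 1)), by positivity, lt_two_mul_self (by positivity)⟩
  have hφ : Tendsto (fun j => (φ j).rOut) atTop (𝓝 0) := by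
    simpa only [mul_zero] using tendsto_one_div_add_atTop_nhds_zero_nat.const_mul (2 : ℝ)
  have hlim : Tendsto (fun j => eLpNorm (convFn hw (bumpFn (φ j))) 2) atTop (𝓝 0) := by
    refine tendsto_of_tendsto_of_tendsto_of_le_of_le tendsto_const_nhds ?_ (fun _ => zero_le)
      fun j => h.eLpNorm_convFn_le hP0 heven hreal hroot hκ hν hν0 hw hw2 (bumpFn (φ j))
    have hdiff := tendsto_eLpNorm_convFn_smul_bumpFn hw hw2 (g := expFn (-κ) - expFn κ)
      (by simp [expFn_apply]) hφ
    have hrest := tendsto_eLpNorm_convFn_smul_bumpFn hw hw2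
      (g := 1 - (1 / 2 : ℂ) • (expFn (-κ) + expFn κ)) (by simp [expFn_apply]; norm_num) hφ
    have hsum :=
      (ENNReal.Tendsto.const_mul hdiff (.inr (enorm_ne_top (x := (1 / 2 : ℂ))))).add hrest
    rwa [mul_zero, add_zero] at hsum
  refine (eLpNorm_eq_zero_iff hw2.1 two_ne_zero).1 (nonpos_iff_eq_zero.1 ?_)
  exact (Lp.eLpNorm_lim_le_liminf_eLpNorm
    (fun j => (convFn hw (bumpFn (φ j))).continuous.aestronglyMeasurable) w
    (ae_tendsto_convFn_bumpFn hw hφ (.of_forall fun _ => le_rfl))).trans_eq hlim.liminf_eq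

end MollificationLimit

section CharacteristicPolynomial

open Polynomial

/-- The characteristic polynomial of the radial part of `(-Δ)^k + c|x|^(-2k)` in logarithmic
coordinates, on a space of spherical harmonics with angular parameter `m`: the operator acts on
`|x| ^ (k - n / 2 + z)` times such a harmonic as `|x| ^ (-2 * k)` times this polynomial at `z`. -/
def radialPoly (k : ℕ) (m c : ℝ) : ℂ[X] :=
  ∏ j ∈ Finset.range k, (C (m : ℂ) - (X + C ((k : ℂ) - 1 - 2 * j)) ^ 2) + C (c : ℂ)

theorem natDegree_radialPoly (k : ℕ) (m c : ℝ) : (radialPoly k m c).natDegree = 2 * k := by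
  have hfactor (a : ℂ) : (C (m : ℂ) - (X + C a) ^ 2).natDegree = 2 := by compute_degree!
  rw [radialPoly, natDegree_add_C, natDegree_prod _ _ fun j _ =>
    ne_zero_of_natDegree_gt (n := 0) (by rw [hfactor]; norm_num)]
  simp only [hfactor, Finset.sum_const, Finset.card_range, smul_eq_mul, mul_comm]

theorem radialPoly_ne_zero {k : ℕ} (hk : k ≠ 0) (m c : ℝ) : radialPoly k m c ≠ 0 := by
  refine ne_zero_of_natDegree_gt (n := 0) ?_
  rw [natDegree_radialPoly]
  omega

theorem radialPoly_comp_neg_X (k : ℕ) (m c : ℝ) :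
    (radialPoly k m c).comp (-X) = radialPoly k m c := by
  simp only [radialPoly, add_comp, prod_comp, C_comp, sub_comp, pow_comp, X_comp]
  rw [← Finset.prod_range_reflect]
  refine congrArg (· + C (c : ℂ)) (Finset.prod_congr rfl fun j hj => ?_)
  have hshift : (k : ℂ) - 1 - 2 * (k - 1 - j : ℕ) = -(k - 1 - 2 * j) := by
    rw [Nat.sub_sub, Nat.cast_sub (by rw [Finset.mem_range] at hj; omega)]
    push_cast
    ring
  rw [hshift, C_neg, ← neg_add, neg_sq]

theorem map_conj_radialPoly (k : ℕ) (m c : ℝ) :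
    (radialPoly k m c).map (starRingEnd ℂ) = radialPoly k m c := by
  simp [radialPoly, Polynomial.map_prod, Complex.conj_ofNat]

theorem abs_re_lt_iff {κ : ℝ} (hκ : 0 < κ) {z : ℂ} :
    |z.re| < κ ↔ (z ^ 2).im ^ 2 < 4 * κ ^ 2 * (κ ^ 2 - (z ^ 2).re) := by
  have hfactor : 4 * κ ^ 2 * (κ ^ 2 - (z ^ 2).re) - (z ^ 2).im ^ 2 =
      4 * (κ ^ 2 + z.im ^ 2) * (κ ^ 2 - z.re ^ 2) := by
    rw [sq z, Complex.mul_re, Complex.mul_im]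
    ring
  rw [← sub_pos (b := (z ^ 2).im ^ 2), hfactor, mul_pos_iff_of_pos_left (by positivity), sub_pos,
    sq_lt_sq, abs_of_pos hκ]

/-- The real cubic with `radialPoly 3 m c = c - cubicFn m (X ^ 2)`. -/
def cubicFn (m w : ℝ) : ℝ :=
  w ^ 3 - (8 + 3 * m) * w ^ 2 + (3 * m ^ 2 + 16) * w - m * (4 - m) ^ 2

/-- The derivative of `cubicFn m`. A nonreal root `u + i * v` of `cubicFn m w = c` satisfies
`v ^ 2 = cubicFnDeriv m u`, and the third root is then `8 + 3 * m - 2 * u`. -/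
def cubicFnDeriv (m u : ℝ) : ℝ :=
  3 * u ^ 2 - 2 * (8 + 3 * m) * u + (3 * m ^ 2 + 16)

theorem continuous_cubicFn (m : ℝ) : Continuous (cubicFn m) := by
  unfold cubicFn; fun_prop

theorem eval_radialPoly_three (m c : ℝ) (z : ℂ) : (radialPoly 3 m c).eval z =
    ⟨c - (cubicFn m (z ^ 2).re - (z ^ 2).im ^ 2 * (3 * (z ^ 2).re - (8 + 3 * m))),
      (z ^ 2).im * ((z ^ 2).im ^ 2 - cubicFnDeriv m (z ^ 2).re)⟩ := by
  have hcubic : (radialPoly 3 m c).eval z = (c : ℂ) - ((z ^ 2) ^ 3 -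
      (8 + 3 * (m : ℂ)) * (z ^ 2) ^ 2 + (3 * (m : ℂ) ^ 2 + 16) * z ^ 2 -
      (m : ℂ) * (4 - m) ^ 2) := by
    simp only [radialPoly, Finset.prod_range_succ, Finset.prod_range_zero, eval_add, eval_mul,
      eval_sub, eval_pow, eval_X, eval_C, eval_one]
    push_cast
    ring
  rw [hcubic]
  apply Complex.ext
  · simp [pow_succ, cubicFn]; ring
  · simp [pow_succ, cubicFnDeriv]; ring

theorem isRoot_radialPoly_three_iff {m c : ℝ} {z : ℂ} : (radialPoly 3 m c).IsRoot z ↔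
    ((z ^ 2).im = 0 ∧ c = cubicFn m (z ^ 2).re) ∨
    ((z ^ 2).im ^ 2 = cubicFnDeriv m (z ^ 2).re ∧ c = cubicFn m (8 + 3 * m - 2 * (z ^ 2).re)) := by
  rw [IsRoot.def, eval_radialPoly_three, Complex.ext_iff]
  simp only [Complex.zero_re, Complex.zero_im, mul_eq_zero, sub_eq_zero]
  rw [and_comm, or_and_right]
  refine or_congr (and_congr_right fun him => by rw [him]; simp) (and_congr_right fun him => ?_)
  rw [him, show cubicFn m (z ^ 2).re - cubicFnDeriv m (z ^ 2).re *
    (3 * (z ^ 2).re - (8 + 3 * m)) = cubicFn m (8 + 3 * m - 2 * (z ^ 2).re) by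
      unfold cubicFn cubicFnDeriv; ring]

theorem cubicFnDeriv_nonneg_iff {m r u : ℝ} (hr : r ^ 2 = 1 + 3 * m) (hr0 : 0 ≤ r) :
    0 ≤ cubicFnDeriv m u ↔ 4 * r ≤ |3 * u - (3 * m + 8)| := by
  rw [← abs_of_nonneg (by positivity : 0 ≤ 4 * r), ← sq_le_sq,
    show (4 * r) ^ 2 = (3 * u - (3 * m + 8)) ^ 2 - 3 * cubicFnDeriv m u by
      unfold cubicFnDeriv; linear_combination 16 * hr]
  constructor <;> intro h <;> linarith

theorem cubicFnDeriv_lt_iff {m s u : ℝ} (hs : s ^ 2 = 256 - 15 * m) (hs0 : 0 ≤ s) :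
    cubicFnDeriv m u < 4 * 3 ^ 2 * (3 ^ 2 - u) ↔ |3 * u - (3 * m - 10)| < 2 * s := by
  rw [← abs_of_nonneg (by positivity : 0 ≤ 2 * s), ← sq_lt_sq,
    show (2 * s) ^ 2 = (3 * u - (3 * m - 10)) ^ 2 - 3 * cubicFnDeriv m u +
      3 * (4 * 3 ^ 2 * (3 ^ 2 - u)) by unfold cubicFnDeriv; linear_combination 4 * hs]
  constructor <;> intro h <;> linarith

theorem exists_cubicFn_le {m : ℝ} (hm : 0 ≤ m) (c w₀ : ℝ) : ∃ w ≤ w₀, cubicFn m w ≤ c := by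
  refine ⟨min w₀ (-|c|), min_le_left _ _, ?_⟩
  set w := min w₀ (-|c|)
  have hw0 : w ≤ 0 := (min_le_right _ _).trans (by simp)
  have hwc : w ≤ c := (min_le_right _ _).trans (neg_abs_le c)
  have hcube : w ^ 3 ≤ 0 := by nlinarith [sq_nonneg w]
  have hsq : 0 ≤ (8 + 3 * m) * w ^ 2 := by positivity
  have hlin : (3 * m ^ 2 + 16) * w ≤ w := by nlinarith [sq_nonneg m]
  have hconst : 0 ≤ m * (4 - m) ^ 2 := by positivity
  unfold cubicFn
  linarith

theorem exists_isRoot_of_le_cubicFn {m c w₀ : ℝ} (hm : 0 ≤ m) (hw : w₀ < 9)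
    (h : c ≤ cubicFn m w₀) : ∃ z, (radialPoly 3 m c).IsRoot z ∧ |z.re| < 3 := by
  obtain ⟨w₁, hw₁, hc₁⟩ := exists_cubicFn_le hm c w₀
  obtain ⟨w, hw', rfl⟩ :=
    intermediate_value_Icc hw₁ (continuous_cubicFn m).continuousOn ⟨hc₁, h⟩
  obtain ⟨z, hz⟩ := IsAlgClosed.exists_pow_nat_eq (w : ℂ) (n := 2) (by norm_num)
  refine ⟨z, isRoot_radialPoly_three_iff.2 (Or.inl ?_), (abs_re_lt_iff (by norm_num)).2 ?_⟩
  · simp [hz]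
  · rw [hz, Complex.ofReal_im, Complex.ofReal_re]
    linarith [hw'.2]

theorem exists_isRoot_of_lt_cubicFn_nine {m c : ℝ} (hm : 0 ≤ m)
    (h : c < cubicFn m 9) : ∃ z, (radialPoly 3 m c).IsRoot z ∧ |z.re| < 3 := by
  have hnear : ∀ᶠ w in nhdsWithin 9 (Set.Iio 9), c < cubicFn m w :=
    ((continuous_cubicFn m).continuousAt.eventually_const_lt h).filter_mono nhdsWithin_le_nhds
  obtain ⟨w, hw, hw9⟩ := (hnear.and self_mem_nhdsWithin).exists
  exact exists_isRoot_of_le_cubicFn hm hw9 hw.le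

theorem exists_isRoot_of_cubicFnDeriv_lt {m u : ℝ} (hu : 0 ≤ cubicFnDeriv m u)
    (hstrip : cubicFnDeriv m u < 4 * 3 ^ 2 * (3 ^ 2 - u)) :
    ∃ z, (radialPoly 3 m (cubicFn m (8 + 3 * m - 2 * u))).IsRoot z ∧ |z.re| < 3 := by
  obtain ⟨z, hz⟩ := IsAlgClosed.exists_pow_nat_eq (⟨u, √(cubicFnDeriv m u)⟩ : ℂ) (n := 2)
    (by norm_num)
  refine ⟨z, isRoot_radialPoly_three_iff.2 (Or.inr ?_), (abs_re_lt_iff (by norm_num)).2 ?_⟩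
  · rw [hz]
    exact ⟨Real.sq_sqrt hu, rfl⟩
  · rwa [hz, Real.sq_sqrt hu]

/-- The critical coupling for angular parameter `m ≤ 49 / 4`: the value of `c` at which a
nonreal pair of roots of `cubicFn m w = c` meets the parabola `|Re √w| = 3`. -/
def criticalCoupling (m : ℝ) : ℝ :=
  512 / 27 * (952 - 63 * m + (62 - 3 * m) * √(256 - 15 * m))

theorem cubicFn_criticalPoint {m : ℝ} (hm : 15 * m ≤ 256) :
    cubicFn m ((44 + 3 * m + 4 * √(256 - 15 * m)) / 3) = criticalCoupling m := by
  have hs2 : √(256 - 15 * m) ^ 2 = 256 - 15 * m := Real.sq_sqrt (by linarith)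
  have hs3 : √(256 - 15 * m) ^ 3 = (256 - 15 * m) * √(256 - 15 * m) := by rw [pow_succ, hs2]
  unfold cubicFn criticalCoupling
  linear_combination (64 / 27) * hs3 + (64 : ℝ) * hs2

theorem cubicFn_reflect_localMax {m r : ℝ} (hr : r ^ 2 = 1 + 3 * m) :
    cubicFn m (8 + 3 * m - 2 * ((3 * m + 8 - 4 * r) / 3)) =
      cubicFn m ((3 * m + 8 - 4 * r) / 3) := by
  have hr3 : r ^ 3 = (1 + 3 * m) * r := by rw [pow_succ, hr]
  unfold cubicFn
  linear_combination (64 / 3) * hr3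

theorem half_seventeen_le_sqrt {m : ℝ} (hm : m ≤ 49 / 4) : 17 / 2 ≤ √(256 - 15 * m) :=
  Real.le_sqrt_of_sq_le (by linarith)

/- Between the local maximum `u₀` of `cubicFn m` and the real part `u₁` at which the nonreal roots
meet the boundary of the strip, the coupling `cubicFn m (8 + 3 * m - 2 * u)` takes every value
between `cubicFn m u₀` and `criticalCoupling m`; below `cubicFn m u₀` there are real roots. -/
theorem exists_isRoot_of_lt_criticalCoupling {m c : ℝ} (hm : 0 ≤ m) (hm' : m ≤ 49 / 4)
    (h : c < criticalCoupling m) : ∃ z, (radialPoly 3 m c).IsRoot z ∧ |z.re| < 3 := by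
  obtain ⟨r, hr2, hr1, hr7⟩ : ∃ r : ℝ, r ^ 2 = 1 + 3 * m ∧ 1 ≤ r ∧ 3 * m - 19 < 4 * r := by
    refine ⟨√(1 + 3 * m), Real.sq_sqrt (by linarith), Real.one_le_sqrt.2 (by linarith), ?_⟩
    nlinarith [Real.sq_sqrt (by linarith : 0 ≤ 1 + 3 * m), Real.sqrt_nonneg (1 + 3 * m)]
  have hr7' : r ≤ 7 := by nlinarith
  have hs2 : √(256 - 15 * m) ^ 2 = 256 - 15 * m := Real.sq_sqrt (by linarith)
  have hs := half_seventeen_le_sqrt hm'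
  have hcrit := cubicFn_criticalPoint (by linarith : 15 * m ≤ 256)
  set s := √(256 - 15 * m)
  set u₀ := (3 * m + 8 - 4 * r) / 3 with hu₀
  set u₁ := (3 * m - 10 - 2 * s) / 3 with hu₁
  rcases le_or_gt c (cubicFn m u₀) with hc | hc
  · exact exists_isRoot_of_le_cubicFn hm (by linarith) hc
  have hcrit' : cubicFn m (8 + 3 * m - 2 * u₁) = criticalCoupling m := by
    rw [← hcrit, hu₁]; congr 1; ring
  have hcont : ContinuousOn (fun u => cubicFn m (8 + 3 * m - 2 * u)) (Set.Icc u₁ u₀) :=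
    ((continuous_cubicFn m).comp (by fun_prop)).continuousOn
  obtain ⟨u, ⟨hu1, hu0⟩, rfl⟩ : c ∈ (fun u => cubicFn m (8 + 3 * m - 2 * u)) '' Set.Icc u₁ u₀ :=
    intermediate_value_Icc' (by linarith) hcont
      ⟨((cubicFn_reflect_localMax hr2).trans_lt hc).le, (h.trans_eq hcrit'.symm).le⟩
  have hu1' : u₁ < u := hu1.lt_of_ne fun he => h.ne (by rw [← hcrit', he])
  refine exists_isRoot_of_cubicFnDeriv_lt ((cubicFnDeriv_nonneg_iff hr2 (by linarith)).2 ?_)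
    ((cubicFnDeriv_lt_iff hs2 (by linarith)).2 (abs_lt.2 ⟨by linarith, by linarith⟩))
  rw [abs_of_nonpos (by linarith)]
  linarith

theorem cubicFn_lt_of_lt_nine {m w : ℝ} (hm : 0 ≤ m) (hw : w < 9) : cubicFn m w < 7488 := by
  rcases le_or_gt m w with hmw | hmw
  · calc cubicFn m w = (w - m) * ((w - m - 4) ^ 2 - 16 * m) := by unfold cubicFn; ring
      _ ≤ (w - m) * 25 := mul_le_mul_of_nonneg_left (by nlinarith) (by linarith)
      _ < 7488 := by linarith
  · calc cubicFn m w = (m - w) * (16 * w - (m - w - 4) ^ 2) := by unfold cubicFn; ring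
      _ ≤ (m - w) * (144 - (m - w - 4) ^ 2) :=
        mul_le_mul_of_nonneg_left (by linarith) (by linarith)
      _ < 7488 := by
        rcases le_or_gt (m - w) 16 with h16 | h16
        · nlinarith [sq_nonneg (m - w - 4)]
        · have : 144 - (m - w - 4) ^ 2 ≤ 0 := by nlinarith
          nlinarith

theorem criticalCoupling_antitoneOn : AntitoneOn criticalCoupling (Set.Iic (49 / 4)) := by
  intro m _ m' hm' hmm
  rw [Set.mem_Iic] at hm'
  have hsqrt : √(256 - 15 * m') ≤ √(256 - 15 * m) := Real.sqrt_le_sqrt (by linarith)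
  have hmul : (62 - 3 * m') * √(256 - 15 * m') ≤ (62 - 3 * m) * √(256 - 15 * m) :=
    mul_le_mul (by linarith) hsqrt (Real.sqrt_nonneg _) (by linarith)
  unfold criticalCoupling
  linarith

theorem le_criticalCoupling {m : ℝ} (hm : m ≤ 49 / 4) : 7488 ≤ criticalCoupling m := by
  refine le_trans (le_of_eq ?_) (criticalCoupling_antitoneOn hm Set.self_mem_Iic hm)
  unfold criticalCoupling
  rw [show (256 - 15 * (49 / 4) : ℝ) = (17 / 2) ^ 2 by norm_num, Real.sqrt_sq (by norm_num)]
  norm_num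

theorem cubicFn_lt_criticalCoupling {m u : ℝ} (hm : m ≤ 49 / 4)
    (hu : cubicFnDeriv m u < 4 * 3 ^ 2 * (3 ^ 2 - u)) :
    cubicFn m (8 + 3 * m - 2 * u) < criticalCoupling m := by
  have hs2 : √(256 - 15 * m) ^ 2 = 256 - 15 * m := Real.sq_sqrt (by linarith)
  have hs := half_seventeen_le_sqrt hm
  rw [cubicFnDeriv_lt_iff hs2 (by linarith), abs_lt] at hu
  rw [← cubicFn_criticalPoint (by linarith), ← sub_pos]
  set s := √(256 - 15 * m)
  have hfactor : cubicFn m ((44 + 3 * m + 4 * s) / 3) - cubicFn m (8 + 3 * m - 2 * u) =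
      2 * (u - (3 * m - 10 - 2 * s) / 3) *
        ((8 + 3 * m - 2 * u - (3 * m - 10 - 2 * s) / 3) ^ 2 +
          (324 - 12 * (3 * m - 10 - 2 * s))) := by
    unfold cubicFn
    linear_combination (16 / 9 * s - 8 / 3 * m + 80 / 9 + 8 / 3 * u) * hs2
  rw [hfactor]
  exact mul_pos (by linarith) (add_pos_of_nonneg_of_pos (sq_nonneg _) (by linarith))

theorem three_le_abs_re_of_criticalCoupling_le {m c : ℝ} {z : ℂ} (hm : 0 ≤ m) (hm' : m ≤ 49 / 4)
    (hc : criticalCoupling m ≤ c) (hz : (radialPoly 3 m c).IsRoot z) : 3 ≤ |z.re| := by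
  by_contra! hlt
  rw [abs_re_lt_iff (by norm_num)] at hlt
  have hre : (z ^ 2).re < 9 := by nlinarith [sq_nonneg (z ^ 2).im]
  obtain ⟨-, rfl⟩ | ⟨him, rfl⟩ := isRoot_radialPoly_three_iff.1 hz
  · linarith [cubicFn_lt_of_lt_nine hm hre, le_criticalCoupling hm']
  · rw [him] at hlt
    linarith [cubicFn_lt_criticalCoupling hm' hlt]

theorem exists_cubicFn_eq_of_sixteen_le {m c : ℝ} {z : ℂ} (hm : 16 ≤ m)
    (hz : (radialPoly 3 m c).IsRoot z) (hlt : |z.re| < 3) : ∃ u < 9, c = cubicFn m u := by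
  rw [abs_re_lt_iff (by norm_num)] at hlt
  have hre : (z ^ 2).re < 9 := by nlinarith [sq_nonneg (z ^ 2).im]
  obtain ⟨-, hc⟩ | ⟨him, -⟩ := isRoot_radialPoly_three_iff.1 hz
  · exact ⟨_, hre, hc⟩
  · rw [him, cubicFnDeriv] at hlt
    have : 0 < (10 - (z ^ 2).re) * (46 - 3 * (z ^ 2).re) := mul_pos (by linarith) (by linarith)
    have : 0 ≤ (m - 16) * (m + 16 - 2 * (z ^ 2).re) := mul_nonneg (by linarith) (by linarith)
    nlinarith

theorem cubicFn_nine (m : ℝ) : cubicFn m 9 = (1 - m) * (9 - m) * (25 - m) := by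
  unfold cubicFn; ring

theorem cubicFn_lt_cubicFn_nine {m u : ℝ} (hm : 16 ≤ m) (hu : u < 9) :
    cubicFn m u < cubicFn m 9 := by
  have hfactor : cubicFn m 9 - cubicFn m u =
      (9 - u) * ((9 - u) * (3 * m - 10 - u) + (3 * m ^ 2 - 54 * m + 115)) := by
    unfold cubicFn; ring
  rw [← sub_pos, hfactor]
  exact mul_pos (by linarith) (add_pos (mul_pos (by linarith) (by linarith)) (by nlinarith))

theorem three_le_abs_re_of_cubicFn_nine_le {m c : ℝ} {z : ℂ} (hm : 16 ≤ m)
    (hc : cubicFn m 9 ≤ c) (hz : (radialPoly 3 m c).IsRoot z) : 3 ≤ |z.re| := by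
  by_contra! hlt
  obtain ⟨u, hu, rfl⟩ := exists_cubicFn_eq_of_sixteen_le hm hz hlt
  exact (cubicFn_lt_cubicFn_nine hm hu).not_ge hc

theorem cubicFn_nine_antitoneOn : AntitoneOn (cubicFn · 9) (Set.Ici (81 / 4)) := by
  intro m hm m' _ hmm
  rw [Set.mem_Ici] at hm
  have hfactor : (1 - m) * (9 - m) * (25 - m) - (1 - m') * (9 - m') * (25 - m') =
      (m' - m) * (m' ^ 2 + m' * m + m ^ 2 - 35 * (m' + m) + 259) := by ring
  have hquad : 0 ≤ m' ^ 2 + m' * m + m ^ 2 - 35 * (m' + m) + 259 := by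
    nlinarith [mul_nonneg (sub_nonneg.2 hm) (sub_nonneg.2 hmm), sq_nonneg (m' - m)]
  simp only [cubicFn_nine]
  rw [← sub_nonneg, hfactor]
  exact mul_nonneg (sub_nonneg.2 hmm) hquad

end CharacteristicPolynomial

section CriticalConstant

/-- The angular exponent of spherical harmonics of degree `ℓ` in dimension `n`: the functions
`‖x‖ ^ (-(n - 2) / 2 ± angularExp n ℓ)` are the radial parts of the harmonic functions. -/
def angularExp (n ℓ : ℕ) : ℝ := (ℓ : ℝ) + ((n : ℝ) - 2) / 2

/-- The angular parameter of spherical harmonics of degree `ℓ` in dimension `n`: the eigenvalue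
`ℓ * (ℓ + n - 2)` of the spherical Laplacian, shifted by `((n - 2) / 2) ^ 2`. -/
def angularParam (n ℓ : ℕ) : ℝ := angularExp n ℓ ^ 2

/-- The smallest coupling constant `c` for which `(-Δ)³ + c|x|⁻⁶` is essentially self-adjoint
on `C₀^∞(ℝⁿ \ {0})`. -/
def criticalConstant (n : ℕ) : ℝ :=
  if n ≤ 9 then criticalCoupling (angularParam n 0) else cubicFn (angularParam n 0) 9

theorem angularParam_nonneg (n ℓ : ℕ) : 0 ≤ angularParam n ℓ := sq_nonneg _

theorem angularParam_zero_le {n : ℕ} (hn : n ≠ 0) (ℓ : ℕ) :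
    angularParam n 0 ≤ angularParam n ℓ := by
  rcases Nat.eq_zero_or_pos ℓ with rfl | hℓ
  · exact le_rfl
  have hdiff : angularParam n ℓ - angularParam n 0 = ℓ * (ℓ + n - 2) := by
    unfold angularParam angularExp; push_cast; ring
  have hle : (2 : ℝ) ≤ ℓ + n := by exact_mod_cast (by omega : 2 ≤ ℓ + n)
  rw [← sub_nonneg, hdiff]
  exact mul_nonneg ℓ.cast_nonneg (by linarith)

theorem angularParam_le {n ℓ : ℕ} (hn : n ≠ 0) (h : n + 2 * ℓ ≤ 9) :
    angularParam n ℓ ≤ 49 / 4 := by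
  have hlow : (1 : ℝ) ≤ n := by exact_mod_cast Nat.one_le_iff_ne_zero.2 hn
  have hhigh : (n : ℝ) + 2 * ℓ ≤ 9 := by exact_mod_cast h
  unfold angularParam angularExp
  nlinarith [hlow, hhigh, ℓ.cast_nonneg (α := ℝ)]

theorem le_angularParam {n ℓ j : ℕ} (h : j + 2 ≤ n + 2 * ℓ) :
    (j : ℝ) ^ 2 / 4 ≤ angularParam n ℓ := by
  have h' : (j : ℝ) + 2 ≤ n + 2 * ℓ := by exact_mod_cast h
  unfold angularParam angularExp
  nlinarith [h', j.cast_nonneg (α := ℝ)]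

theorem cubicFn_nine_angularParam_le {n : ℕ} (hn : 10 ≤ n) (ℓ : ℕ) :
    cubicFn (angularParam n ℓ) 9 ≤ cubicFn (angularParam n 0) 9 := by
  rcases Nat.eq_zero_or_pos ℓ with rfl | hℓ
  · exact le_rfl
  have hmono := angularParam_zero_le (by omega : n ≠ 0) ℓ
  obtain rfl | hn' := hn.eq_or_lt
  -- `angularParam 10 0 = 16` lies outside the range of monotonicity.
  · have hm : 25 ≤ angularParam 10 ℓ :=
      le_trans (by norm_num) (le_angularParam (j := 10) (by omega))
    refine (cubicFn_nine_antitoneOn (a := 25) ?_ ?_ hm).trans ?_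
    · norm_num
    · exact Set.mem_Ici.2 (by linarith)
    · norm_num [cubicFn_nine, angularParam, angularExp]
  · have hm : 81 / 4 ≤ angularParam n 0 :=
      le_trans (by norm_num) (le_angularParam (j := 9) (by omega))
    exact cubicFn_nine_antitoneOn hm (hm.trans hmono) hmono

theorem three_le_abs_re_of_criticalConstant_le {n : ℕ} (hn : n ≠ 0) {c : ℝ}
    (hc : criticalConstant n ≤ c) (ℓ : ℕ) {z : ℂ}
    (hz : (radialPoly 3 (angularParam n ℓ) c).IsRoot z) : 3 ≤ |z.re| := by
  unfold criticalConstant at hc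
  split_ifs at hc with hn9
  · have hm₀ : angularParam n 0 ≤ 49 / 4 := angularParam_le hn (by omega)
    rcases le_or_gt (n + 2 * ℓ) 9 with hℓ | hℓ
    · have hm := angularParam_le hn hℓ
      exact three_le_abs_re_of_criticalCoupling_le (angularParam_nonneg n ℓ) hm
        ((criticalCoupling_antitoneOn hm₀ hm (angularParam_zero_le hn ℓ)).trans hc) hz
    · have hm : 16 ≤ angularParam n ℓ :=
        le_trans (by norm_num) (le_angularParam (j := 8) (by omega))
      by_contra! hlt
      obtain ⟨u, hu, rfl⟩ := exists_cubicFn_eq_of_sixteen_le hm hz hlt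
      linarith [cubicFn_lt_of_lt_nine (angularParam_nonneg n ℓ) hu, le_criticalCoupling hm₀]
  · have hm : 16 ≤ angularParam n ℓ :=
      le_trans (by norm_num) (le_angularParam (j := 8) (by omega))
    exact three_le_abs_re_of_cubicFn_nine_le hm
      ((cubicFn_nine_angularParam_le (by omega) ℓ).trans hc) hz

theorem criticalConstant_le_of_three_le {n : ℕ} (hn : n ≠ 0) {c : ℝ}
    (h : ∀ z, (radialPoly 3 (angularParam n 0) c).IsRoot z → 3 ≤ |z.re|) :
    criticalConstant n ≤ c := by
  by_contra! hc
  obtain ⟨z, hz, hlt⟩ : ∃ z, (radialPoly 3 (angularParam n 0) c).IsRoot z ∧ |z.re| < 3 := by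
    unfold criticalConstant at hc
    split_ifs at hc with hn9
    · exact exists_isRoot_of_lt_criticalCoupling (angularParam_nonneg n 0)
        (angularParam_le hn (by omega)) hc
    · exact exists_isRoot_of_lt_cubicFn_nine (angularParam_nonneg n 0) hc
  exact (h z hz).not_gt hlt

theorem criticalCoupling_angularParam_zero (n : ℕ) :
    criticalCoupling (angularParam n 0) =
      (64 / 27) * (7112 + 504 * (n : ℝ) - 126 * (n : ℝ) ^ 2 +
        (236 + 12 * (n : ℝ) - 3 * (n : ℝ) ^ 2) *
          √(964 + 60 * (n : ℝ) - 15 * (n : ℝ) ^ 2)) := by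
  have hsqrt : √(964 + 60 * (n : ℝ) - 15 * (n : ℝ) ^ 2) = 2 * √(256 - 15 * angularParam n 0) := by
    rw [show (964 + 60 * (n : ℝ) - 15 * (n : ℝ) ^ 2) = 2 ^ 2 * (256 - 15 * angularParam n 0) by
      unfold angularParam angularExp; push_cast; ring, Real.sqrt_mul (by norm_num),
      Real.sqrt_sq (by norm_num)]
  rw [hsqrt, criticalCoupling]
  generalize √(256 - 15 * angularParam n 0) = s
  unfold angularParam angularExp
  push_cast
  ring

theorem cubicFn_nine_angularParam_zero (n : ℕ) :
    cubicFn (angularParam n 0) 9 =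
      -(((n : ℝ) + 8) * ((n : ℝ) + 4) * (n : ℝ) * ((n : ℝ) - 4) * ((n : ℝ) - 8) *
        ((n : ℝ) - 12)) / 64 := by
  rw [cubicFn_nine]
  unfold angularParam angularExp
  push_cast
  ring

theorem criticalConstant_le_iff {n : ℕ} {c : ℝ} :
    criticalConstant n ≤ c ↔
      (n ≤ 9 →
        (64 / 27) * (7112 + 504 * (n : ℝ) - 126 * (n : ℝ) ^ 2 +
          (236 + 12 * (n : ℝ) - 3 * (n : ℝ) ^ 2) *
            √(964 + 60 * (n : ℝ) - 15 * (n : ℝ) ^ 2)) ≤ c) ∧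
      (10 ≤ n →
        -(((n : ℝ) + 8) * ((n : ℝ) + 4) * (n : ℝ) * ((n : ℝ) - 4) * ((n : ℝ) - 8) *
          ((n : ℝ) - 12)) / 64 ≤ c) := by
  rw [← criticalCoupling_angularParam_zero, ← cubicFn_nine_angularParam_zero, criticalConstant]
  split_ifs with hn
  · simp [hn, show ¬10 ≤ n by omega]
  · simp [hn, show 10 ≤ n by omega]

end CriticalConstant

section EuclideanTestFunctions

open Filter Topology
open scoped ContDiff

/-- The Euclidean space `ℝⁿ`. -/
abbrev Euc (n : ℕ) : Type := EuclideanSpace ℝ (Fin n)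

variable {n : ℕ} {f g : Euc n → ℂ}

/-- The space `C₀^∞(ℝⁿ \ {0})`. -/
def testFunctions (n : ℕ) : Submodule ℂ (Euc n → ℂ) where
  carrier := {φ | ContDiff ℝ ∞ φ ∧ HasCompactSupport φ ∧ (0 : Euc n) ∉ tsupport φ}
  add_mem' {f g} hf hg :=
    ⟨hf.1.add hg.1, hf.2.1.add hg.2.1, fun h => (tsupport_add f g h).elim hf.2.2 hg.2.2⟩
  zero_mem' := ⟨contDiff_const, HasCompactSupport.zero, by simp [tsupport]⟩
  smul_mem' c f hf :=
    have hsub := Function.support_const_smul_subset c f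
    ⟨contDiff_const.smul hf.1, hf.2.1.mono hsub, fun h => hf.2.2 (closure_mono hsub h)⟩

theorem testFunctions.differentiable (hf : f ∈ testFunctions n) : Differentiable ℝ f :=
  hf.1.differentiable (by simp)

theorem mem_testFunctions_of_tsupport_subset (hf : ContDiff ℝ ∞ f) (hg : g ∈ testFunctions n)
    (h : tsupport f ⊆ tsupport g) : f ∈ testFunctions n :=
  ⟨hf, hg.2.1.mono' ((subset_tsupport f).trans h), fun h0 => hg.2.2 (h h0)⟩

theorem star_mem_testFunctions (hf : f ∈ testFunctions n) : star f ∈ testFunctions n :=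
  mem_testFunctions_of_tsupport_subset ((Complex.conjCLE : ℂ ≃L[ℝ] ℂ).contDiff.comp hf.1) hf
    (closure_mono fun x hx => by simpa using hx)

theorem mul_mem_testFunctions (hg : ContDiffOn ℝ ∞ g {0}ᶜ) (hf : f ∈ testFunctions n) :
    g * f ∈ testFunctions n := by
  refine mem_testFunctions_of_tsupport_subset (contDiff_iff_contDiffAt.2 fun x => ?_) hf
    tsupport_mul_subset_right
  by_cases hx : x = 0
  · have h0 : f =ᶠ[𝓝 x] 0 := notMem_tsupport_iff_eventuallyEq.1 (hx ▸ hf.2.2)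
    exact (contDiffAt_const (c := (0 : ℂ))).congr_of_eventuallyEq (h0.mono fun y hy => by simp [hy])
  · exact (hg.contDiffAt (isOpen_compl_singleton.mem_nhds hx)).mul hf.1.contDiffAt

theorem integrable_mul_testFunctions (hf : f ∈ testFunctions n) (hg : g ∈ testFunctions n) :
    Integrable (fun x => f x * g x) :=
  (hf.1.continuous.mul hg.1.continuous).integrable_of_hasCompactSupport hf.2.1.mul_right

/-- The partial derivative of a function on `ℝⁿ`. -/
def partialDeriv (i : Fin n) (f : Euc n → ℂ) (x : Euc n) : ℂ :=
  fderiv ℝ f x (EuclideanSpace.single i (1 : ℝ))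

theorem partialDeriv_congr_nhds (i : Fin n) {x : Euc n} (h : f =ᶠ[𝓝 x] g) :
    partialDeriv i f =ᶠ[𝓝 x] partialDeriv i g :=
  h.fderiv.mono fun y hy => by rw [partialDeriv, hy, partialDeriv]

theorem partialDeriv_star (i : Fin n) (f : Euc n → ℂ) :
    partialDeriv i (star f) = star (partialDeriv i f) := by
  ext x
  exact congrArg (· (EuclideanSpace.single i (1 : ℝ)))
    ((Complex.conjCLE : ℂ ≃L[ℝ] ℂ).comp_fderiv (f := f) (x := x))

theorem negLap_eq_neg_sum_partialDeriv (f : Euc n → ℂ) :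
    negLap f = -∑ i, partialDeriv i (partialDeriv i f) := by
  ext x
  rw [Pi.neg_apply, Finset.sum_apply]
  rfl

theorem negLap_congr_nhds {x : Euc n} (h : f =ᶠ[𝓝 x] g) : negLap f =ᶠ[𝓝 x] negLap g := by
  have hpartial : ∀ᶠ y in 𝓝 x, ∀ i, partialDeriv i (partialDeriv i f) y =
      partialDeriv i (partialDeriv i g) y :=
    eventually_all.2 fun i => partialDeriv_congr_nhds i (partialDeriv_congr_nhds i h)
  filter_upwards [hpartial] with y hy
  simp [negLap_eq_neg_sum_partialDeriv, hy]

theorem negLap_star (f : Euc n → ℂ) : negLap (star f) = star (negLap f) := by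
  simp only [negLap_eq_neg_sum_partialDeriv, partialDeriv_star, star_neg, star_sum]

theorem iterate_negLap_congr_nhds {x : Euc n} (h : f =ᶠ[𝓝 x] g) (k : ℕ) :
    negLap^[k] f =ᶠ[𝓝 x] negLap^[k] g := by
  induction k with
  | zero => exact h
  | succ k ih =>
    simp only [Function.iterate_succ', Function.comp_apply]
    exact negLap_congr_nhds ih

/-- The potential `c|x|^{-2k}`. -/
def potential (n k : ℕ) (c : ℝ) (x : Euc n) : ℂ := ((c * (‖x‖ ^ (2 * k))⁻¹ : ℝ) : ℂ)

theorem contDiffOn_potential (n k : ℕ) (c : ℝ) : ContDiffOn ℝ ∞ (potential n k c) {0}ᶜ := by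
  refine Complex.ofRealCLM.contDiff.comp_contDiffOn fun x hx => ?_
  have hnorm : ‖x‖ ^ (2 * k) ≠ 0 := pow_ne_zero _ (norm_ne_zero_iff.2 hx)
  exact (contDiffAt_const.mul
    (ContDiffAt.inv ((contDiffAt_norm ℝ hx).pow (2 * k)) hnorm)).contDiffWithinAt

/-- The differential expression `(-Δ)ᵏ + c|x|^{-2k}`. -/
def formalOp (n k : ℕ) (c : ℝ) (φ : Euc n → ℂ) : Euc n → ℂ := negLap^[k] φ + potential n k c * φ

theorem formalOp_congr_nhds {x : Euc n} (h : f =ᶠ[𝓝 x] g) (k : ℕ) (c : ℝ) :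
    formalOp n k c f x = formalOp n k c g x := by
  rw [formalOp, formalOp, Pi.add_apply, Pi.add_apply, Pi.mul_apply, Pi.mul_apply,
    (iterate_negLap_congr_nhds h k).eq_of_nhds, h.eq_of_nhds]

theorem formalOp_star (k : ℕ) (c : ℝ) (f : Euc n → ℂ) :
    formalOp n k c (star f) = star (formalOp n k c f) := by
  have hpotential : star (potential n k c) = potential n k c :=
    funext fun x => Complex.conj_ofReal _
  have hiterate : negLap^[k] (star f) = star (negLap^[k] f) :=
    (Function.Commute.iterate_left negLap_star k).eq f
  rw [formalOp, hiterate, formalOp, star_add, star_mul', hpotential]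

end EuclideanTestFunctions

section SymmetricOperators

open scoped ContDiff

variable {n : ℕ} {f g : Euc n → ℂ}

theorem partialDeriv_mem_testFunctions (i : Fin n) (hf : f ∈ testFunctions n) :
    partialDeriv i f ∈ testFunctions n :=
  mem_testFunctions_of_tsupport_subset
    ((hf.1.fderiv_right (m := ∞) le_rfl).clm_apply contDiff_const) hf
    (tsupport_fderiv_apply_subset ℝ _)

/-- The partial derivative as an endomorphism of the space of test functions. -/
def partialTest (i : Fin n) : Module.End ℂ (testFunctions n) where
  toFun f := ⟨partialDeriv i f, partialDeriv_mem_testFunctions i f.2⟩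
  map_add' f g := Subtype.ext <| funext fun x => by
    simp [partialDeriv, fderiv_add (testFunctions.differentiable f.2 x)
      (testFunctions.differentiable g.2 x)]
  map_smul' a f := Subtype.ext <| funext fun x => by
    simp [partialDeriv, fderiv_const_smul (testFunctions.differentiable f.2 x) a]

/-- The negative Laplacian as an endomorphism of the space of test functions. -/
def negLapTest (n : ℕ) : Module.End ℂ (testFunctions n) := -∑ i, partialTest i * partialTest i

theorem coe_negLapTest (f : testFunctions n) : (negLapTest n f : Euc n → ℂ) = negLap f := by
  have hsum : (negLapTest n f : Euc n → ℂ) = -∑ i, ((partialTest i * partialTest i) f).1 := by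
    rw [negLapTest, LinearMap.neg_apply, LinearMap.sum_apply, Submodule.coe_neg, Submodule.coe_sum]
  exact hsum.trans (negLap_eq_neg_sum_partialDeriv f.1).symm

theorem coe_negLapTest_pow (k : ℕ) (f : testFunctions n) :
    ((negLapTest n ^ k) f : Euc n → ℂ) = negLap^[k] f := by
  induction k with
  | zero => rfl
  | succ k ih => rw [pow_succ', Module.End.mul_apply, coe_negLapTest, ih,
      Function.iterate_succ_apply']

/-- Multiplication by the potential `c|x|^{-2k}` as an endomorphism of the space of test
functions. -/
def potentialTest (n k : ℕ) (c : ℝ) : Module.End ℂ (testFunctions n) where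
  toFun f := ⟨potential n k c * f, mul_mem_testFunctions (contDiffOn_potential n k c) f.2⟩
  map_add' _ _ := Subtype.ext (mul_add _ _ _)
  map_smul' a _ := Subtype.ext (mul_smul_comm a _ _)

/-- The differential expression `(-Δ)ᵏ + c|x|^{-2k}` as an endomorphism of the space of test
functions. -/
def formalTest (n k : ℕ) (c : ℝ) : Module.End ℂ (testFunctions n) :=
  negLapTest n ^ k + potentialTest n k c

theorem coe_formalTest (k : ℕ) (c : ℝ) (f : testFunctions n) :
    (formalTest n k c f : Euc n → ℂ) = formalOp n k c f := by
  rw [formalTest, LinearMap.add_apply, Submodule.coe_add, coe_negLapTest_pow]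
  rfl

/-- The bilinear form `∫ f g` on the space of test functions. -/
def testPairing (n : ℕ) : LinearMap.BilinForm ℂ (testFunctions n) :=
  LinearMap.mk₂ ℂ (fun f g => ∫ x, f.1 x * g.1 x)
    (fun f₁ f₂ g => by
      rw [← integral_add (integrable_mul_testFunctions f₁.2 g.2)
        (integrable_mul_testFunctions f₂.2 g.2)]
      exact integral_congr_ae (.of_forall fun x => add_mul _ _ _))
    (fun a f g => by
      rw [← integral_smul]
      exact integral_congr_ae (.of_forall fun x => mul_assoc _ _ _))
    (fun f g₁ g₂ => by
      rw [← integral_add (integrable_mul_testFunctions f.2 g₁.2)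
        (integrable_mul_testFunctions f.2 g₂.2)]
      exact integral_congr_ae (.of_forall fun x => mul_add _ _ _))
    (fun a f g => by
      rw [← integral_smul]
      exact integral_congr_ae (.of_forall fun x => mul_left_comm _ _ _))

theorem integral_mul_partialDeriv (i : Fin n) (hf : f ∈ testFunctions n)
    (hg : g ∈ testFunctions n) :
    ∫ x, f x * partialDeriv i g x = -∫ x, partialDeriv i f x * g x :=
  integral_mul_fderiv_eq_neg_fderiv_mul_of_integrable
    (integrable_mul_testFunctions (partialDeriv_mem_testFunctions i hf) hg)
    (integrable_mul_testFunctions hf (partialDeriv_mem_testFunctions i hg))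
    (integrable_mul_testFunctions hf hg)
    (fun x _ => testFunctions.differentiable hf x) (fun x _ => testFunctions.differentiable hg x)

theorem negLapTest_mem_selfAdjointSubmodule (n : ℕ) :
    negLapTest n ∈ (testPairing n).selfAdjointSubmodule := by
  refine Submodule.neg_mem _ (sum_mem fun i _ =>
    (LinearMap.mem_selfAdjointSubmodule _).2 fun f g => ?_)
  have hleft := integral_mul_partialDeriv i (partialTest i f).2 g.2
  have hright := integral_mul_partialDeriv i f.2 (partialTest i g).2
  exact (neg_eq_iff_eq_neg.2 hleft).symm.trans hright.symm

theorem potentialTest_mem_selfAdjointSubmodule (n k : ℕ) (c : ℝ) :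
    potentialTest n k c ∈ (testPairing n).selfAdjointSubmodule :=
  (LinearMap.mem_selfAdjointSubmodule _).2 fun f g => integral_congr_ae (.of_forall fun x =>
    (mul_assoc _ _ _).trans (mul_left_comm (potential n k c x) (f.1 x) (g.1 x)))

theorem formalTest_mem_selfAdjointSubmodule (n k : ℕ) (c : ℝ) :
    formalTest n k c ∈ (testPairing n).selfAdjointSubmodule := by
  refine add_mem ?_ (potentialTest_mem_selfAdjointSubmodule n k c)
  induction k with
  | zero => exact (LinearMap.mem_selfAdjointSubmodule _).2 fun f g => rfl
  | succ k ih =>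
    have h := LinearMap.IsAdjointPair.mul
      ((LinearMap.mem_selfAdjointSubmodule _).1 (negLapTest_mem_selfAdjointSubmodule n))
      ((LinearMap.mem_selfAdjointSubmodule _).1 ih)
    rw [← pow_succ, ← pow_succ'] at h
    exact (LinearMap.mem_selfAdjointSubmodule _).2 h

theorem integral_formalOp_mul (k : ℕ) (c : ℝ) (hf : f ∈ testFunctions n)
    (hg : g ∈ testFunctions n) :
    ∫ x, formalOp n k c f x * g x = ∫ x, f x * formalOp n k c g x := by
  have h := (LinearMap.mem_selfAdjointSubmodule _).1
    (formalTest_mem_selfAdjointSubmodule n k c) ⟨f, hf⟩ ⟨g, hg⟩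
  simpa only [testPairing, LinearMap.mk₂_apply, coe_formalTest] using h

end SymmetricOperators

section OperatorsOnTestFunctions

open scoped InnerProductSpace

variable {n : ℕ}

/-- The Hilbert space `L²(ℝⁿ)`. -/
abbrev L2Euc (n : ℕ) : Type := Lp ℂ 2 (volume : Measure (Euc n))

theorem memLp_of_mem_testFunctions {f : Euc n → ℂ} (hf : f ∈ testFunctions n) :
    MemLp f 2 volume :=
  hf.1.continuous.memLp_of_hasCompactSupport hf.2.1

/-- The element of `L²(ℝⁿ)` represented by a test function. -/
def testLp : testFunctions n →ₗ[ℂ] L2Euc n where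
  toFun f := (memLp_of_mem_testFunctions f.2).toLp f
  map_add' f g := MemLp.toLp_add (memLp_of_mem_testFunctions f.2) (memLp_of_mem_testFunctions g.2)
  map_smul' a f := MemLp.toLp_const_smul a (memLp_of_mem_testFunctions f.2)

theorem coeFn_testLp (f : testFunctions n) : (testLp f : Euc n → ℂ) =ᵐ[volume] f :=
  MemLp.coeFn_toLp (memLp_of_mem_testFunctions f.2)

theorem eq_testLp {u : L2Euc n} {f : testFunctions n} (h : (u : Euc n → ℂ) =ᵐ[volume] f) :
    u = testLp f :=
  Lp.ext (h.trans (coeFn_testLp f).symm)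

theorem testLp_injective : Function.Injective (testLp (n := n)) :=
  (injective_iff_map_eq_zero _).2 fun f hf => Subtype.ext <|
    (Continuous.ae_eq_iff_eq volume f.2.1.continuous continuous_const).1 <|
      (coeFn_testLp f).symm.trans (hf ▸ Lp.coeFn_zero ..)

theorem inner_testLp_right (u : L2Euc n) (f : testFunctions n) :
    ⟪u, testLp f⟫_ℂ = ∫ x, star (u x) * f.1 x := by
  rw [L2.inner_def]
  refine integral_congr_ae ?_
  filter_upwards [coeFn_testLp f] with x hx
  rw [hx, RCLike.inner_apply, mul_comm]
  rfl

theorem inner_testLp_testLp (f g : testFunctions n) :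
    ⟪testLp f, testLp g⟫_ℂ = ∫ x, star (f.1 x) * g.1 x := by
  rw [inner_testLp_right]
  refine integral_congr_ae ?_
  filter_upwards [coeFn_testLp f] with x hx
  rw [hx]

variable {L : (Euc n → ℂ) → Euc n → ℂ} {A : Module.End ℂ (testFunctions n)}

theorem mem_graphOf_iff (hA : ∀ f, (A f : Euc n → ℂ) = L f) {p : L2Euc n × L2Euc n} :
    p ∈ graphOf n L ↔ ∃ f, p = (testLp f, testLp (A f)) := by
  constructor
  · intro hp
    refine Submodule.span_induction ?_ ⟨0, by simp [Prod.ext_iff]⟩ ?_ ?_ hp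
    · rintro p ⟨φ, h1, h2, h3, h4, h5⟩
      exact ⟨⟨φ, h1, h2, h3⟩, Prod.ext (eq_testLp h4) (eq_testLp (by rwa [hA]))⟩
    · rintro _ _ _ _ ⟨f, rfl⟩ ⟨g, rfl⟩
      exact ⟨f + g, by simp⟩
    · rintro a _ _ ⟨f, rfl⟩
      exact ⟨a • f, by simp⟩
  · rintro ⟨f, rfl⟩
    exact Submodule.subset_span
      ⟨f, f.2.1, f.2.2.1, f.2.2.2, coeFn_testLp f, hA f ▸ coeFn_testLp (A f)⟩

theorem mem_graph_opOn_iff (hA : ∀ f, (A f : Euc n → ℂ) = L f) {p : L2Euc n × L2Euc n} :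
    p ∈ (opOn n L).graph ↔ ∃ f, p = (testLp f, testLp (A f)) := by
  rw [opOn, Submodule.toLinearPMap_graph_eq, mem_graphOf_iff hA]
  intro p hp h0
  obtain ⟨f, rfl⟩ := (mem_graphOf_iff hA).1 hp
  obtain rfl : f = 0 := testLp_injective (h0.trans (map_zero _).symm)
  simp

theorem exists_opOn_eq_testLp (hA : ∀ f, (A f : Euc n → ℂ) = L f) (x : (opOn n L).domain) :
    ∃ f, (x : L2Euc n) = testLp f ∧ opOn n L x = testLp (A f) := by
  obtain ⟨f, hf⟩ := (mem_graph_opOn_iff hA).1 ((opOn n L).mem_graph x)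
  exact ⟨f, (Prod.ext_iff.1 hf).1, (Prod.ext_iff.1 hf).2⟩

theorem exists_testLp_eq_opOn (hA : ∀ f, (A f : Euc n → ℂ) = L f) (f : testFunctions n) :
    ∃ x : (opOn n L).domain, (x : L2Euc n) = testLp f ∧ opOn n L x = testLp (A f) :=
  (LinearPMap.mem_graph_iff _).1 ((mem_graph_opOn_iff hA).2 ⟨f, rfl⟩)

theorem isFormalAdjoint_opOn (hA : ∀ f, (A f : Euc n → ℂ) = L f)
    (hsymm : ∀ f g, ⟪testLp (A f), testLp g⟫_ℂ = ⟪testLp f, testLp (A g)⟫_ℂ) :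
    (opOn n L).IsFormalAdjoint (opOn n L) := fun x y => by
  obtain ⟨f, hx, hLx⟩ := exists_opOn_eq_testLp hA x
  obtain ⟨g, hy, hLy⟩ := exists_opOn_eq_testLp hA y
  rw [hx, hLx, hy, hLy, hsymm]

theorem inner_testLp_formalTest (k : ℕ) (c : ℝ) (f g : testFunctions n) :
    ⟪testLp (formalTest n k c f), testLp g⟫_ℂ = ⟪testLp f, testLp (formalTest n k c g)⟫_ℂ := by
  have h := integral_formalOp_mul k c (star_mem_testFunctions f.2) g.2
  rw [formalOp_star] at h
  rw [inner_testLp_testLp, inner_testLp_testLp, coe_formalTest, coe_formalTest]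
  exact h

end OperatorsOnTestFunctions

section HarmonicPolynomials

open MvPolynomial

variable {σ K : Type*} [Fintype σ] [Field K] {h p q : MvPolynomial σ K} {d ℓ : ℕ}

/-- The Laplacian of a polynomial. -/
def polyLaplacian : Module.End K (MvPolynomial σ K) :=
  ∑ i, (pderiv i).toLinearMap * (pderiv i).toLinearMap

theorem polyLaplacian_apply (p : MvPolynomial σ K) :
    polyLaplacian p = ∑ i, pderiv i (pderiv i p) := by
  simp [polyLaplacian]

theorem isHomogeneous_polyLaplacian (hp : p.IsHomogeneous (d + 2)) :
    (polyLaplacian p).IsHomogeneous d := by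
  rw [polyLaplacian_apply]
  exact IsHomogeneous.sum _ _ _ fun i _ => (hp.pderiv (i := i)).pderiv

theorem polyLaplacian_eq_zero_of_isHomogeneous (hp : p.IsHomogeneous d) (hd : d < 2) :
    polyLaplacian p = 0 := by
  rw [polyLaplacian_apply]
  refine Finset.sum_eq_zero fun i _ => ?_
  have hdeg : (pderiv i p).IsHomogeneous 0 := by
    have hderiv := hp.pderiv (i := i)
    rwa [Nat.sub_eq_zero_of_le (Nat.lt_succ_iff.1 hd)] at hderiv
  rw [totalDegree_eq_zero_iff_eq_C.1 (Nat.le_zero.1 hdeg.totalDegree_le), pderiv_C]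

/-- A homogeneous harmonic polynomial of degree `ℓ`. -/
structure IsSolidHarmonic (p : MvPolynomial σ K) (ℓ : ℕ) : Prop where
  isHomogeneous : p.IsHomogeneous ℓ
  polyLaplacian_eq_zero : polyLaplacian p = 0

theorem isSolidHarmonic_one : IsSolidHarmonic (1 : MvPolynomial σ K) 0 :=
  ⟨isHomogeneous_one σ K,
    polyLaplacian_eq_zero_of_isHomogeneous (isHomogeneous_one σ K) zero_lt_two⟩

variable (σ K) in
/-- The squared radius as a polynomial. -/
def radiusSq : MvPolynomial σ K := ∑ i, X i ^ 2

theorem isHomogeneous_radiusSq : (radiusSq σ K).IsHomogeneous 2 :=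
  IsHomogeneous.sum _ _ _ fun i _ => by simpa using (isHomogeneous_X K i).pow 2

theorem pderiv_radiusSq (i : σ) : pderiv i (radiusSq σ K) = 2 * X i := by
  classical
  have hterm (j : σ) : pderiv i (X j ^ 2 : MvPolynomial σ K) = if j = i then 2 * X i else 0 := by
    rw [pderiv_pow, pderiv_X]
    rcases eq_or_ne j i with rfl | hj
    · simp
    · simp [hj]
  rw [radiusSq, map_sum, Finset.sum_congr rfl fun j _ => hterm j]
  simp

theorem pderiv_pderiv_radiusSq_pow_mul (m : ℕ) (h : MvPolynomial σ K) (i : σ) :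
    pderiv i (pderiv i (radiusSq σ K ^ (m + 1) * h)) =
      C (2 * (m + 1) : K) * ((X i * pderiv i (radiusSq σ K ^ m)) * h + radiusSq σ K ^ m * h +
        2 * radiusSq σ K ^ m * (X i * pderiv i h)) +
      radiusSq σ K ^ (m + 1) * pderiv i (pderiv i h) := by
  have hpow : pderiv i (radiusSq σ K ^ (m + 1)) =
      C (2 * (m + 1) : K) * (radiusSq σ K ^ m * X i) := by
    rw [pderiv_pow, pderiv_radiusSq]
    simp only [map_mul, map_add, map_one, map_ofNat, map_natCast, Nat.add_sub_cancel]
    push_cast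
    ring
  simp only [pderiv_mul, map_add, hpow, pderiv_C, pderiv_X_self]
  ring

theorem polyLaplacian_radiusSq_pow_mul (m : ℕ) (hh : IsSolidHarmonic h ℓ) :
    polyLaplacian (radiusSq σ K ^ (m + 1) * h) =
      (2 * (m + 1) * (2 * m + Fintype.card σ + 2 * ℓ) : K) • (radiusSq σ K ^ m * h) := by
  have heuler_radius := (isHomogeneous_radiusSq (σ := σ) (K := K).pow m).sum_X_mul_pderiv
  have heuler := hh.isHomogeneous.sum_X_mul_pderiv
  have hharm := polyLaplacian_apply h ▸ hh.polyLaplacian_eq_zero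
  rw [polyLaplacian_apply, Finset.sum_congr rfl fun i _ => pderiv_pderiv_radiusSq_pow_mul m h i,
    Finset.sum_add_distrib, ← Finset.mul_sum, ← Finset.mul_sum, Finset.sum_add_distrib,
    Finset.sum_add_distrib, ← Finset.sum_mul, ← Finset.mul_sum, ← Finset.mul_sum, heuler_radius,
    heuler, hharm, smul_eq_C_mul]
  simp only [nsmul_eq_mul, map_mul, map_add, map_one, map_ofNat, map_natCast, Finset.sum_const,
    Finset.card_univ]
  push_cast
  ring

variable (σ K) in
/-- The span of the products of powers of the squared radius with solid harmonics, in degree `d`. -/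
def harmonicSpan (d : ℕ) : Submodule K (MvPolynomial σ K) :=
  Submodule.span K {q | ∃ (j ℓ : ℕ) (h : MvPolynomial σ K), IsSolidHarmonic h ℓ ∧
    2 * j + ℓ = d ∧ q = radiusSq σ K ^ j * h}

theorem isHomogeneous_of_mem_harmonicSpan (hq : q ∈ harmonicSpan σ K d) : q.IsHomogeneous d := by
  refine (Submodule.span_le (p := homogeneousSubmodule σ K d)).2 ?_ hq
  rintro q ⟨j, ℓ, h, hh, rfl, rfl⟩
  exact (isHomogeneous_radiusSq.pow j).mul hh.isHomogeneous

theorem mem_harmonicSpan_of_polyLaplacian_eq_zero (hp : p.IsHomogeneous d)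
    (h : polyLaplacian p = 0) : p ∈ harmonicSpan σ K d :=
  Submodule.subset_span ⟨0, d, p, ⟨hp, h⟩, by simp, by simp⟩

theorem exists_polyLaplacian_eq [CharZero K] [Nonempty σ] (hq : q ∈ harmonicSpan σ K d) :
    ∃ q' ∈ harmonicSpan σ K (d + 2), polyLaplacian q' = q := by
  suffices h : harmonicSpan σ K d ≤ (harmonicSpan σ K (d + 2)).map polyLaplacian from
    Submodule.mem_map.1 (h hq)
  refine Submodule.span_le.2 ?_
  rintro _ ⟨j, ℓ, h, hh, rfl, rfl⟩
  set a : K := 2 * (j + 1) * (2 * j + Fintype.card σ + 2 * ℓ) with ha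
  have ha0 : a ≠ 0 := by
    rw [ha]
    norm_cast
    exact mul_ne_zero (by omega) (by have := Fintype.card_pos (α := σ); omega)
  refine ⟨a⁻¹ • (radiusSq σ K ^ (j + 1) * h),
    Submodule.smul_mem _ _ (Submodule.subset_span ⟨j + 1, ℓ, h, hh, by ring, rfl⟩), ?_⟩
  rw [map_smul, polyLaplacian_radiusSq_pow_mul j hh, ← ha, smul_smul, inv_mul_cancel₀ ha0, one_smul]

theorem mem_harmonicSpan [CharZero K] [Nonempty σ] (hp : p.IsHomogeneous d) :
    p ∈ harmonicSpan σ K d := by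
  induction d using Nat.twoStepInduction generalizing p with
  | zero =>
    exact mem_harmonicSpan_of_polyLaplacian_eq_zero hp
      (polyLaplacian_eq_zero_of_isHomogeneous hp zero_lt_two)
  | one =>
    exact mem_harmonicSpan_of_polyLaplacian_eq_zero hp
      (polyLaplacian_eq_zero_of_isHomogeneous hp one_lt_two)
  | more d ih _ =>
    obtain ⟨q, hq, hqp⟩ := exists_polyLaplacian_eq (ih (isHomogeneous_polyLaplacian hp))
    have hharm : p - q ∈ harmonicSpan σ K (d + 2) :=
      mem_harmonicSpan_of_polyLaplacian_eq_zero
        (hp.sub (isHomogeneous_of_mem_harmonicSpan hq)) (by rw [map_sub, hqp, sub_self])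
    simpa only [sub_add_cancel] using add_mem hharm hq

end HarmonicPolynomials

section PolynomialFunctions

open scoped ContDiff

variable {n : ℕ} {f g : Euc n → ℂ} {x : Euc n}

theorem partialDeriv_add (hf : DifferentiableAt ℝ f x) (hg : DifferentiableAt ℝ g x) (i : Fin n) :
    partialDeriv i (f + g) x = partialDeriv i f x + partialDeriv i g x := by
  rw [partialDeriv, fderiv_add hf hg]
  rfl

theorem partialDeriv_mul (hf : DifferentiableAt ℝ f x) (hg : DifferentiableAt ℝ g x) (i : Fin n) :
    partialDeriv i (f * g) x = partialDeriv i f x * g x + f x * partialDeriv i g x := by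
  simp only [partialDeriv, fderiv_mul hf hg, FunLike.coe_add, FunLike.coe_smul, Pi.add_apply,
    Pi.smul_apply, smul_eq_mul]
  ring

/-- The function on `ℝⁿ` defined by a polynomial. -/
def polyFn : MvPolynomial (Fin n) ℂ →ₐ[ℂ] (Euc n → ℂ) := MvPolynomial.aeval fun i x => (x i : ℂ)

theorem polyFn_C (a : ℂ) : polyFn (MvPolynomial.C a) = fun _ : Euc n => a :=
  MvPolynomial.aeval_C _ a

theorem polyFn_X (i : Fin n) : polyFn (MvPolynomial.X i) = fun x : Euc n => (x i : ℂ) :=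
  MvPolynomial.aeval_X _ i

theorem hasFDerivAt_polyFn_X (i : Fin n) (x : Euc n) : HasFDerivAt (polyFn (MvPolynomial.X i))
    (Complex.ofRealCLM.comp (EuclideanSpace.proj i : Euc n →L[ℝ] ℝ)) x :=
  polyFn_X i ▸ (Complex.ofRealCLM.comp (EuclideanSpace.proj i : Euc n →L[ℝ] ℝ)).hasFDerivAt

theorem contDiff_polyFn (p : MvPolynomial (Fin n) ℂ) : ContDiff ℝ ∞ (polyFn p) := by
  induction p using MvPolynomial.induction_on with
  | C a => exact polyFn_C a ▸ contDiff_const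
  | add p q hp hq => exact map_add polyFn p q ▸ hp.add hq
  | mul_X p i hp =>
    rw [map_mul, polyFn_X]
    exact hp.mul (Complex.ofRealCLM.contDiff.comp
      (EuclideanSpace.proj i : Euc n →L[ℝ] ℝ).contDiff)

theorem differentiable_polyFn (p : MvPolynomial (Fin n) ℂ) : Differentiable ℝ (polyFn p) :=
  (contDiff_polyFn p).differentiable (by simp)

theorem partialDeriv_polyFn (i : Fin n) (p : MvPolynomial (Fin n) ℂ) (x : Euc n) :
    partialDeriv i (polyFn p) x = polyFn (MvPolynomial.pderiv i p) x := by
  induction p using MvPolynomial.induction_on with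
  | C a =>
    rw [polyFn_C, MvPolynomial.pderiv_C, map_zero, partialDeriv, fderiv_const_apply]
    rfl
  | add p q hp hq =>
    rw [map_add, partialDeriv_add (differentiable_polyFn p x) (differentiable_polyFn q x), hp, hq,
      map_add, map_add, Pi.add_apply]
  | mul_X p j hp =>
    have hX : partialDeriv i (polyFn (MvPolynomial.X j)) x = Pi.single (M := fun _ => ℂ) i 1 j := by
      rw [partialDeriv, (hasFDerivAt_polyFn_X j x).fderiv]
      by_cases hij : j = i <;> simp [hij]
    rw [map_mul, partialDeriv_mul (differentiable_polyFn p x) (differentiable_polyFn _ x), hp, hX,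
      MvPolynomial.pderiv_mul, MvPolynomial.pderiv_X, map_add, map_mul, map_mul, Pi.add_apply,
      Pi.mul_apply, Pi.mul_apply]
    by_cases hij : j = i <;> simp [hij]

theorem sum_polyFn_pderiv_pderiv (p : MvPolynomial (Fin n) ℂ) (x : Euc n) :
    ∑ i, polyFn (MvPolynomial.pderiv i (MvPolynomial.pderiv i p)) x =
      polyFn (polyLaplacian p) x := by
  rw [polyLaplacian_apply, map_sum, Finset.sum_apply]

end PolynomialFunctions

section LogRadialFunctions

open scoped ContDiff InnerProductSpace Topology

variable {n ℓ : ℕ} {p : MvPolynomial (Fin n) ℂ} {x : Euc n}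

theorem hasFDerivAt_log_norm (hx : x ≠ 0) :
    HasFDerivAt (fun y : Euc n => Real.log ‖y‖) ((‖x‖ ^ 2)⁻¹ • innerSL ℝ x) x := by
  have h := ((hasStrictFDerivAt_norm_sq x).hasFDerivAt.log (by positivity)).const_mul (1 / 2 : ℝ)
  have hlog : (fun y : Euc n => (1 / 2 : ℝ) * Real.log (‖y‖ ^ 2)) = fun y => Real.log ‖y‖ := by
    ext y; rw [Real.log_pow]; push_cast; ring
  rw [hlog] at h
  refine h.congr_fderiv ?_
  ext v
  simp
  ring

theorem expFn_neg_log_norm (k : ℕ) (hx : x ≠ 0) :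
    expFn (-k) (Real.log ‖x‖) = (((‖x‖ ^ k)⁻¹ : ℝ) : ℂ) := by
  have hexp : (-k : ℂ) * (Real.log ‖x‖ : ℂ) = ((-Real.log (‖x‖ ^ k) : ℝ) : ℂ) := by
    rw [Real.log_pow]; push_cast; ring
  rw [expFn_apply, hexp, ← Complex.ofReal_exp, Real.exp_neg, Real.exp_log (by positivity)]

/-- The function `x ↦ p(x) G(log ‖x‖)` on `ℝⁿ \ {0}`, extended by zero. -/
def logLift (p : MvPolynomial (Fin n) ℂ) (G : ℝ → ℂ) (x : Euc n) : ℂ :=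
  if x = 0 then 0 else polyFn p x * G (Real.log ‖x‖)

theorem logLift_of_ne (p : MvPolynomial (Fin n) ℂ) (G : ℝ → ℂ) (hx : x ≠ 0) :
    logLift p G x = polyFn p x * G (Real.log ‖x‖) := if_neg hx

theorem logLift_eventuallyEq (p : MvPolynomial (Fin n) ℂ) (G : ℝ → ℂ) (hx : x ≠ 0) :
    logLift p G =ᶠ[𝓝 x] polyFn p * fun y => G (Real.log ‖y‖) :=
  (eventually_ne_nhds hx).mono fun _ => logLift_of_ne p G

theorem contDiffAt_logLift (p : MvPolynomial (Fin n) ℂ) (G : SmoothFn) (hx : x ≠ 0) :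
    ContDiffAt ℝ ∞ (logLift p G) x :=
  ((contDiff_polyFn p).contDiffAt.mul (G.contDiff.contDiffAt.comp x
    ((contDiffAt_norm ℝ hx).log (norm_ne_zero_iff.2 hx)))).congr_of_eventuallyEq
    (logLift_eventuallyEq p G hx)

theorem logLift_eq_zero_of_lt {G : ℝ → ℂ} {R : ℝ} (hG : ∀ t, R < |t| → G t = 0)
    (h : x ≠ 0 → R < |Real.log ‖x‖|) : logLift p G x = 0 := by
  rw [logLift]
  split_ifs with hx
  · rfl
  · rw [hG _ (h hx), mul_zero]

theorem logLift_mem_testFunctions (p : MvPolynomial (Fin n) ℂ) {G : SmoothFn}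
    (hG : HasCompactSupport G) : logLift p G ∈ testFunctions n := by
  obtain ⟨R, hR⟩ := hG.isBounded.subset_closedBall 0
  have hG0 (t : ℝ) (ht : R < |t|) : G t = 0 :=
    image_eq_zero_of_notMem_tsupport fun hmem => ht.not_ge (mem_closedBall_zero_iff.1 (hR hmem))
  have hzero : logLift p G =ᶠ[𝓝 0] 0 := by
    filter_upwards [Metric.ball_mem_nhds (0 : Euc n) (Real.exp_pos (-R))] with x hx
    refine logLift_eq_zero_of_lt hG0 fun hx0 => lt_abs.2 (Or.inr (lt_neg.2 ?_))
    rwa [Real.log_lt_iff_lt_exp (norm_pos_iff.2 hx0), ← mem_ball_zero_iff]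
  refine ⟨contDiff_iff_contDiffAt.2 fun x => ?_, ?_, notMem_tsupport_iff_eventuallyEq.2 hzero⟩
  · rcases eq_or_ne x 0 with rfl | hx
    · exact contDiffAt_const.congr_of_eventuallyEq hzero
    · exact contDiffAt_logLift p G hx
  · refine HasCompactSupport.intro (isCompact_closedBall (0 : Euc n) (Real.exp R)) fun x hx =>
      logLift_eq_zero_of_lt hG0 fun hx0 => lt_abs.2 (Or.inl ?_)
    rwa [Real.lt_log_iff_exp_lt (norm_pos_iff.2 hx0), ← not_le, ← mem_closedBall_zero_iff]

theorem partialDeriv_logLift (p : MvPolynomial (Fin n) ℂ) (G : SmoothFn) (i : Fin n) (hx : x ≠ 0) :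
    partialDeriv i (logLift p G) x = logLift (MvPolynomial.pderiv i p) G x +
      logLift (MvPolynomial.X i * p) ↑(expFn (-2) * smoothDeriv G) x := by
  have hG : HasFDerivAt (fun y : Euc n => G (Real.log ‖y‖)) _ x :=
    (G.hasDerivAt _).hasFDerivAt.comp x (hasFDerivAt_log_norm hx)
  have hradial : partialDeriv i (fun y : Euc n => G (Real.log ‖y‖)) x =
      x i * (expFn (-2) * smoothDeriv G) (Real.log ‖x‖) := by
    have hexp := expFn_neg_log_norm 2 hx
    rw [Nat.cast_ofNat] at hexp
    have hinner : ⟪x, EuclideanSpace.single i (1 : ℝ)⟫_ℝ = x i := by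
      rw [real_inner_comm, EuclideanSpace.inner_single_left]; simp
    rw [partialDeriv, hG.fderiv, SmoothFn.coe_mul, hexp]
    simp [hinner]
    ring
  rw [(partialDeriv_congr_nhds i (logLift_eventuallyEq p G hx)).eq_of_nhds,
    partialDeriv_mul (differentiable_polyFn p x) hG.differentiableAt, partialDeriv_polyFn, hradial,
    logLift_of_ne _ _ hx, logLift_of_ne _ _ hx, map_mul, polyFn_X, Pi.mul_apply]
  ring

theorem partialDeriv_partialDeriv_logLift (p : MvPolynomial (Fin n) ℂ) (G : SmoothFn) (i : Fin n)
    (hx : x ≠ 0) : partialDeriv i (partialDeriv i (logLift p G)) x =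
      polyFn (MvPolynomial.pderiv i (MvPolynomial.pderiv i p)) x * G (Real.log ‖x‖) +
      (2 * polyFn (MvPolynomial.X i * MvPolynomial.pderiv i p) x + polyFn p x) *
        (expFn (-2) * smoothDeriv G) (Real.log ‖x‖) +
      (x i : ℂ) ^ 2 * polyFn p x *
        (expFn (-2) * smoothDeriv (expFn (-2) * smoothDeriv G)) (Real.log ‖x‖) := by
  have hfirst : partialDeriv i (logLift p G) =ᶠ[𝓝 x] logLift (MvPolynomial.pderiv i p) G +
      logLift (MvPolynomial.X i * p) ↑(expFn (-2) * smoothDeriv G) :=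
    (eventually_ne_nhds hx).mono fun y hy => partialDeriv_logLift p G i hy
  rw [(partialDeriv_congr_nhds i hfirst).eq_of_nhds,
    partialDeriv_add ((contDiffAt_logLift _ _ hx).differentiableAt (by simp))
      ((contDiffAt_logLift _ _ hx).differentiableAt (by simp)), partialDeriv_logLift _ _ _ hx,
    partialDeriv_logLift _ _ _ hx]
  simp only [logLift_of_ne _ _ hx, MvPolynomial.pderiv_mul, MvPolynomial.pderiv_X_self, one_mul,
    map_add, map_mul, polyFn_X, Pi.add_apply, Pi.mul_apply]
  ring

theorem negLap_logLift (hp : IsSolidHarmonic p ℓ) (G : SmoothFn) (hx : x ≠ 0) :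
    negLap (logLift p G) x = -logLift p ↑(expFn (-2) * (smoothDeriv (smoothDeriv G) +
      (2 * angularExp n ℓ : ℂ) • smoothDeriv G)) x := by
  have hsq : ∑ i, (x i : ℂ) ^ 2 = ((‖x‖ ^ 2 : ℝ) : ℂ) := by
    rw [EuclideanSpace.real_norm_sq_eq]; push_cast; rfl
  have heuler : ∑ i, polyFn (MvPolynomial.X i * MvPolynomial.pderiv i p) x = ℓ * polyFn p x := by
    rw [← Finset.sum_apply, ← map_sum, hp.isHomogeneous.sum_X_mul_pderiv, map_nsmul, Pi.smul_apply,
      nsmul_eq_mul]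
  have hexp : ((‖x‖ ^ 2 : ℝ) : ℂ) * expFn (-2) (Real.log ‖x‖) = 1 := by
    have h := expFn_neg_log_norm 2 hx
    rw [Nat.cast_ofNat] at h
    rw [h, ← Complex.ofReal_mul, mul_inv_cancel₀ (by positivity), Complex.ofReal_one]
  have hμ : (2 * angularExp n ℓ : ℂ) = 2 * ℓ + n - 2 := by
    rw [angularExp]; push_cast; ring
  rw [negLap_eq_neg_sum_partialDeriv, Pi.neg_apply, Finset.sum_apply,
    Finset.sum_congr rfl fun i _ => partialDeriv_partialDeriv_logLift p G i hx, neg_inj,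
    logLift_of_ne _ _ hx]
  simp only [Finset.sum_add_distrib, ← Finset.sum_mul, ← Finset.mul_sum, sum_polyFn_pderiv_pderiv,
    hp.polyLaplacian_eq_zero, heuler, hsq, hμ, map_zero, Pi.zero_apply, zero_mul, zero_add,
    Finset.sum_const, Finset.card_univ, Fintype.card_fin, nsmul_eq_mul, smoothDeriv_mul,
    smoothDeriv_expFn, SmoothFn.coe_mul, SmoothFn.coe_add, SmoothFn.coe_smul]
  linear_combination polyFn p x * expFn (-2) (Real.log ‖x‖) *
    (smoothDeriv (smoothDeriv G) (Real.log ‖x‖) - 2 * smoothDeriv G (Real.log ‖x‖)) * hexp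

/-- The characteristic polynomial of `-Δ` in logarithmic coordinates on functions
`x ↦ p(x) ‖x‖ ^ a f(log ‖x‖)`, where `p` is a solid harmonic of degree `ℓ`. -/
def negLapPoly (n ℓ : ℕ) (a : ℂ) : Polynomial ℂ :=
  Polynomial.C (angularParam n ℓ : ℂ) -
    (Polynomial.X + Polynomial.C (a + angularExp n ℓ)) ^ 2

theorem negLap_logLift_expFn_mul (hp : IsSolidHarmonic p ℓ) (a : ℂ) (f : SmoothFn) (hx : x ≠ 0) :
    negLap (logLift p ↑(expFn a * f)) x =
      logLift p ↑(expFn (a - 2) * diffOp (negLapPoly n ℓ a) f) x := by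
  have hpoly : -negLapPoly n ℓ a = (Polynomial.X * Polynomial.X +
      Polynomial.C (2 * angularExp n ℓ : ℂ) * Polynomial.X).comp
        (Polynomial.X + Polynomial.C a) := by
    rw [map_mul, map_ofNat]
    simp [negLapPoly, angularParam]
    ring
  have hdiff : smoothDeriv (smoothDeriv (expFn a * f)) + (2 * angularExp n ℓ : ℂ) •
      smoothDeriv (expFn a * f) = expFn a * diffOp (-negLapPoly n ℓ a) f := by
    rw [hpoly, ← diffOp_expFn_mul, diffOp_add, diffOp_mul, diffOp_mul, diffOp_C, diffOp_X, diffOp_X]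
  have hexp : expFn (a - 2) = expFn (-2) * expFn a := by
    rw [expFn_mul, neg_add_eq_sub]
  rw [negLap_logLift hp _ hx, hdiff, logLift_of_ne _ _ hx, logLift_of_ne _ _ hx, hexp, diffOp_neg]
  simp only [SmoothFn.coe_mul, SmoothFn.coe_neg]
  ring

theorem iterate_negLap_logLift (hp : IsSolidHarmonic p ℓ) (k : ℕ) (a : ℂ) (f : SmoothFn)
    (hx : x ≠ 0) : negLap^[k] (logLift p ↑(expFn a * f)) x = logLift p ↑(expFn (a - 2 * k) *
      diffOp (∏ j ∈ Finset.range k, negLapPoly n ℓ (a - 2 * j)) f) x := by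
  induction k generalizing x with
  | zero => simp [← Polynomial.C_1, -map_one]
  | succ k ih =>
    have hnhds : negLap^[k] (logLift p ↑(expFn a * f)) =ᶠ[𝓝 x] _ :=
      (eventually_ne_nhds hx).mono fun y hy => ih hy
    have hexp : a - 2 * ((k + 1 : ℕ) : ℂ) = a - 2 * k - 2 := by push_cast; ring
    rw [Function.iterate_succ_apply', (negLap_congr_nhds hnhds).eq_of_nhds,
      negLap_logLift_expFn_mul hp _ _ hx, ← diffOp_mul, Finset.prod_range_succ_comm, hexp]

theorem formalOp_logLift (hp : IsSolidHarmonic p ℓ) (k : ℕ) (c : ℝ) (f : SmoothFn) (hx : x ≠ 0) :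
    formalOp n k c (logLift p ↑(expFn (k - 1 - angularExp n ℓ) * f)) x =
      logLift p ↑(expFn (-k - 1 - angularExp n ℓ) * diffOp (radialPoly k (angularParam n ℓ) c) f)
        x := by
  set a : ℂ := k - 1 - angularExp n ℓ with ha
  have hexp : expFn (-k - 1 - angularExp n ℓ) = expFn (a - 2 * k) := by
    rw [ha]; congr 1; ring
  have hpotential : expFn (-k - 1 - angularExp n ℓ) (Real.log ‖x‖) =
      (((‖x‖ ^ (2 * k))⁻¹ : ℝ) : ℂ) * expFn a (Real.log ‖x‖) := by
    rw [← expFn_neg_log_norm _ hx, ← SmoothFn.coe_mul, expFn_mul, ha]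
    push_cast
    ring_nf
  have hprod : radialPoly k (angularParam n ℓ) c =
      ∏ j ∈ Finset.range k, negLapPoly n ℓ (a - 2 * j) + Polynomial.C (c : ℂ) := by
    refine congrArg (· + _) (Finset.prod_congr rfl fun j _ => ?_)
    rw [negLapPoly, ha]
    congr 4; ring
  rw [formalOp, Pi.add_apply, Pi.mul_apply, iterate_negLap_logLift hp k a f hx, ← hexp, hprod,
    diffOp_add, diffOp_C, potential, logLift_of_ne _ _ hx, logLift_of_ne _ _ hx,
    logLift_of_ne _ _ hx]
  simp only [SmoothFn.coe_mul, SmoothFn.coe_add, SmoothFn.coe_smul, hpotential]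
  push_cast
  ring

end LogRadialFunctions

section LogPolarCoordinates

open scoped ENNReal

theorem lintegral_fun_norm {E : Type*} [NormedAddCommGroup E] [NormedSpace ℝ E]
    [FiniteDimensional ℝ E] [Nontrivial E] [MeasurableSpace E] [BorelSpace E] (μ : Measure E)
    [μ.IsAddHaarMeasure] {G : ℝ → ℝ≥0∞} (hG : Measurable G) :
    ∫⁻ x, G ‖x‖ ∂μ = μ.toSphere Set.univ *
      ∫⁻ r in Set.Ioi 0, ENNReal.ofReal (r ^ (Module.finrank ℝ E - 1)) * G r := by
  have hm : Measurable fun r : Set.Ioi (0 : ℝ) => G r := hG.comp measurable_subtype_coe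
  calc ∫⁻ x, G ‖x‖ ∂μ
      = ∫⁻ x : ({(0)}ᶜ : Set E), G ‖x.1‖ ∂(μ.comap Subtype.val) := by
        rw [lintegral_subtype_comap (measurableSet_singleton _).compl fun x : E => G ‖x‖,
          restrict_compl_singleton]
    _ = ∫⁻ y : Metric.sphere (0 : E) 1 × Set.Ioi (0 : ℝ), G y.2
          ∂(μ.toSphere.prod (Measure.volumeIoiPow (Module.finrank ℝ E - 1))) := by
        simpa using (Measure.measurePreserving_homeomorphUnitSphereProd μ).lintegral_comp
          (hm.comp measurable_snd)
    _ = μ.toSphere Set.univ *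
          ∫⁻ r : Set.Ioi (0 : ℝ), G r ∂(Measure.volumeIoiPow (Module.finrank ℝ E - 1)) := by
        rw [lintegral_prod (fun y : Metric.sphere (0 : E) 1 × Set.Ioi (0 : ℝ) => G y.2)
          (hm.comp measurable_snd).aemeasurable]
        dsimp only
        rw [lintegral_const, mul_comm]
    _ = _ := by
        rw [Measure.volumeIoiPow, lintegral_withDensity_eq_lintegral_mul _ (by fun_prop) hm]
        congr 1
        exact lintegral_subtype_comap measurableSet_Ioi
          fun r : ℝ => ENNReal.ofReal (r ^ (Module.finrank ℝ E - 1)) * G r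

theorem lintegral_Ioi_eq_lintegral_exp (G : ℝ → ℝ≥0∞) :
    ∫⁻ r in Set.Ioi 0, G r = ∫⁻ t, ENNReal.ofReal (Real.exp t) * G (Real.exp t) := by
  rw [← Real.range_exp, ← Set.image_univ, lintegral_image_eq_lintegral_abs_deriv_mul
    MeasurableSet.univ (fun t _ => (Real.hasDerivAt_exp t).hasDerivWithinAt)
    Real.exp_injective.injOn, setLIntegral_univ]
  simp only [abs_of_pos (Real.exp_pos _)]

variable {n : ℕ}

/-- The surface measure of the unit sphere in `ℝⁿ`. -/
def sphereMass (n : ℕ) : ℝ≥0∞ := (volume : Measure (Euc n)).toSphere Set.univ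

theorem sphereMass_ne_top : sphereMass n ≠ ⊤ := measure_ne_top _ _

theorem measurable_log_norm : Measurable fun x : Euc n => Real.log ‖x‖ :=
  Real.measurable_log.comp measurable_norm

variable [NeZero n]

theorem sphereMass_ne_zero : sphereMass n ≠ 0 :=
  Measure.measure_univ_ne_zero.2 (Measure.toSphere_ne_zero _)

theorem map_log_norm : (volume : Measure (Euc n)).map (fun x => Real.log ‖x‖) =
    sphereMass n • volume.withDensity fun t : ℝ => ENNReal.ofReal (Real.exp (n * t)) := by
  refine Measure.ext_of_lintegral _ fun G hG => ?_
  have hpolar := lintegral_fun_norm (volume : Measure (Euc n)) (hG.comp Real.measurable_log)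
  simp only [Function.comp_apply] at hpolar
  rw [lintegral_map hG measurable_log_norm, lintegral_smul_measure,
    lintegral_withDensity_eq_lintegral_mul _ (by fun_prop) hG,
    hpolar, finrank_euclideanSpace_fin,
    lintegral_Ioi_eq_lintegral_exp, smul_eq_mul, sphereMass]
  congr 2 with t
  have hn : ((n - 1 : ℕ) : ℝ) = n - 1 := Nat.cast_pred (NeZero.pos n)
  rw [Real.log_exp, ← mul_assoc, ← ENNReal.ofReal_mul (Real.exp_pos t).le,
    ← Real.exp_nat_mul, ← Real.exp_add, hn, Pi.mul_apply]
  ring_nf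

theorem quasiMeasurePreserving_log_norm :
    Measure.QuasiMeasurePreserving (fun x : Euc n => Real.log ‖x‖) volume volume :=
  ⟨measurable_log_norm, map_log_norm (n := n) ▸
    (withDensity_absolutelyContinuous _ _).smul_left _⟩

theorem lintegral_log_norm {G : ℝ → ℝ≥0∞} (hG : AEMeasurable G) :
    ∫⁻ x : Euc n, G (Real.log ‖x‖) =
      sphereMass n * ∫⁻ t, ENNReal.ofReal (Real.exp (n * t)) * G t := by
  rw [← lintegral_map' (f := G) (g := fun x : Euc n => Real.log ‖x‖)
    (hG.mono_ac quasiMeasurePreserving_log_norm.2) measurable_log_norm.aemeasurable, map_log_norm,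
    lintegral_smul_measure, lintegral_withDensity_eq_lintegral_mul₀ (by fun_prop) hG]
  rfl

theorem integral_log_norm {G : ℝ → ℂ} (hG : Continuous G) :
    ∫ x : Euc n, G (Real.log ‖x‖) =
      (sphereMass n).toReal * ∫ t : ℝ, (Real.exp (n * t) : ℂ) * G t := by
  rw [← integral_map (φ := fun x : Euc n => Real.log ‖x‖) measurable_log_norm.aemeasurable
    hG.aestronglyMeasurable, map_log_norm, integral_smul_measure,
    integral_withDensity_eq_integral_toReal_smul (by fun_prop) (by simp)]
  simp [ENNReal.toReal_ofReal (Real.exp_pos _).le]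

theorem ae_ne_zero : ∀ᵐ x : Euc n, x ≠ 0 := compl_mem_ae_iff.2 (measure_singleton _)

end LogPolarCoordinates

section RadialFunctions

open scoped NNReal

variable {n ℓ : ℕ} {p : MvPolynomial (Fin n) ℂ} {x : Euc n}

theorem exists_norm_polyFn_le (hp : p.IsHomogeneous ℓ) :
    ∃ K : ℝ≥0, ∀ x, ‖polyFn p x‖ ≤ K * ‖x‖ ^ ℓ := by
  refine ⟨∑ d ∈ p.support, ‖p.coeff d‖₊, fun x => ?_⟩
  have heval : polyFn p x = MvPolynomial.eval (fun i => (x i : ℂ)) p := by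
    rw [polyFn, MvPolynomial.aeval_def, MvPolynomial.eval₂_eq, MvPolynomial.eval_eq,
      Finset.sum_apply]
    simp
  rw [heval, MvPolynomial.eval_eq, NNReal.coe_sum, Finset.sum_mul]
  refine (norm_sum_le _ _).trans (Finset.sum_le_sum fun d hd => ?_)
  have hdeg : d.degree = ℓ :=
    of_not_not fun h => MvPolynomial.mem_support_iff.1 hd (hp.coeff_eq_zero h)
  rw [norm_mul, norm_prod, coe_nnnorm, ← hdeg, Finsupp.degree_apply, ← Finset.prod_pow_eq_pow_sum]
  refine mul_le_mul_of_nonneg_left (Finset.prod_le_prod (fun _ _ => norm_nonneg _) fun i _ => ?_)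
    (norm_nonneg _)
  rw [norm_pow, Complex.norm_real]
  exact pow_le_pow_left₀ (norm_nonneg _) (PiLp.norm_apply_le x i) _

/-- The function `p(x) |x|^(-ℓ - n/2) f(log |x|)` on `ℝⁿ`, normalized so that `f ↦ radialFn p ℓ f`
is bounded from `L²(ℝ)` to `L²(ℝⁿ)` for homogeneous `p` of degree `ℓ`. -/
def radialFn (p : MvPolynomial (Fin n) ℂ) (ℓ : ℕ) (f : ℝ → ℂ) : Euc n → ℂ :=
  logLift p fun t => expFn (-(angularExp n ℓ + 1)) t * f t

theorem radialFn_zero_right (p : MvPolynomial (Fin n) ℂ) (ℓ : ℕ) (f : ℝ → ℂ) :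
    radialFn p ℓ f 0 = 0 := if_pos rfl

theorem radialFn_of_ne (p : MvPolynomial (Fin n) ℂ) (ℓ : ℕ) (f : ℝ → ℂ) (hx : x ≠ 0) :
    radialFn p ℓ f x =
      polyFn p x * (expFn (-(angularExp n ℓ + 1)) (Real.log ‖x‖) * f (Real.log ‖x‖)) :=
  logLift_of_ne _ _ hx

theorem radialFn_add (p : MvPolynomial (Fin n) ℂ) (ℓ : ℕ) (f g : ℝ → ℂ) :
    radialFn p ℓ (f + g) = radialFn p ℓ f + radialFn p ℓ g := by
  ext x
  rcases eq_or_ne x 0 with rfl | hx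
  · simp [radialFn_zero_right]
  · simp only [radialFn_of_ne _ _ _ hx, Pi.add_apply]
    ring

theorem radialFn_smul (p : MvPolynomial (Fin n) ℂ) (ℓ : ℕ) (a : ℂ) (f : ℝ → ℂ) :
    radialFn p ℓ (a • f) = a • radialFn p ℓ f := by
  ext x
  rcases eq_or_ne x 0 with rfl | hx
  · simp [radialFn_zero_right]
  · simp only [radialFn_of_ne _ _ _ hx, Pi.smul_apply, smul_eq_mul]
    ring

theorem exists_enorm_radialFn_sq_le (hp : p.IsHomogeneous ℓ) : ∃ K : ℝ≥0, ∀ (f : ℝ → ℂ) (x),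
    x ≠ 0 → ‖radialFn p ℓ f x‖ₑ ^ 2 ≤
      K ^ 2 * (ENNReal.ofReal (Real.exp (-n * Real.log ‖x‖)) * ‖f (Real.log ‖x‖)‖ₑ ^ 2) := by
  obtain ⟨K, hK⟩ := exists_norm_polyFn_le hp
  refine ⟨K, fun f x hx => ?_⟩
  have hexp : Real.exp (-n * Real.log ‖x‖) =
      (‖x‖ ^ ℓ * ‖expFn (-(angularExp n ℓ + 1)) (Real.log ‖x‖)‖) ^ 2 := by
    rw [norm_expFn, ← Real.exp_log (pow_pos (norm_pos_iff.2 hx) ℓ), ← Real.exp_add,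
      ← Real.exp_nat_mul, Real.log_pow, angularExp]
    congr 1
    simp
    ring
  have hpoly : ‖polyFn p x‖ₑ ≤ K * ENNReal.ofReal (‖x‖ ^ ℓ) := by
    rw [← ofReal_norm, ← ENNReal.ofReal_coe_nnreal, ← ENNReal.ofReal_mul K.coe_nonneg]
    exact ENNReal.ofReal_le_ofReal (hK x)
  rw [hexp, ENNReal.ofReal_pow (by positivity), ENNReal.ofReal_mul (by positivity), ofReal_norm,
    ← mul_pow, ← mul_pow, radialFn_of_ne _ _ _ hx, enorm_mul, enorm_mul, ← mul_assoc, ← mul_assoc,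
    ← mul_assoc]
  gcongr

variable [NeZero n]

theorem radialFn_congr_ae (p : MvPolynomial (Fin n) ℂ) (ℓ : ℕ) {f g : ℝ → ℂ}
    (h : f =ᵐ[volume] g) : radialFn p ℓ f =ᵐ[volume] radialFn p ℓ g := by
  filter_upwards [quasiMeasurePreserving_log_norm.ae h, ae_ne_zero] with x hx hx0
  rw [radialFn_of_ne _ _ _ hx0, radialFn_of_ne _ _ _ hx0, hx]

theorem aestronglyMeasurable_radialFn (p : MvPolynomial (Fin n) ℂ) (ℓ : ℕ) {f : ℝ → ℂ}
    (hf : AEStronglyMeasurable f) : AEStronglyMeasurable (radialFn p ℓ f) := by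
  have hmul : AEStronglyMeasurable fun x : Euc n => polyFn p x *
      (expFn (-(angularExp n ℓ + 1)) (Real.log ‖x‖) * f (Real.log ‖x‖)) :=
    (contDiff_polyFn p).continuous.aestronglyMeasurable.mul
      (((expFn _).continuous.measurable.comp measurable_log_norm).aestronglyMeasurable.mul
        (hf.comp_quasiMeasurePreserving quasiMeasurePreserving_log_norm))
  exact hmul.congr (ae_ne_zero.mono fun x hx => (radialFn_of_ne p ℓ f hx).symm)

theorem exists_eLpNorm_radialFn_le (hp : p.IsHomogeneous ℓ) : ∃ K : ℝ≥0,
    ∀ f : ℝ → ℂ, AEStronglyMeasurable f → eLpNorm (radialFn p ℓ f) 2 ≤ K * eLpNorm f 2 := by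
  obtain ⟨K, hK⟩ := exists_enorm_radialFn_sq_le hp
  refine ⟨K * NNReal.sqrt (sphereMass n).toNNReal, fun f hf => ?_⟩
  rw [← ENNReal.pow_le_pow_left_iff two_ne_zero, mul_pow, eLpNorm_two_sq, eLpNorm_two_sq]
  calc ∫⁻ x, ‖radialFn p ℓ f x‖ₑ ^ 2
      ≤ ∫⁻ x : Euc n, K ^ 2 * (fun t : ℝ =>
          ENNReal.ofReal (Real.exp (-n * t)) * ‖f t‖ₑ ^ 2) (Real.log ‖x‖) :=
        lintegral_mono_ae (ae_ne_zero.mono (hK f))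
    _ = K ^ 2 * (sphereMass n * ∫⁻ t, ‖f t‖ₑ ^ 2) := by
        rw [lintegral_const_mul' _ _ (by finiteness), lintegral_log_norm
          (G := fun t => ENNReal.ofReal (Real.exp (-n * t)) * ‖f t‖ₑ ^ 2)
          (AEMeasurable.mul (by fun_prop) (hf.enorm.pow_const 2))]
        congr 3 with t
        rw [← mul_assoc, ← ENNReal.ofReal_mul (by positivity), ← Real.exp_add]
        simp
    _ = _ := by
        rw [ENNReal.coe_mul, mul_pow, ← ENNReal.coe_pow (NNReal.sqrt _), NNReal.sq_sqrt,
          ENNReal.coe_toNNReal sphereMass_ne_top, mul_assoc]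

theorem memLp_radialFn (hp : p.IsHomogeneous ℓ) {f : ℝ → ℂ} (hf : MemLp f 2) :
    MemLp (radialFn p ℓ f) 2 := by
  obtain ⟨K, hK⟩ := exists_eLpNorm_radialFn_le hp
  exact ⟨aestronglyMeasurable_radialFn p ℓ hf.1,
    (hK f hf.1).trans_lt (ENNReal.mul_lt_top ENNReal.coe_lt_top hf.2)⟩

/-- The bounded operator `L²(ℝ) → L²(ℝⁿ)` induced by `radialFn p ℓ`. -/
def radialLift (hp : p.IsHomogeneous ℓ) : Lp ℂ 2 (volume : Measure ℝ) →L[ℂ] L2Euc n :=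
  LinearMap.mkContinuousOfExistsBound
    { toFun := fun f => (memLp_radialFn hp (Lp.memLp f)).toLp
      map_add' := fun f g => by
        rw [← MemLp.toLp_add, MemLp.toLp_eq_toLp_iff, ← radialFn_add]
        exact radialFn_congr_ae p ℓ (Lp.coeFn_add f g)
      map_smul' := fun a f => by
        rw [RingHom.id_apply, ← MemLp.toLp_const_smul, MemLp.toLp_eq_toLp_iff, ← radialFn_smul]
        exact radialFn_congr_ae p ℓ (Lp.coeFn_smul a f) } <| by
    obtain ⟨K, hK⟩ := exists_eLpNorm_radialFn_le hp
    refine ⟨K, fun f => ?_⟩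
    rw [LinearMap.coe_mk, AddHom.coe_mk, Lp.norm_toLp, Lp.norm_def, ← ENNReal.coe_toReal,
      ← ENNReal.toReal_mul]
    exact ENNReal.toReal_mono (ENNReal.mul_ne_top ENNReal.coe_ne_top (Lp.eLpNorm_ne_top f))
      (hK f (Lp.aestronglyMeasurable f))

theorem radialLift_toLp (hp : p.IsHomogeneous ℓ) {f : ℝ → ℂ} (hf : MemLp f 2) :
    radialLift hp hf.toLp = (memLp_radialFn hp hf).toLp :=
  (MemLp.toLp_eq_toLp_iff (memLp_radialFn hp (Lp.memLp _)) (memLp_radialFn hp hf)).2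
    (radialFn_congr_ae p ℓ hf.coeFn_toLp)

end RadialFunctions

section DeficiencyVectors

open scoped InnerProductSpace

variable {n ℓ k : ℕ} {p : MvPolynomial (Fin n) ℂ} {c : ℝ} {u : L2Euc n} {ν : ℂ}

/-- The test function on `ℝⁿ` obtained from a test function on the line by `radialFn`. -/
def radialTest (p : MvPolynomial (Fin n) ℂ) (ℓ : ℕ) (φ : TestFn) : testFunctions n :=
  ⟨radialFn p ℓ φ, logLift_mem_testFunctions p (G := expFn (-(angularExp n ℓ + 1)) * φ.1)
    φ.hasCompactSupport.mul_left⟩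

theorem radialFn_expFn_mul (p : MvPolynomial (Fin n) ℂ) (ℓ : ℕ) (a : ℂ) (f : SmoothFn) :
    radialFn p ℓ ↑(expFn a * f) = logLift p ↑(expFn (a - 1 - angularExp n ℓ) * f) := by
  have hexp : expFn (a - 1 - angularExp n ℓ) = expFn (-(angularExp n ℓ + 1)) * expFn a := by
    rw [expFn_mul]; ring_nf
  rw [hexp, mul_assoc]
  rfl

theorem formalOp_radialFn (hp : IsSolidHarmonic p ℓ) (k : ℕ) (c : ℝ) (f : SmoothFn) {x : Euc n}
    (hx : x ≠ 0) : formalOp n k c (radialFn p ℓ ↑(expFn k * f)) x =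
      radialFn p ℓ ↑(expFn (-k) * diffOp (radialPoly k (angularParam n ℓ) c) f) x := by
  rw [radialFn_expFn_mul, radialFn_expFn_mul, formalOp_logLift hp k c f hx]

theorem formalTest_radialTest (hp : IsSolidHarmonic p ℓ) (k : ℕ) (c : ℝ) (φ : TestFn) :
    formalTest n k c (radialTest p ℓ (expFn k • φ)) =
      radialTest p ℓ (expFn (-k) • testOp (radialPoly k (angularParam n ℓ) c) φ) := by
  refine Subtype.ext (funext fun x => ?_)
  rcases eq_or_ne x 0 with rfl | hx
  · rw [image_eq_zero_of_notMem_tsupport (formalTest n k c _).2.2.2,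
      image_eq_zero_of_notMem_tsupport (radialTest p ℓ _).2.2.2]
  · rw [coe_formalTest]
    exact formalOp_radialFn hp k c φ hx

variable [NeZero n]

theorem inner_testLp_radialTest (hp : p.IsHomogeneous ℓ) (u : L2Euc n) (φ : TestFn) :
    ⟪u, testLp (radialTest p ℓ φ)⟫_ℂ = ∫ t, star ((radialLift hp).adjoint u t) * φ t := by
  have hφ : MemLp φ 2 := φ.1.continuous.memLp_of_hasCompactSupport φ.hasCompactSupport
  have hlift : radialLift hp hφ.toLp = testLp (radialTest p ℓ φ) := by
    rw [radialLift_toLp]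
    exact eq_testLp (MemLp.coeFn_toLp _)
  rw [← hlift, ← ContinuousLinearMap.adjoint_inner_left, L2.inner_def]
  refine integral_congr_ae ?_
  filter_upwards [hφ.coeFn_toLp] with t ht
  rw [ht, RCLike.inner_apply, mul_comm]
  rfl

theorem weakSolution_adjoint_radialLift (hp : IsSolidHarmonic p ℓ)
    (hu : ∀ f, ⟪u, testLp (formalTest n k c f)⟫_ℂ = ν * ⟪u, testLp f⟫_ℂ) :
    WeakSolution (radialPoly k (angularParam n ℓ) c) k ν
      fun t => star ((radialLift hp.isHomogeneous).adjoint u t) := by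
  intro φ
  have h := hu (radialTest p ℓ (expFn k • φ))
  rw [formalTest_radialTest hp, inner_testLp_radialTest hp.isHomogeneous,
    inner_testLp_radialTest hp.isHomogeneous] at h
  rw [Complex.ofReal_natCast]
  exact h

theorem inner_testLp_radialTest_eq_zero (hk : k ≠ 0) (hp : IsSolidHarmonic p ℓ)
    (hroot : ∀ z, (radialPoly k (angularParam n ℓ) c).IsRoot z → k ≤ |z.re|)
    (hν : star ν = -ν) (hν0 : ν ≠ 0)
    (hu : ∀ f, ⟪u, testLp (formalTest n k c f)⟫_ℂ = ν * ⟪u, testLp f⟫_ℂ) (φ : TestFn) :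
    ⟪u, testLp (radialTest p ℓ φ)⟫_ℂ = 0 := by
  have hzero := (weakSolution_adjoint_radialLift hp hu).ae_eq_zero (radialPoly_ne_zero hk _ _)
    (radialPoly_comp_neg_X _ _ _) (map_conj_radialPoly _ _ _) hroot
    (Nat.cast_pos.2 (Nat.pos_of_ne_zero hk)) hν hν0 (Lp.memLp _).star
  rw [inner_testLp_radialTest hp.isHomogeneous, integral_eq_zero_of_ae]
  filter_upwards [hzero] with t ht
  rw [ht, Pi.zero_apply, zero_mul]

end DeficiencyVectors

section Completeness

open MvPolynomial
open scoped InnerProductSpace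

variable {n : ℕ} {u : L2Euc n}

/-- The linear map sending a polynomial `p` to the test function `p(x) χ(log ‖x‖)` on `ℝⁿ`. -/
def polyTest (χ : TestFn) : MvPolynomial (Fin n) ℂ →ₗ[ℂ] testFunctions n where
  toFun p := ⟨logLift p χ, logLift_mem_testFunctions p χ.hasCompactSupport⟩
  map_add' p q := Subtype.ext <| funext fun x => by
    by_cases hx : x = 0 <;> simp [logLift, hx, add_mul]
  map_smul' a p := Subtype.ext <| funext fun x => by
    by_cases hx : x = 0 <;> simp [logLift, hx, mul_assoc]

theorem polyTest_eq_radialTest (χ : TestFn) (p : MvPolynomial (Fin n) ℂ) (ℓ : ℕ) :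
    polyTest χ p = radialTest p ℓ (expFn (angularExp n ℓ + 1) • χ) := by
  have hχ : (χ : ℝ → ℂ) = fun t => expFn (-(angularExp n ℓ + 1)) t *
      (expFn (angularExp n ℓ + 1) • χ) t := funext fun t => by
    rw [TestFn.coe_smoothFn_smul, ← mul_assoc, ← SmoothFn.coe_mul, expFn_mul, neg_add_cancel,
      expFn_zero]
    exact (one_mul _).symm
  exact Subtype.ext (congrArg (logLift p) hχ)

theorem polyFn_radiusSq (x : Euc n) : polyFn (radiusSq (Fin n) ℂ) x = ((‖x‖ ^ 2 : ℝ) : ℂ) := by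
  rw [EuclideanSpace.real_norm_sq_eq]
  simp [radiusSq, polyFn_X]

theorem polyTest_radiusSq_pow_mul (j : ℕ) (χ : TestFn) (p : MvPolynomial (Fin n) ℂ) :
    polyTest χ (radiusSq (Fin n) ℂ ^ j * p) = polyTest (expFn (2 * j) • χ) p := by
  refine Subtype.ext (funext fun x => ?_)
  change logLift _ χ x = logLift p _ x
  rcases eq_or_ne x 0 with rfl | hx
  · exact (if_pos rfl).trans (if_pos rfl).symm
  have hradius : polyFn (radiusSq (Fin n) ℂ ^ j) x = expFn (2 * j) (Real.log ‖x‖) := by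
    have hexp : (2 * j : ℂ) * (Real.log ‖x‖ : ℂ) = ((j * Real.log (‖x‖ ^ 2) : ℝ) : ℂ) := by
      rw [Real.log_pow]; push_cast; ring
    rw [map_pow, Pi.pow_apply, polyFn_radiusSq, expFn_apply, hexp, ← Complex.ofReal_exp,
      Real.exp_nat_mul, Real.exp_log (by positivity), Complex.ofReal_pow (‖x‖ ^ 2)]
  rw [logLift_of_ne _ _ hx, logLift_of_ne _ _ hx, map_mul, Pi.mul_apply, hradius,
    TestFn.coe_smoothFn_smul]
  ring

theorem exists_dist_aeval_lt {X ι : Type*} [TopologicalSpace X] [CompactSpace X]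
    {coord : ι → C(X, ℂ)} (hstar : ∀ i, star (coord i) = coord i)
    (hsep : ∀ x y, x ≠ y → ∃ i, coord i x ≠ coord i y) (f : C(X, ℂ)) {ε : ℝ} (hε : 0 < ε) :
    ∃ p : MvPolynomial ι ℂ, dist f (aeval coord p) < ε := by
  have hseparates : (StarAlgebra.adjoin ℂ (Set.range coord)).SeparatesPoints := fun x y hxy =>
    have ⟨i, hi⟩ := hsep x y hxy
    ⟨coord i, ⟨coord i, StarAlgebra.subset_adjoin ℂ _ ⟨i, rfl⟩, rfl⟩, hi⟩
  have hmem : f ∈ (StarAlgebra.adjoin ℂ (Set.range coord)).topologicalClosure := by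
    rw [ContinuousMap.starSubalgebra_topologicalClosure_eq_top_of_separatesPoints _ hseparates]
    exact StarSubalgebra.mem_top
  obtain ⟨g, hg, hfg⟩ := Metric.mem_closure_iff.1 hmem ε hε
  have hstarRange : star (Set.range coord) = Set.range coord := by
    simp only [← Set.image_star, ← Set.range_comp, Function.comp_def, hstar]
  rw [SetLike.mem_coe, ← StarSubalgebra.mem_toSubalgebra, StarAlgebra.adjoin_toSubalgebra,
    hstarRange, Set.union_self, Algebra.adjoin_range_eq_range_aeval] at hg
  obtain ⟨p, rfl⟩ := hg
  exact ⟨p, hfg⟩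

theorem exists_norm_sub_polyFn_lt {K : Set (Euc n)} (hK : IsCompact K) {f : Euc n → ℂ}
    (hf : ContinuousOn f K) {ε : ℝ} (hε : 0 < ε) :
    ∃ p, ∀ x ∈ K, ‖f x - polyFn p x‖ < ε := by
  have : CompactSpace K := isCompact_iff_compactSpace.1 hK
  let coord (i : Fin n) : C(K, ℂ) := ⟨fun x => (x.1 i : ℂ), by fun_prop⟩
  have hsep (x y : K) (hxy : x ≠ y) : ∃ i, coord i x ≠ coord i y := by
    by_contra! h
    exact hxy (Subtype.ext (PiLp.ext fun i => Complex.ofReal_injective (h i)))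
  obtain ⟨p, hp⟩ := exists_dist_aeval_lt (coord := coord)
    (fun i => ContinuousMap.ext fun x => Complex.conj_ofReal _) hsep
    ⟨K.domRestrict f, hf.domRestrict⟩ hε
  refine ⟨p, fun x hx => ?_⟩
  have heval : (aeval coord p : C(K, ℂ)) ⟨x, hx⟩ = polyFn p x :=
    DFunLike.congr_fun (algHom_ext (f := (ContinuousMap.evalAlgHom ℂ ℂ (⟨x, hx⟩ : K)).comp
      (aeval coord)) (g := (Pi.evalAlgHom ℂ (fun _ : Euc n => ℂ) x).comp polyFn)
      fun i => by simp [polyFn_X, coord]) p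
  rw [← heval, ← dist_eq_norm]
  exact (ContinuousMap.dist_apply_le_dist (⟨x, hx⟩ : K)).trans_lt hp

theorem exists_testFn_eq_one (M : ℝ) : ∃ χ : TestFn, ∀ t, |t| ≤ M → χ t = 1 := by
  let b : ContDiffBump (0 : ℝ) := ⟨|M| + 1, |M| + 2, by positivity, by linarith⟩
  have hcompact : HasCompactSupport fun t => (b t : ℂ) :=
    b.hasCompactSupport.comp_left Complex.ofReal_zero
  refine ⟨⟨⟨fun t => (b t : ℂ), mem_smoothAlgebra.2 (Complex.ofRealCLM.contDiff.comp b.contDiff)⟩,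
    mem_testIdeal.2 hcompact⟩, fun t ht => ?_⟩
  have hb : b t = 1 := b.one_of_mem_closedBall <| mem_closedBall_zero_iff.2 <|
    ht.trans ((le_abs_self M).trans (le_add_of_nonneg_right zero_le_one))
  exact congrArg Complex.ofReal hb

theorem exists_abs_log_norm_le (f : testFunctions n) :
    ∃ M, ∀ x ∈ tsupport (f : Euc n → ℂ), |Real.log ‖x‖| ≤ M :=
  f.2.2.1.isCompact.exists_bound_of_continuousOn <|
    continuous_norm.continuousOn.log fun _ hx =>
      norm_ne_zero_iff.2 (ne_of_mem_of_not_mem hx f.2.2.2)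

variable [NeZero n]

theorem exists_testLp_mem_closure_range (f : testFunctions n) : ∃ χ : TestFn,
    testLp f ∈ (LinearMap.range (testLp ∘ₗ polyTest (n := n) χ)).topologicalClosure := by
  obtain ⟨M, hM⟩ := exists_abs_log_norm_le f
  obtain ⟨χ, hχ⟩ := exists_testFn_eq_one M
  refine ⟨χ, Metric.mem_closure_iff.2 fun ε hε => ?_⟩
  have hε' : 0 < ε / (‖testLp (polyTest (n := n) χ 1)‖ + 1) := by positivity
  obtain ⟨p, hp⟩ := exists_norm_sub_polyFn_lt (polyTest χ 1).2.2.1.isCompact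
    f.2.1.continuous.continuousOn hε'
  have hfactor {x : Euc n} (hx : x ≠ 0) :
      (f - polyTest χ p).1 x = (f.1 x - polyFn p x) * (polyTest χ 1).1 x := by
    change f.1 x - logLift p χ x = _ * logLift 1 χ x
    rw [logLift_of_ne _ _ hx, logLift_of_ne _ _ hx, map_one, Pi.one_apply, one_mul]
    by_cases hfx : x ∈ tsupport f.1
    · rw [hχ _ (hM x hfx), mul_one, mul_one]
    · rw [image_eq_zero_of_notMem_tsupport hfx, zero_sub, zero_sub, neg_mul]
  have hbound : ‖testLp (f - polyTest χ p)‖ ≤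
      ε / (‖testLp (polyTest (n := n) χ 1)‖ + 1) * ‖testLp (polyTest (n := n) χ 1)‖ := by
    refine Lp.norm_le_mul_norm_of_ae_le_mul ?_
    filter_upwards [coeFn_testLp (f - polyTest χ p), coeFn_testLp (polyTest (n := n) χ 1),
      ae_ne_zero] with x hleft hright hx
    rw [hleft, hright, hfactor hx, norm_mul]
    by_cases hmem : x ∈ tsupport (polyTest χ 1).1
    · exact mul_le_mul_of_nonneg_right (hp x hmem).le (norm_nonneg _)
    · rw [image_eq_zero_of_notMem_tsupport hmem, norm_zero, mul_zero, mul_zero]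
  refine ⟨_, ⟨p, rfl⟩, ?_⟩
  rw [LinearMap.comp_apply, dist_eq_norm, ← map_sub]
  refine hbound.trans_lt ?_
  rw [div_mul_eq_mul_div, div_lt_iff₀ (by positivity)]
  exact mul_lt_mul_of_pos_left (lt_add_one _) hε

theorem inner_testLp_polyTest_eq_zero (hu : ∀ ℓ (p : MvPolynomial (Fin n) ℂ), IsSolidHarmonic p ℓ →
      ∀ φ, ⟪u, testLp (radialTest p ℓ φ)⟫_ℂ = 0) (χ : TestFn) (p : MvPolynomial (Fin n) ℂ) :
    ⟪u, testLp (polyTest χ p)⟫_ℂ = 0 := by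
  have hspan (d : ℕ) : harmonicSpan (Fin n) ℂ d ≤
      LinearMap.ker ((innerSL ℂ u).toLinearMap ∘ₗ testLp ∘ₗ polyTest χ) := by
    refine Submodule.span_le.2 ?_
    rintro q ⟨j, ℓ, h, hh, -, rfl⟩
    change ⟪u, testLp (polyTest χ _)⟫_ℂ = 0
    rw [polyTest_radiusSq_pow_mul, polyTest_eq_radialTest _ h ℓ]
    exact hu ℓ h hh _
  have hsum := Submodule.sum_mem _ fun d (_ : d ∈ Finset.range (p.totalDegree + 1)) =>
    hspan d (mem_harmonicSpan (homogeneousComponent_isHomogeneous d p))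
  rw [sum_homogeneousComponent] at hsum
  exact hsum

theorem eq_zero_of_inner_testLp (hu : ∀ f, ⟪u, testLp f⟫_ℂ = 0) : u = 0 := by
  have hu2 : MemLp (fun x => star (u x)) 2 := (Lp.memLp u).star
  have hae := isOpen_compl_singleton.ae_eq_zero_of_integral_contDiff_smul_eq_zero
    (U := ({0}ᶜ : Set (Euc n))) ((hu2.locallyIntegrable one_le_two).locallyIntegrableOn _)
    fun g hg hgc hgU => by
      let f : testFunctions n := ⟨fun x => (g x : ℂ), Complex.ofRealCLM.contDiff.comp hg,
        hgc.comp_left Complex.ofReal_zero,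
        fun h => hgU (tsupport_comp_subset Complex.ofReal_zero g h) rfl⟩
      rw [← hu f, inner_testLp_right]
      exact integral_congr_ae (.of_forall fun x => mul_comm (g x : ℂ) _)
  refine Lp.ext ?_
  filter_upwards [hae, ae_ne_zero, Lp.coeFn_zero ℂ 2 volume] with x hx hx0 hzero
  rw [hzero]
  exact star_eq_zero.1 (hx hx0)

theorem eq_zero_of_inner_radialTest (hu : ∀ ℓ (p : MvPolynomial (Fin n) ℂ), IsSolidHarmonic p ℓ →
      ∀ φ, ⟪u, testLp (radialTest p ℓ φ)⟫_ℂ = 0) : u = 0 := by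
  refine eq_zero_of_inner_testLp fun f => ?_
  obtain ⟨χ, hχ⟩ := exists_testLp_mem_closure_range f
  have hker : LinearMap.range (testLp ∘ₗ polyTest χ) ≤
      LinearMap.ker (innerSL ℂ u).toLinearMap := by
    rintro _ ⟨p, rfl⟩
    exact inner_testLp_polyTest_eq_zero hu χ p
  exact Submodule.topologicalClosure_minimal _ hker (innerSL ℂ u).isClosed_ker hχ

end Completeness

section Sufficiency

open scoped InnerProductSpace

variable {n k : ℕ} [NeZero n] {c : ℝ} {ν : ℂ} {u : L2Euc n}

theorem dense_domain_opOn {L : (Euc n → ℂ) → Euc n → ℂ} {A : Module.End ℂ (testFunctions n)}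
    (hA : ∀ f, (A f : Euc n → ℂ) = L f) : Dense ((opOn n L).domain : Set (L2Euc n)) := by
  rw [Submodule.dense_iff_topologicalClosure_eq_top,
    Submodule.topologicalClosure_eq_top_iff, Submodule.eq_bot_iff]
  intro u hu
  refine eq_zero_of_inner_testLp fun f => ?_
  obtain ⟨x, hx, -⟩ := exists_testLp_eq_opOn hA f
  rw [← hx, ← inner_conj_symm, hu x x.2, map_zero]

theorem eq_zero_of_inner_testLp_formalTest (hk : k ≠ 0)
    (hroot : ∀ ℓ z, (radialPoly k (angularParam n ℓ) c).IsRoot z → k ≤ |z.re|)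
    (hν : star ν = -ν) (hν0 : ν ≠ 0)
    (hu : ∀ f, ⟪u, testLp (formalTest n k c f)⟫_ℂ = ν * ⟪u, testLp f⟫_ℂ) : u = 0 :=
  eq_zero_of_inner_radialTest fun ℓ _ hp φ =>
    inner_testLp_radialTest_eq_zero hk hp (hroot ℓ) hν hν0 hu φ

theorem essentiallySelfAdjoint_opOn_formalOp (hk : k ≠ 0)
    (hroot : ∀ ℓ z, (radialPoly k (angularParam n ℓ) c).IsRoot z → k ≤ |z.re|) :
    EssentiallySelfAdjoint (opOn n (formalOp n k c)) := by
  have hdeficiency (ν : ℂ) (hν : star ν = -ν) (hν0 : ν ≠ 0) (u : L2Euc n)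
      (hu : ∀ x : (opOn n (formalOp n k c)).domain,
        ⟪u, opOn n (formalOp n k c) x⟫_ℂ = ν * ⟪u, x⟫_ℂ) : u = 0 := by
    refine eq_zero_of_inner_testLp_formalTest hk hroot hν hν0 fun f => ?_
    obtain ⟨x, hx, hTx⟩ := exists_testLp_eq_opOn (coe_formalTest k c) f
    rw [← hTx, ← hx, hu x]
  exact essentiallySelfAdjoint_of_isFormalAdjoint (dense_domain_opOn (coe_formalTest k c))
    (isFormalAdjoint_opOn (coe_formalTest k c) (inner_testLp_formalTest k c))
    (hdeficiency Complex.I (by simp) Complex.I_ne_zero)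
    (hdeficiency (-Complex.I) (by simp) (neg_ne_zero.2 Complex.I_ne_zero))

end Sufficiency

section Monomials

open Polynomial

/-- The inclusion `t ↦ t` of the line into `ℂ` as a smooth function. -/
def idFn : SmoothFn := ⟨fun t => t, mem_smoothAlgebra.2 Complex.ofRealCLM.contDiff⟩

theorem idFn_pow_apply (j : ℕ) (t : ℝ) : (idFn ^ j) t = (t : ℂ) ^ j := rfl

@[simp] theorem smoothDeriv_one : smoothDeriv 1 = 0 := by
  simpa using smoothDeriv_expFn 0

theorem smoothDeriv_idFn_pow_succ (j : ℕ) :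
    smoothDeriv (idFn ^ (j + 1)) = (j + 1 : ℂ) • idFn ^ j :=
  smoothDeriv_eq fun t =>
    ((Complex.ofRealCLM.hasDerivAt (x := t)).pow (j + 1)).congr_deriv (by simp [idFn_pow_apply])

theorem diffOp_apply_one (P : ℂ[X]) : diffOp P 1 = P.eval 0 • (1 : SmoothFn) := by
  induction P using polynomial_induction_mul_X with
  | C a => simp
  | add P Q hP hQ => rw [diffOp_add, hP, hQ, eval_add, add_smul]
  | mul_X P _ => simp [diffOp_mul_X]

theorem diffOp_X_pow_idFn_pow (j : ℕ) :
    diffOp (X ^ j) (idFn ^ j) = (j.factorial : ℂ) • (1 : SmoothFn) := by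
  induction j with
  | zero => simp
  | succ j ih =>
    rw [pow_succ X, diffOp_mul_X, smoothDeriv_idFn_pow_succ, map_smul, ih, smul_smul,
      Nat.factorial_succ]
    push_cast
    rfl

theorem diffOp_X_pow_mul_idFn_pow (j : ℕ) (Q : ℂ[X]) :
    diffOp (X ^ j * Q) (idFn ^ j) = (j.factorial * Q.eval 0) • (1 : SmoothFn) := by
  rw [mul_comm, diffOp_mul, diffOp_X_pow_idFn_pow, map_smul, diffOp_apply_one, smul_smul]

theorem diffOp_expFn_mul_idFn_pow_eq_zero {P : ℂ[X]} {z : ℂ} {j : ℕ}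
    (h : X ^ (j + 1) ∣ P.comp (X + C z)) : diffOp P (expFn z * idFn ^ j) = 0 := by
  obtain ⟨S, hS⟩ := h
  rw [diffOp_expFn_mul, hS, pow_succ, mul_assoc, diffOp_X_pow_mul_idFn_pow]
  simp

theorem exists_comp_X_add_C_eq {P : ℂ[X]} (hP0 : P ≠ 0) {z : ℂ} (hz : P.IsRoot z) :
    ∃ (j : ℕ) (S : ℂ[X]), S.eval 0 ≠ 0 ∧ P.comp (X + C z) = X ^ (j + 1) * S := by
  obtain ⟨R, hR, hRz⟩ := exists_eq_pow_rootMultiplicity_mul_and_not_dvd P hP0 z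
  obtain ⟨j, hj⟩ := Nat.exists_eq_succ_of_ne_zero ((rootMultiplicity_pos hP0).2 hz).ne'
  refine ⟨j, R.comp (X + C z), ?_, ?_⟩
  · simpa [dvd_iff_isRoot] using hRz
  · rw [hj] at hR
    conv_lhs => rw [hR]
    simp

theorem comp_X_add_C_neg {P : ℂ[X]} (heven : P.comp (-X) = P) (z : ℂ) :
    P.comp (X + C (-z)) = (P.comp (X + C z)).comp (-X) := by
  conv_lhs => rw [← heven]
  rw [comp_assoc, comp_assoc]
  simp [add_comm]

end Monomials

section SmoothSteps

open Polynomial Filter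

/-- A smooth function equal to `1` for `t ≤ s` and to `0` for `s + 1 ≤ t`. -/
def stepFn (s : ℝ) : SmoothFn :=
  ⟨fun t => ((1 - Real.smoothTransition (t - s) : ℝ) : ℂ), mem_smoothAlgebra.2 <|
    Complex.ofRealCLM.contDiff.comp <| contDiff_const.sub <|
      Real.smoothTransition.contDiff.comp <| contDiff_id.sub contDiff_const⟩

variable {s t : ℝ}

theorem stepFn_of_le (h : t ≤ s) : stepFn s t = 1 := by
  simp [stepFn, Real.smoothTransition.zero_of_nonpos (sub_nonpos.2 h)]

theorem stepFn_of_ge (h : s + 1 ≤ t) : stepFn s t = 0 := by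
  simp [stepFn, Real.smoothTransition.one_of_one_le (le_sub_iff_add_le'.2 h)]

theorem diffOp_stepFn_mul_of_lt (P : ℂ[X]) (f : SmoothFn) (h : t < s) :
    diffOp P (stepFn s * f) t = diffOp P f t := by
  refine (diffOp_congr_nhds P ?_).eq_of_nhds
  filter_upwards [Iio_mem_nhds h] with r hr
  rw [SmoothFn.coe_mul, stepFn_of_le (le_of_lt hr), one_mul]

theorem diffOp_stepFn_mul_of_gt (P : ℂ[X]) (f : SmoothFn) (h : s + 1 < t) :
    diffOp P (stepFn s * f) t = 0 := by
  have hzero : diffOp P (stepFn s * f) t = diffOp P 0 t := by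
    refine (diffOp_congr_nhds P ?_).eq_of_nhds
    filter_upwards [Ioi_mem_nhds h] with r hr
    rw [SmoothFn.coe_mul, stepFn_of_ge (le_of_lt hr), zero_mul]
    rfl
  rw [hzero, map_zero]
  rfl

theorem hasCompactSupport_diffOp_stepFn_mul {P : ℂ[X]} {f : SmoothFn} (hf : diffOp P f = 0)
    (s : ℝ) : HasCompactSupport (diffOp P (stepFn s * f)) := by
  refine HasCompactSupport.intro (isCompact_Icc (a := s) (b := s + 1)) fun t ht => ?_
  rw [Set.mem_Icc, not_and_or, not_le, not_le] at ht
  rcases ht with hlt | hgt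
  · rw [diffOp_stepFn_mul_of_lt P f hlt, hf]
    rfl
  · exact diffOp_stepFn_mul_of_gt P f hgt

theorem hasCompactSupport_smoothDeriv_stepFn (s : ℝ) :
    HasCompactSupport (smoothDeriv (stepFn s)) := by
  have h := hasCompactSupport_diffOp_stepFn_mul (P := X) (f := 1) (by simp) s
  rwa [mul_one, diffOp_X] at h

theorem integral_smoothDeriv_stepFn (s : ℝ) : ∫ t, smoothDeriv (stepFn s) t = -1 := by
  have h := integral_of_hasDerivAt_of_tendsto (m := 1) (n := 0) (stepFn s).hasDerivAt
    ((smoothDeriv (stepFn s)).continuous.integrable_of_hasCompactSupport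
      (hasCompactSupport_smoothDeriv_stepFn s))
    (tendsto_const_nhds.congr' <| (eventually_le_atBot s).mono fun t ht => (stepFn_of_le ht).symm)
    (tendsto_const_nhds.congr' <|
      (eventually_ge_atTop (s + 1)).mono fun t ht => (stepFn_of_ge ht).symm)
  rw [h, zero_sub]

theorem memLp_stepFn_mul {f : SmoothFn} {δ : ℝ} (hδ : 0 < δ)
    (hf : f =O[atBot] fun t => Real.exp (δ * t)) (s : ℝ) : MemLp ↑(stepFn s * f) 2 := by
  rw [memLp_two_iff_integrable_sq_norm (stepFn s * f).continuous.aestronglyMeasurable]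
  have hcont : Continuous fun t => ‖(stepFn s * f) t‖ ^ 2 :=
    (stepFn s * f).continuous.norm.pow 2
  have hbot : (fun t => ‖(stepFn s * f) t‖ ^ 2) =O[atBot] fun t => Real.exp (2 * δ * t) := by
    have heq : (stepFn s * f) =ᶠ[atBot] f := by
      filter_upwards [eventually_le_atBot s] with t ht
      rw [SmoothFn.coe_mul, stepFn_of_le ht, one_mul]
    refine ((heq.trans_isBigO hf).norm_left.pow 2).congr_right fun t => ?_
    rw [← Real.exp_nat_mul, Nat.cast_two, mul_assoc]
  have htop : (fun t => ‖(stepFn s * f) t‖ ^ 2) =ᶠ[atTop] fun _ => (0 : ℝ) := by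
    filter_upwards [eventually_ge_atTop (s + 1)] with t ht
    simp [stepFn_of_ge ht]
  exact hcont.locallyIntegrable.integrable_of_isBigO_atBot_atTop hbot
    ⟨Set.Iic 0, Iic_mem_atBot 0, integrableOn_exp_mul_Iic (by positivity) 0⟩
    htop.isBigO ⟨Set.univ, univ_mem, integrableOn_zero⟩

theorem isBigO_expFn_mul_idFn_pow {z : ℂ} {δ : ℝ} (hδ : δ < z.re) (j : ℕ) :
    ↑(expFn z * idFn ^ j) =O[atBot] fun t => Real.exp (δ * t) := by
  have hpow : (fun t : ℝ => t ^ j) =O[atBot] fun t => Real.exp ((z.re - δ) * -t) := by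
    have h := (isLittleO_pow_exp_pos_mul_atTop j (sub_pos.2 hδ)).isBigO.comp_tendsto
      tendsto_neg_atBot_atTop
    refine (Asymptotics.isBigO_of_le _ fun t => ?_).trans h
    simp
  refine (Asymptotics.isBigO_of_le _ fun t => ?_).trans
    (((Asymptotics.isBigO_refl (fun t => Real.exp (z.re * t)) atBot).mul hpow).congr_right
      fun t => ?_)
  · rw [SmoothFn.coe_mul, norm_expFn_mul, idFn_pow_apply]
    simp
  · rw [← Real.exp_add]
    ring_nf

/-- The condition that `u = exp (k t) f` lies in the maximal domain of the operator
`exp (-k t) P(d/dt) exp (-k t)` in `L²(ℝ)`, to which `(-Δ)^k + c |x|^(-2k)` reduces in logarithmic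
polar coordinates. -/
def MemMaximalDomain (k : ℕ) (P : ℂ[X]) (f : SmoothFn) : Prop :=
  MemLp ↑(expFn k * f) 2 ∧ MemLp ↑(expFn (-k) * diffOp P f) 2

theorem MemMaximalDomain.conjFn {k : ℕ} {P : ℂ[X]} (hP : P.map (starRingEnd ℂ) = P) {f : SmoothFn}
    (hf : MemMaximalDomain k P f) : MemMaximalDomain k P (conjFn f) := by
  refine ⟨hf.1.congr_norm (SmoothFn.continuous _).aestronglyMeasurable (.of_forall fun t => ?_),
    hf.2.congr_norm (SmoothFn.continuous _).aestronglyMeasurable (.of_forall fun t => ?_)⟩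
  · simp [conjFn_apply]
  · simp [diffOp_conjFn, conjFn_apply, hP]

theorem memMaximalDomain_stepFn_mul {k j : ℕ} {P : ℂ[X]} {z : ℂ} (hz : -k < z.re)
    (h : X ^ (j + 1) ∣ P.comp (X + C z)) (s : ℝ) :
    MemMaximalDomain k P (stepFn s * (expFn z * idFn ^ j)) := by
  have hcompact := hasCompactSupport_diffOp_stepFn_mul (diffOp_expFn_mul_idFn_pow_eq_zero h) s
  refine ⟨?_, (SmoothFn.continuous _).memLp_of_hasCompactSupport hcompact.mul_left⟩
  obtain ⟨δ, hδ0, hδ⟩ :=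
    exists_between (show 0 < (k + z).re by simpa using neg_lt_iff_pos_add'.1 hz)
  rw [mul_left_comm, ← mul_assoc (expFn k), expFn_mul]
  exact memLp_stepFn_mul hδ0 (isBigO_expFn_mul_idFn_pow hδ j) s

theorem integral_diffOp_stepFn_mul {P S : ℂ[X]} {z : ℂ} {j : ℕ}
    (hS : P.comp (X + C z) = X ^ (j + 1) * S) (s : ℝ) :
    ∫ t, diffOp P (stepFn s * expFn z) t * (expFn (-z) * idFn ^ j) t =
      (-1) ^ (j + 1) * j.factorial * S.eval 0 := by
  have hreflect : (X ^ j * S).comp (-X) = X ^ j * ((-1) ^ j * S.comp (-X)) := by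
    rw [mul_comp, pow_comp, X_comp, neg_pow]
    ring
  calc ∫ t, diffOp P (stepFn s * expFn z) t * (expFn (-z) * idFn ^ j) t
      = ∫ t, diffOp (X ^ j * S) (smoothDeriv (stepFn s)) t * (idFn ^ j) t := by
        congr 1 with t
        have hexp : expFn z t * expFn (-z) t = 1 := by
          simp [expFn_apply, ← Complex.exp_add]
        rw [mul_comm (stepFn s), diffOp_expFn_mul, hS, pow_succ, mul_right_comm, diffOp_mul_X,
          SmoothFn.coe_mul, SmoothFn.coe_mul]
        linear_combination
          diffOp (X ^ j * S) (smoothDeriv (stepFn s)) t * (idFn ^ j) t * hexp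
    _ = ∫ t, smoothDeriv (stepFn s) t * (j.factorial * ((-1) ^ j * S.eval 0)) := by
        rw [integral_diffOp_mul _ (hasCompactSupport_smoothDeriv_stepFn s), hreflect,
          diffOp_X_pow_mul_idFn_pow]
        simp
    _ = _ := by
        rw [integral_mul_const, integral_smoothDeriv_stepFn]
        ring

-- The two cutoffs are nested, so `g` is an exact solution wherever `f` does not vanish; the
-- boundary form of `f` and `g` then reduces to `integral_diffOp_stepFn_mul`.
theorem exists_integral_diffOp_mul_ne {P : ℂ[X]} (hP0 : P ≠ 0) (heven : P.comp (-X) = P) {z : ℂ}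
    (hz : P.IsRoot z) {k : ℕ} (hk : |z.re| < k) :
    ∃ f g, MemMaximalDomain k P f ∧ MemMaximalDomain k P g ∧
      ∫ t, diffOp P f t * g t ≠ ∫ t, f t * diffOp P g t := by
  obtain ⟨j, S, hS0, hS⟩ := exists_comp_X_add_C_eq hP0 hz
  have hdvd : X ^ (0 + 1) ∣ P.comp (X + C z) :=
    hS ▸ dvd_mul_of_dvd_left (pow_dvd_pow X (by omega)) S
  have hdvd_neg : X ^ (j + 1) ∣ P.comp (X + C (-z)) :=
    ⟨(-1) ^ (j + 1) * S.comp (-X), by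
      rw [comp_X_add_C_neg heven, hS, mul_comp, pow_comp, X_comp, neg_pow]; ring⟩
  have hf := memMaximalDomain_stepFn_mul (abs_lt.1 hk).1 hdvd 0
  rw [pow_zero, mul_one] at hf
  have hg : MemMaximalDomain k P (stepFn 2 * (expFn (-z) * idFn ^ j)) :=
    memMaximalDomain_stepFn_mul (neg_lt_neg (abs_lt.1 hk).2) hdvd_neg 2
  refine ⟨_, _, hf, hg, ?_⟩
  have hleft : ∫ t, diffOp P (stepFn 0 * expFn z) t * (stepFn 2 * (expFn (-z) * idFn ^ j)) t =
      (-1) ^ (j + 1) * j.factorial * S.eval 0 := by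
    rw [← integral_diffOp_stepFn_mul hS 0]
    congr 1 with t
    rcases le_or_gt t 2 with ht | ht
    · rw [SmoothFn.coe_mul (stepFn 2), stepFn_of_le ht, one_mul]
    · rw [diffOp_stepFn_mul_of_gt P _ (by linarith), zero_mul, zero_mul]
  have hright : ∫ t, (stepFn 0 * expFn z) t *
      diffOp P (stepFn 2 * (expFn (-z) * idFn ^ j)) t = 0 := by
    refine integral_eq_zero_of_ae (.of_forall fun t => ?_)
    change (stepFn 0 * expFn z) t * diffOp P (stepFn 2 * (expFn (-z) * idFn ^ j)) t = 0
    rcases lt_or_ge t 2 with ht | ht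
    · rw [diffOp_stepFn_mul_of_lt P _ ht, diffOp_expFn_mul_idFn_pow_eq_zero hdvd_neg]
      exact mul_zero _
    · rw [SmoothFn.coe_mul, stepFn_of_ge (by linarith), zero_mul, zero_mul]
  rw [hleft, hright]
  simp [hS0, Nat.factorial_ne_zero]

end SmoothSteps

section Necessity

open scoped InnerProductSpace Topology

variable {n ℓ k : ℕ} {p : MvPolynomial (Fin n) ℂ} {c : ℝ}

theorem exists_testFn_eventuallyEq (f : SmoothFn) (φ : testFunctions n) :
    ∃ ψ : TestFn, ∀ x ∈ tsupport (φ : Euc n → ℂ), ψ =ᶠ[𝓝 (Real.log ‖x‖)] f := by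
  obtain ⟨M, hM⟩ := exists_abs_log_norm_le φ
  obtain ⟨χ, hχ⟩ := exists_testFn_eq_one (M + 1)
  refine ⟨f • χ, fun x hx => ?_⟩
  have hlt : ∀ᶠ t in 𝓝 (Real.log ‖x‖), |t| < M + 1 :=
    continuous_abs.continuousAt.eventually_lt_const ((hM x hx).trans_lt (lt_add_one M))
  filter_upwards [hlt] with t ht
  rw [TestFn.coe_smoothFn_smul, hχ t ht.le, mul_one]

theorem integral_radialFn_mul_formalOp (hp : IsSolidHarmonic p ℓ) (k : ℕ) (c : ℝ) (f : SmoothFn)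
    (φ : testFunctions n) :
    ∫ x, radialFn p ℓ ↑(expFn k * f) x * formalOp n k c φ x =
      ∫ x, radialFn p ℓ ↑(expFn (-k) * diffOp (radialPoly k (angularParam n ℓ) c) f) x *
        φ.1 x := by
  obtain ⟨ψ, hψ⟩ := exists_testFn_eventuallyEq f φ
  have hne {x : Euc n} (hx : x ∈ tsupport (φ : Euc n → ℂ)) : x ≠ 0 := fun h => φ.2.2.2 (h ▸ hx)
  calc ∫ x, radialFn p ℓ ↑(expFn k * f) x * formalOp n k c φ x
      = ∫ x, (radialTest p ℓ (expFn k • ψ)).1 x * formalOp n k c φ x := by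
        congr 1 with x
        by_cases hx : x ∈ tsupport (φ : Euc n → ℂ)
        · congr 1
          refine (radialFn_of_ne _ _ _ (hne hx)).trans <|
            .trans ?_ (radialFn_of_ne _ _ _ (hne hx)).symm
          rw [SmoothFn.coe_mul, TestFn.coe_smoothFn_smul, (hψ x hx).eq_of_nhds]
        · have hzero : formalOp n k c φ x = 0 := by
            rw [formalOp_congr_nhds (notMem_tsupport_iff_eventuallyEq.1 hx),
              ← (testFunctions n).coe_zero, ← coe_formalTest, map_zero]
            rfl
          rw [hzero, mul_zero, mul_zero]
    _ = ∫ x, formalOp n k c (radialFn p ℓ ↑(expFn k * ψ.1)) x * φ.1 x :=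
        (integral_formalOp_mul k c (radialTest p ℓ (expFn k • ψ)).2 φ.2).symm
    _ = _ := by
        congr 1 with x
        by_cases hx : x ∈ tsupport (φ : Euc n → ℂ)
        · rw [formalOp_radialFn hp k c _ (hne hx), radialFn_of_ne _ _ _ (hne hx),
            radialFn_of_ne _ _ _ (hne hx), SmoothFn.coe_mul, SmoothFn.coe_mul,
            (diffOp_congr_nhds _ (hψ x hx)).eq_of_nhds]
        · rw [image_eq_zero_of_notMem_tsupport hx, mul_zero, mul_zero]

theorem inner_testLp_toLp (φ : testFunctions n) {u : Euc n → ℂ} (hu : MemLp u 2) :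
    ⟪testLp φ, hu.toLp⟫_ℂ = ∫ x, u x * star (φ.1 x) := by
  rw [L2.inner_def]
  refine integral_congr_ae ?_
  filter_upwards [coeFn_testLp φ, hu.coeFn_toLp] with x hφ hux
  rw [hφ, hux, RCLike.inner_apply]
  rfl

variable [NeZero n]

theorem exists_mem_adjoint_domain (hp : IsSolidHarmonic p ℓ) {f : SmoothFn}
    (hf : MemMaximalDomain k (radialPoly k (angularParam n ℓ) c) f) :
    ∃ x : (opOn n (formalOp n k c)).adjoint.domain,
      x = (memLp_radialFn hp.isHomogeneous hf.1).toLp ∧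
      (opOn n (formalOp n k c)).adjoint x = (memLp_radialFn hp.isHomogeneous hf.2).toLp := by
  have hadjoint (y : (opOn n (formalOp n k c)).domain) :
      ⟪(memLp_radialFn hp.isHomogeneous hf.2).toLp, (y : L2Euc n)⟫_ℂ =
        ⟪(memLp_radialFn hp.isHomogeneous hf.1).toLp, opOn n (formalOp n k c) y⟫_ℂ := by
    obtain ⟨φ, hy, hTy⟩ := exists_opOn_eq_testLp (coe_formalTest k c) y
    rw [hy, hTy, ← inner_conj_symm, ← inner_conj_symm _ (testLp _), inner_testLp_toLp,
      inner_testLp_toLp, coe_formalTest]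
    have h := integral_radialFn_mul_formalOp hp k c f ⟨_, star_mem_testFunctions φ.2⟩
    rw [formalOp_star] at h
    exact congrArg _ h.symm
  refine ⟨⟨_, LinearPMap.mem_adjoint_domain_of_exists _ ⟨_, hadjoint⟩⟩, rfl, ?_⟩
  exact LinearPMap.adjoint_apply_eq (dense_domain_opOn (coe_formalTest k c)) _ hadjoint

theorem inner_toLp_radialFn_one {f g : SmoothFn} (hf : MemLp (radialFn (n := n) 1 0 f) 2)
    (hg : MemLp (radialFn (n := n) 1 0 g) 2) :
    ⟪hf.toLp, hg.toLp⟫_ℂ = (sphereMass n).toReal * ∫ t, star (f t) * g t := by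
  have hweight (t : ℝ) : star (expFn (-(angularExp n 0 + 1)) t) *
      expFn (-(angularExp n 0 + 1)) t = Complex.exp (-n * t) := by
    simp only [expFn_apply, Complex.star_def, ← Complex.exp_conj, ← Complex.exp_add, angularExp]
    congr 1
    simp [Complex.conj_ofNat]
    ring
  calc ⟪hf.toLp, hg.toLp⟫_ℂ
      = ∫ x : Euc n, Complex.exp (-n * Real.log ‖x‖) *
          (star (f (Real.log ‖x‖)) * g (Real.log ‖x‖)) := by
        rw [L2.inner_def]
        refine integral_congr_ae ?_
        filter_upwards [hf.coeFn_toLp, hg.coeFn_toLp, ae_ne_zero] with x hfx hgx hx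
        rw [hfx, hgx, RCLike.inner_apply, radialFn_of_ne _ _ _ hx, radialFn_of_ne _ _ _ hx,
          ← hweight]
        simp [polyFn]
        ring
    _ = (sphereMass n).toReal * ∫ t : ℝ, (Real.exp (n * t) : ℂ) *
          (Complex.exp (-n * t) * (star (f t) * g t)) :=
        integral_log_norm (G := fun t => Complex.exp (-n * t) * (star (f t) * g t))
          (by have := f.continuous; have := g.continuous; fun_prop)
    _ = _ := by
        congr 2 with t
        rw [← mul_assoc, Complex.ofReal_exp, ← Complex.exp_add]
        simp

theorem integral_diffOp_mul_of_essentiallySelfAdjoint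
    (h : EssentiallySelfAdjoint (opOn n (formalOp n k c))) {f g : SmoothFn}
    (hf : MemMaximalDomain k (radialPoly k (angularParam n 0) c) f)
    (hg : MemMaximalDomain k (radialPoly k (angularParam n 0) c) g) :
    ∫ t, diffOp (radialPoly k (angularParam n 0) c) f t * g t =
      ∫ t, f t * diffOp (radialPoly k (angularParam n 0) c) g t := by
  set P := radialPoly k (angularParam n 0) c
  have hreal : P.map (starRingEnd ℂ) = P := map_conj_radialPoly _ _ _
  obtain ⟨x, hx, hTx⟩ := exists_mem_adjoint_domain isSolidHarmonic_one (hf.conjFn hreal)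
  obtain ⟨y, hy, hTy⟩ := exists_mem_adjoint_domain isSolidHarmonic_one hg
  have hsymm := isFormalAdjoint_self_of_isSelfAdjoint h.2 x y
  have hmass : ((sphereMass n).toReal : ℂ) ≠ 0 :=
    Complex.ofReal_ne_zero.2 (ENNReal.toReal_pos sphereMass_ne_zero sphereMass_ne_top).ne'
  rw [hx, hTx, hy, hTy, inner_toLp_radialFn_one, inner_toLp_radialFn_one] at hsymm
  have hexp (t : ℝ) : expFn k t * star (expFn (-k) t) = 1 := by
    simpa using expFn_mul_star_expFn_neg k t
  have hexp_neg (t : ℝ) : expFn (-k) t * star (expFn k t) = 1 := by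
    simpa using expFn_mul_star_expFn_neg (-k) t
  convert mul_left_cancel₀ hmass hsymm using 3 with t t
  · rw [diffOp_conjFn, hreal, SmoothFn.coe_mul, SmoothFn.coe_mul, conjFn_apply, star_mul',
      star_star]
    linear_combination -diffOp P f t * g t * hexp t
  · rw [SmoothFn.coe_mul, SmoothFn.coe_mul, conjFn_apply, star_mul', star_star]
    linear_combination -f t * diffOp P g t * hexp_neg t

theorem le_abs_re_of_essentiallySelfAdjoint
    (h : EssentiallySelfAdjoint (opOn n (formalOp n k c))) {z : ℂ}
    (hz : (radialPoly k (angularParam n 0) c).IsRoot z) : k ≤ |z.re| := by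
  by_contra! hlt
  have hk : k ≠ 0 := fun hk => (abs_nonneg z.re).not_gt (by simpa [hk] using hlt)
  obtain ⟨f, g, hf, hg, hne⟩ := exists_integral_diffOp_mul_ne (radialPoly_ne_zero hk _ _)
    (radialPoly_comp_neg_X _ _ _) hz hlt
  exact hne (integral_diffOp_mul_of_essentiallySelfAdjoint h hf hg)

end Necessity

theorem T3op_eq_opOn_formalOp (n : ℕ) (c : ℝ) : T3op n c = opOn n (formalOp n 3 c) := rfl

theorem essentiallySelfAdjoint_T3op_iff {n : ℕ} [NeZero n] {c : ℝ} :
    EssentiallySelfAdjoint (T3op n c) ↔ criticalConstant n ≤ c := by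
  rw [T3op_eq_opOn_formalOp]
  refine ⟨fun h => criticalConstant_le_of_three_le (NeZero.ne n) fun z hz => ?_,
    fun hc => essentiallySelfAdjoint_opOn_formalOp three_ne_zero fun ℓ z hz => ?_⟩
  · exact_mod_cast le_abs_re_of_essentiallySelfAdjoint h hz
  · exact_mod_cast three_le_abs_re_of_criticalConstant_le (NeZero.ne n) hc ℓ hz

theorem stmt11_general (n : ℕ) (hn : n ≠ 0) (c : ℝ) :
    EssentiallySelfAdjoint (T3op n c) ↔
      ((n ≤ 9 →
        (64/27) * (7112 + 504 * (n : ℝ) - 126 * (n : ℝ) ^ 2 +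
          (236 + 12 * (n : ℝ) - 3 * (n : ℝ) ^ 2) *
            Real.sqrt (964 + 60 * (n : ℝ) - 15 * (n : ℝ) ^ 2)) ≤ c) ∧
       (10 ≤ n →
        -(((n : ℝ) + 8) * ((n : ℝ) + 4) * (n : ℝ) * ((n : ℝ) - 4) * ((n : ℝ) - 8) *
          ((n : ℝ) - 12)) / 64 ≤ c)) :=
  have : NeZero n := ⟨hn⟩
  essentiallySelfAdjoint_T3op_iff.trans criticalConstant_le_iff

theorem stmt11 (n : ℕ) (hn : 2 ≤ n) (c : ℝ) :
    EssentiallySelfAdjoint (T3op n c) ↔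
      ((n ≤ 9 →
        (64/27) * (7112 + 504 * (n : ℝ) - 126 * (n : ℝ) ^ 2 +
          (236 + 12 * (n : ℝ) - 3 * (n : ℝ) ^ 2) *
            Real.sqrt (964 + 60 * (n : ℝ) - 15 * (n : ℝ) ^ 2)) ≤ c) ∧
       (10 ≤ n →
        -(((n : ℝ) + 8) * ((n : ℝ) + 4) * (n : ℝ) * ((n : ℝ) - 4) * ((n : ℝ) - 8) *
          ((n : ℝ) - 12)) / 64 ≤ c)) :=
  stmt11_general n (by omega) c
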